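/- arXiv:1612.08100 — 2 statements merged into one kernel-verified Lean document; each statement's English description precedes it below -/
import Mathlib

section
/- There exists a universal constant c₂ > 0 such that for every N ≥ 2, if U is an N × N random unitary matrix distributed according to Haar measure on the unitary group U(N), then the expected Kolmogorov distance between its empirical spectral measure and the uniform measure on the unit circle satisfies E d_K(μ_N, ν) ≤ c₂ · log(N)/N. -/
open MeasureTheory Real Filter

noncomputable section

/-- The Borel σ-algebra on the unitary group `U(N)`. -/
instance (N : ℕ) : MeasurableSpace (Matrix.unitaryGroup (Fin N) ℂ) := borel _

instance (N : ℕ) : BorelSpace (Matrix.unitaryGroup (Fin N) ℂ) := ⟨rfl⟩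

/-- The eigenvalue angles (in `[0, 2π)`, with multiplicity) of a unitary matrix `U`:
the arguments of the roots of the characteristic polynomial, shifted to lie in `[0, 2π)`. -/
def eigenAngles (N : ℕ) (U : Matrix.unitaryGroup (Fin N) ℂ) : Multiset ℝ :=
  ((U : Matrix (Fin N) (Fin N) ℂ).charpoly.roots).map
    (fun z => if 0 ≤ Complex.arg z then Complex.arg z else Complex.arg z + 2 * π)

open Classical in
/-- `𝒩_A`: the number of eigenvalue angles of `U` lying in the set `A`. -/
def countAngles (N : ℕ) (U : Matrix.unitaryGroup (Fin N) ℂ) (A : Set ℝ) : ℕ :=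
  Multiset.card ((eigenAngles N U).filter (· ∈ A))

/-- `𝒩_θ`: the number of eigenvalue angles of `U` in `[0, θ]`. -/
def countFun (N : ℕ) (U : Matrix.unitaryGroup (Fin N) ℂ) (θ : ℝ) : ℕ :=
  countAngles N U (Set.Icc 0 θ)

/-- The Kolmogorov distance between the empirical spectral measure of `U` and the
uniform measure on the circle: `sup_{0 ≤ θ < 2π} |𝒩_θ/N - θ/(2π)|`. -/
def dK (N : ℕ) (U : Matrix.unitaryGroup (Fin N) ℂ) : ℝ :=
  ⨆ θ : Set.Ico (0:ℝ) (2 * π), |(countFun N U θ : ℝ) / N - (θ : ℝ) / (2 * π)|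

/-- `max_{1 ≤ k ≤ N} |𝒩_{2πk/N} - k|`. -/
def maxDev (N : ℕ) (U : Matrix.unitaryGroup (Fin N) ℂ) : ℝ :=
  ⨆ k : (Finset.Icc 1 N : Finset ℕ), |(countFun N U (2 * π * (k : ℕ) / N) : ℝ) - ((k : ℕ) : ℝ)|

end

open scoped Matrix

namespace Kol

noncomputable section

/-- strict contraction in the Euclidean norm -/
def SC {n : ℕ} (A : Matrix (Fin n) (Fin n) ℂ) : Prop :=
  ∀ v : Fin n → ℂ, v ≠ 0 → ∑ i, ‖(A *ᵥ v) i‖ ^ 2 < ∑ i, ‖v i‖ ^ 2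

/-- Schur complement -/
def schur {n : ℕ} (A : Matrix (Fin (n+1)) (Fin (n+1)) ℂ) : Matrix (Fin n) (Fin n) ℂ :=
  Matrix.of fun i j => A i.succ j.succ + A i.succ 0 * A 0 j.succ / (1 - A 0 0)

/-- branch of log det (1 - A) -/
def L : (n : ℕ) → Matrix (Fin n) (Fin n) ℂ → ℂ
  | 0, _ => 0
  | n+1, A => Complex.log (1 - A 0 0) + L n (schur A)

lemma SC.entry {n : ℕ} {A : Matrix (Fin (n+1)) (Fin (n+1)) ℂ} (h : SC A) :
    ∑ i, ‖A i 0‖ ^ 2 < 1 := by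
  have := h (Pi.single 0 1) (by simp)
  simpa [Pi.single_apply, apply_ite] using this

lemma SC.norm_lt {n : ℕ} {A : Matrix (Fin (n+1)) (Fin (n+1)) ℂ} (h : SC A) : ‖A 0 0‖ < 1 := by
  have h1 := h.entry
  have h2 := Finset.single_le_sum (f := fun i => ‖A i 0‖ ^ 2) (fun i _ => by positivity)
    (Finset.mem_univ 0)
  nlinarith [norm_nonneg (A 0 0)]

lemma one_sub_ne {a : ℂ} (h : ‖a‖ < 1) : 1 - a ≠ 0 := by
  intro h1
  have : a = 1 := by linear_combination -h1
  simp [this] at h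

lemma SC.schur {n : ℕ} {A : Matrix (Fin (n+1)) (Fin (n+1)) ℂ} (h : SC A) : SC (schur A) := by
  intro y hy
  have ha := one_sub_ne h.norm_lt
  set x : ℂ := (∑ j, A 0 (Fin.succ j) * y j) / (1 - A 0 0) with hx
  have hne : (Fin.cons x y : Fin (n+1) → ℂ) ≠ 0 := by
    intro h0
    apply hy
    ext i
    have := congrFun h0 i.succ
    simpa using this
  have h1 := h _ hne
  rw [Fin.sum_univ_succ, Fin.sum_univ_succ] at h1
  have e0 : (A *ᵥ (Fin.cons x y : Fin (n+1) → ℂ)) 0 = x := by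
    simp only [Matrix.mulVec, dotProduct, Fin.sum_univ_succ, Fin.cons_zero, Fin.cons_succ]
    have : (∑ j, A 0 (Fin.succ j) * y j) = x * (1 - A 0 0) := by rw [hx]; field_simp
    rw [this]; ring
  have e1 : ∀ i : Fin n, (A *ᵥ (Fin.cons x y : Fin (n+1) → ℂ)) i.succ = (Kol.schur A *ᵥ y) i := by
    intro i
    simp only [Matrix.mulVec, dotProduct, Fin.sum_univ_succ, Fin.cons_zero, Fin.cons_succ,
      Kol.schur, Matrix.of_apply, add_mul, Finset.sum_add_distrib]
    rw [hx, mul_div_assoc', Finset.mul_sum, Finset.sum_div, add_comm]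
    congr 1
    refine Finset.sum_congr rfl fun j _ => ?_
    ring
  rw [e0] at h1
  simp only [e1, Fin.cons_zero, Fin.cons_succ] at h1
  linarith

lemma SC.smul {n : ℕ} {A : Matrix (Fin n) (Fin n) ℂ} (h : SC A) {s : ℂ} (hs : ‖s‖ ≤ 1) :
    SC (s • A) := by
  intro v hv
  refine lt_of_le_of_lt ?_ (h v hv)
  gcongr with i
  rw [Matrix.smul_mulVec, Pi.smul_apply, norm_smul]
  nlinarith [norm_nonneg ((A *ᵥ v) i)]

lemma det_schur {n : ℕ} {A : Matrix (Fin (n+1)) (Fin (n+1)) ℂ} (ha : 1 - A 0 0 ≠ 0) :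
    (1 - A).det = (1 - A 0 0) * (1 - schur A).det := by
  set B : Matrix (Fin (n+1)) (Fin (n+1)) ℂ :=
    Matrix.of (Fin.cons ((1 - A) 0) (fun i => Fin.cons 0 ((1 - schur A) i))) with hB
  have h1 : (1 - A).det = B.det := by
    apply Matrix.det_eq_of_forall_row_eq_smul_add_const
      (Fin.cons 0 (fun i => - A i.succ 0 / (1 - A 0 0))) 0 (by simp)
    intro i j
    refine Fin.cases ?_ (fun i => ?_) i
    · simp [hB]
    · refine Fin.cases ?_ (fun j => ?_) j
      · simp [hB]
        field_simp
      · simp [hB, Matrix.one_apply, schur, (Fin.succ_ne_zero _).symm]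
        field_simp
        ring
  rw [h1, Matrix.det_succ_column_zero, Fin.sum_univ_succ, Finset.sum_eq_zero]
  · simp only [hB, add_zero]
    simp
    left
    congr 1
  · intro i _
    simp [hB]

lemma exp_L : ∀ (n : ℕ) (A : Matrix (Fin n) (Fin n) ℂ), SC A → Complex.exp (L n A) = (1 - A).det
  | 0, A, _ => by simp [L]
  | n+1, A, h => by
    have ha := one_sub_ne h.norm_lt
    rw [L, Complex.exp_add, Complex.exp_log ha, exp_L n _ h.schur, det_schur ha]

lemma continuous_schur {X : Type*} [TopologicalSpace X] {n : ℕ}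
    {A : X → Matrix (Fin (n+1)) (Fin (n+1)) ℂ}
    (hA : Continuous A) (h : ∀ x, SC (A x)) : Continuous fun x => schur (A x) := by
  refine continuous_matrix fun i j => ?_
  simp only [schur, Matrix.of_apply]
  exact (hA.matrix_elem _ _).add (((hA.matrix_elem _ _).mul (hA.matrix_elem _ _)).div
    (continuous_const.sub (hA.matrix_elem _ _)) fun x => one_sub_ne (h x).norm_lt)

lemma mem_slit {a : ℂ} (h : ‖a‖ < 1) : 1 - a ∈ Complex.slitPlane := by
  left
  have := Complex.re_le_norm a
  simp; linarith

lemma continuous_L {X : Type*} [TopologicalSpace X] : ∀ (n : ℕ) (A : X → Matrix (Fin n) (Fin n) ℂ),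
    Continuous A → (∀ x, SC (A x)) → Continuous fun x => L n (A x)
  | 0, A, hA, h => by simpa [L] using continuous_const
  | n+1, A, hA, h => by
    simp only [L]
    refine Continuous.add ?_ (continuous_L n _ (continuous_schur hA h) fun x => (h x).schur)
    exact (continuous_const.sub (hA.matrix_elem 0 0)).clog fun x => mem_slit (h x).norm_lt

lemma schur_zero {n : ℕ} : schur (0 : Matrix (Fin (n+1)) (Fin (n+1)) ℂ) = 0 := by
  ext i j; simp [schur]

lemma L_zero : ∀ n, L n 0 = 0
  | 0 => by simp [L]
  | n+1 => by simp [L, schur_zero, L_zero n]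

lemma card_roots {n : ℕ} (A : Matrix (Fin n) (Fin n) ℂ) : A.charpoly.roots.card = n := by
  rw [IsAlgClosed.card_roots_eq_natDegree, Matrix.charpoly_natDegree_eq_dim, Fintype.card_fin]

lemma det_roots {n : ℕ} (A : Matrix (Fin n) (Fin n) ℂ) (s : ℂ) :
    (1 - s • A).det = (A.charpoly.roots.map fun z => 1 - s * z).prod := by
  by_cases hs : s = 0
  · simp [hs]
  have h1 : 1 - s • A = s • (Matrix.scalar (Fin n) s⁻¹ - A) := by
    rw [smul_sub]
    congr 1
    ext i j
    by_cases hij : i = j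
    · subst hij; simp [hs]
    · simp [hij]
  have h2 : (A.charpoly.roots.map fun z => 1 - s * z) =
      A.charpoly.roots.map fun z => s * (s⁻¹ - z) := by
    congr 1
    funext z
    field_simp
  rw [h1, Matrix.det_smul, ← Matrix.eval_charpoly,
    (IsAlgClosed.splits A.charpoly).eval_eq_prod_roots, A.charpoly_monic.leadingCoeff, one_mul, h2,
    Multiset.prod_map_mul, Multiset.map_const', Multiset.prod_replicate, card_roots,
    Fintype.card_fin]

lemma exists_eigvec {n : ℕ} {A : Matrix (Fin n) (Fin n) ℂ} {z : ℂ}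
    (hz : z ∈ A.charpoly.roots) : ∃ v : Fin n → ℂ, v ≠ 0 ∧ A *ᵥ v = z • v := by
  have h1 : A.charpoly.eval z = 0 := Polynomial.isRoot_of_mem_roots hz
  rw [Matrix.eval_charpoly, ← Matrix.exists_mulVec_eq_zero_iff] at h1
  obtain ⟨v, hv, h⟩ := h1
  refine ⟨v, hv, ?_⟩
  rw [Matrix.sub_mulVec, sub_eq_zero] at h
  rw [← h]
  ext i
  simp [Matrix.scalar_apply, Matrix.mulVec_diagonal]

lemma sum_sq_pos {n : ℕ} {v : Fin n → ℂ} (hv : v ≠ 0) : 0 < ∑ i, ‖v i‖ ^ 2 := by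
  obtain ⟨i, hi⟩ := Function.ne_iff.1 hv
  have hi' : v i ≠ 0 := hi
  exact Finset.sum_pos' (fun i _ => by positivity) ⟨i, Finset.mem_univ i, by positivity⟩

lemma SC.root {n : ℕ} {A : Matrix (Fin n) (Fin n) ℂ} {c : ℂ} (h : SC (c • A)) {z : ℂ}
    (hz : z ∈ A.charpoly.roots) : ‖c * z‖ < 1 := by
  obtain ⟨v, hv, e⟩ := exists_eigvec hz
  have h1 := h v hv
  have h2 := sum_sq_pos hv
  rw [Matrix.smul_mulVec, e, smul_smul] at h1
  simp only [Pi.smul_apply, norm_smul, mul_pow, ← Finset.mul_sum] at h1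
  by_contra h3
  push Not at h3
  nlinarith [one_le_pow₀ h3 (n := 2)]

lemma L_eq {n : ℕ} {A : Matrix (Fin n) (Fin n) ℂ} {c : ℂ} (h : SC (c • A)) :
    L n (c • A) = (A.charpoly.roots.map fun z => Complex.log (1 - c * z)).sum := by
  have hsc : ∀ s : Set.Icc (0:ℝ) 1, SC ((((s:ℝ):ℂ) * c) • A) := by
    intro s
    rw [mul_smul]
    apply h.smul
    rw [Complex.norm_real, Real.norm_eq_abs, abs_of_nonneg s.2.1]
    exact s.2.2
  let R : Set.Icc (0:ℝ) 1 → ℂ := fun s =>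
    (A.charpoly.roots.map fun z => Complex.log (1 - ((s:ℝ):ℂ) * c * z)).sum
  have hR : Continuous R := by
    refine continuous_multiset_sum _ fun z hz => ?_
    refine Continuous.clog (by fun_prop) fun s => mem_slit ((hsc s).root hz)
  have hL : Continuous fun s : Set.Icc (0:ℝ) 1 => L n ((((s:ℝ):ℂ) * c) • A) := by
    refine continuous_L n _ ?_ hsc
    fun_prop
  have hexp : ∀ s : Set.Icc (0:ℝ) 1, Complex.exp (L n ((((s:ℝ):ℂ) * c) • A)) =
      Complex.exp (R s) := by
    intro s
    rw [exp_L n _ (hsc s), det_roots, Complex.exp_multiset_sum, Multiset.map_map]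
    congr 1
    refine Multiset.map_congr rfl fun z hz => ?_
    simp only [Function.comp]
    rw [Complex.exp_log (one_sub_ne ((hsc s).root hz))]
  choose k hk using fun s => Complex.exp_eq_exp_iff_exists_int.1 (hexp s)
  have hkc : Continuous k := by
    rw [Int.isClosedEmbedding_coe_real.isEmbedding.continuous_iff]
    have : (Int.cast ∘ k : Set.Icc (0:ℝ) 1 → ℝ) =
        fun s : Set.Icc (0:ℝ) 1 => (L n ((((s:ℝ):ℂ) * c) • A) - R s).im / (2 * π) := by
      funext s
      have h2 : L n ((((s:ℝ):ℂ) * c) • A) - R s = ((k s * (2 * π) : ℝ) : ℂ) * Complex.I := by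
        rw [hk s]; push_cast; ring
      rw [h2, Complex.im_ofReal_mul, Complex.I_im]; simp [Real.pi_ne_zero]
    rw [this]
    fun_prop
  have h01 := PreconnectedSpace.constant inferInstance hkc
    (x := (⟨0, by simp⟩ : Set.Icc (0:ℝ) 1)) (y := ⟨1, by simp⟩)
  have h0 := hk ⟨0, by simp⟩
  have h1 := hk ⟨1, by simp⟩
  have hk0 : k ⟨0, by simp⟩ = 0 := by
    simp [R, L_zero, Real.pi_ne_zero] at h0
    exact h0
  rw [← h01, hk0] at h1
  simpa [R] using h1

end

end Kol

namespace Kol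

noncomputable section

lemma unitary_norm {n : ℕ} (U : Matrix.unitaryGroup (Fin n) ℂ) (v : Fin n → ℂ) :
    ∑ i, ‖((U : Matrix (Fin n) (Fin n) ℂ) *ᵥ v) i‖ ^ 2 = ∑ i, ‖v i‖ ^ 2 := by
  have key : ∀ w : Fin n → ℂ, ((∑ i, ‖w i‖ ^ 2 : ℝ) : ℂ) = star w ⬝ᵥ w := by
    intro w
    simp only [dotProduct, Pi.star_apply, Complex.ofReal_sum]
    refine Finset.sum_congr rfl fun i _ => ?_
    rw [Complex.ofReal_pow, ← Complex.conj_mul']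
    simp
  have h : ((∑ i, ‖((U : Matrix (Fin n) (Fin n) ℂ) *ᵥ v) i‖ ^ 2 : ℝ) : ℂ) =
      ((∑ i, ‖v i‖ ^ 2 : ℝ) : ℂ) := by
    rw [key, key, Matrix.star_mulVec, Matrix.dotProduct_mulVec, Matrix.vecMul_vecMul,
      ← Matrix.star_eq_conjTranspose, Matrix.UnitaryGroup.star_mul_self, Matrix.vecMul_one]
  exact_mod_cast h

lemma SC.umul {n : ℕ} {W : Matrix (Fin n) (Fin n) ℂ} (h : SC W)
    (U : Matrix.unitaryGroup (Fin n) ℂ) : SC ((U : Matrix (Fin n) (Fin n) ℂ) * W) := by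
  intro v hv
  rw [← Matrix.mulVec_mulVec, unitary_norm]
  exact h v hv

instance instCompactU (n : ℕ) : CompactSpace (Matrix.unitaryGroup (Fin n) ℂ) := by
  refine (isCompact_iff_compactSpace (s := (Matrix.unitaryGroup (Fin n) ℂ : Set (Matrix (Fin n) (Fin n) ℂ)))).1 ?_
  have hK : IsCompact (Set.univ.pi fun _ : Fin n => Set.univ.pi fun _ : Fin n =>
      Metric.closedBall (0:ℂ) 1) :=
    isCompact_univ_pi fun _ => isCompact_univ_pi fun _ => isCompact_closedBall _ _
  refine IsCompact.of_isClosed_subset (X := Matrix (Fin n) (Fin n) ℂ) hK isClosed_unitary ?_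
  intro U hU i _ j _
  rw [mem_closedBall_zero_iff]
  exact entry_norm_bound_of_unitary hU i j

lemma exists_haar (n : ℕ) : ∃ Q : Measure (Matrix.unitaryGroup (Fin n) ℂ),
    IsProbabilityMeasure Q ∧ Q.IsMulLeftInvariant := by
  refine ⟨Measure.haarMeasure ⊤, ⟨?_⟩, inferInstance⟩
  simpa using Measure.haarMeasure_self (K₀ := (⊤ : TopologicalSpace.PositiveCompacts
    (Matrix.unitaryGroup (Fin n) ℂ)))

/-- `1 ⊕ V` -/
def embM {n : ℕ} (V : Matrix (Fin n) (Fin n) ℂ) : Matrix (Fin (n+1)) (Fin (n+1)) ℂ :=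
  Matrix.of (Fin.cons (Fin.cons 1 0) fun i => Fin.cons 0 (V i))

lemma embM_mem {n : ℕ} (V : Matrix.unitaryGroup (Fin n) ℂ) :
    embM (V : Matrix (Fin n) (Fin n) ℂ) ∈ Matrix.unitaryGroup (Fin (n+1)) ℂ := by
  rw [Matrix.mem_unitaryGroup_iff]
  have h := Matrix.mem_unitaryGroup_iff.1 V.2
  ext i j
  rw [Matrix.mul_apply, Fin.sum_univ_succ]
  refine Fin.cases ?_ (fun i => ?_) i <;> refine Fin.cases ?_ (fun j => ?_) j
  · simp [embM]
  · simp [embM, (Fin.succ_ne_zero _).symm]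
  · simp [embM]
  · have := congrFun (congrFun h i) j
    rw [Matrix.mul_apply] at this
    simpa [embM, Matrix.one_apply] using this

def emb {n : ℕ} (V : Matrix.unitaryGroup (Fin n) ℂ) : Matrix.unitaryGroup (Fin (n+1)) ℂ :=
  ⟨embM V, embM_mem V⟩

lemma continuous_emb {n : ℕ} : Continuous (emb (n := n)) := by
  refine Continuous.subtype_mk ?_ _
  refine continuous_matrix fun i j => ?_
  refine Fin.cases ?_ (fun i => ?_) i <;> refine Fin.cases ?_ (fun j => ?_) j
  · simpa [embM] using continuous_const
  · simpa [embM] using continuous_const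
  · simpa [embM] using continuous_const
  · simp only [embM, Matrix.of_apply, Fin.cons_succ]
    exact continuous_subtype_val.matrix_elem i j

lemma emb_zero {n : ℕ} (V : Matrix.unitaryGroup (Fin n) ℂ)
    (A : Matrix (Fin (n+1)) (Fin (n+1)) ℂ) (j : Fin (n+1)) :
    ((emb V : Matrix (Fin (n+1)) (Fin (n+1)) ℂ) * A) 0 j = A 0 j := by
  simp [emb, embM, Matrix.mul_apply, Fin.sum_univ_succ]

lemma emb_succ {n : ℕ} (V : Matrix.unitaryGroup (Fin n) ℂ)
    (A : Matrix (Fin (n+1)) (Fin (n+1)) ℂ) (i : Fin n) (j : Fin (n+1)) :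
    ((emb V : Matrix (Fin (n+1)) (Fin (n+1)) ℂ) * A) i.succ j =
      ∑ k : Fin n, (V : Matrix (Fin n) (Fin n) ℂ) i k * A k.succ j := by
  simp [emb, embM, Matrix.mul_apply, Fin.sum_univ_succ]

lemma schur_emb {n : ℕ} (V : Matrix.unitaryGroup (Fin n) ℂ)
    (A : Matrix (Fin (n+1)) (Fin (n+1)) ℂ) :
    schur ((emb V : Matrix (Fin (n+1)) (Fin (n+1)) ℂ) * A) =
      (V : Matrix (Fin n) (Fin n) ℂ) * schur A := by
  ext i j
  simp only [schur, Matrix.of_apply, Matrix.mul_apply (M := (V : Matrix (Fin n) (Fin n) ℂ)),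
    emb_zero, emb_succ, Finset.sum_mul, Finset.sum_div, ← Finset.sum_add_distrib]
  refine Finset.sum_congr rfl fun k _ => ?_
  ring

lemma L_emb {n : ℕ} (V : Matrix.unitaryGroup (Fin n) ℂ)
    (A : Matrix (Fin (n+1)) (Fin (n+1)) ℂ) :
    (L (n+1) ((emb V : Matrix (Fin (n+1)) (Fin (n+1)) ℂ) * A)).im =
      (Complex.log (1 - A 0 0)).im + (L n ((V : Matrix (Fin n) (Fin n) ℂ) * schur A)).im := by
  rw [L, emb_zero, schur_emb, Complex.add_im]

lemma exp_ptwise {a : ℂ} (ha : ‖a‖ < 1) {ε : ℝ} (hε : |ε| = 1) :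
    Real.exp (ε * (Complex.log (1 - a)).im) ≤ 1 - ε * a.im + 32 * ‖a‖ ^ 2 := by
  have him : |ε * a.im| ≤ ‖a‖ := by
    rw [abs_mul, hε, one_mul]; exact Complex.abs_im_le_norm a
  rcases le_or_gt ‖a‖ (1/2) with h | h
  · have h1 := Complex.norm_log_one_add_sub_self_le (z := -a) (by simpa using ha)
    rw [norm_neg, ← sub_eq_add_neg, sub_neg_eq_add] at h1
    have h2 : (1 - ‖a‖)⁻¹ ≤ 2 := by
      rw [inv_le_comm₀ (by linarith) (by norm_num)]; linarith
    have h3 : ‖Complex.log (1 - a) + a‖ ≤ ‖a‖ ^ 2 := by nlinarith [sq_nonneg ‖a‖]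
    have h4 := (Complex.abs_im_le_norm (Complex.log (1 - a) + a)).trans h3
    rw [Complex.add_im] at h4
    set x := (Complex.log (1 - a)).im
    have h5 : |ε * x + ε * a.im| ≤ ‖a‖ ^ 2 := by
      rw [← mul_add, abs_mul, hε, one_mul]; exact h4
    have h0 := norm_nonneg a
    rw [abs_le] at h5 him
    have h6 : |ε * x| ≤ 3/2 * ‖a‖ := by
      rw [abs_le]; constructor <;> nlinarith
    have h8 := Real.abs_exp_sub_one_sub_id_le (x := ε * x) (h6.trans (by linarith))
    have h9 : (ε * x) ^ 2 ≤ (3/2 * ‖a‖) ^ 2 := by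
      rw [← sq_abs]; gcongr
    rw [abs_le] at h8
    nlinarith
  · have h1 : |(Complex.log (1 - a)).im| ≤ π / 2 := by
      rw [Complex.log_im, Complex.abs_arg_le_pi_div_two_iff]
      have := Complex.re_le_norm a
      simp; linarith
    have h2 : ε * (Complex.log (1 - a)).im ≤ 1.6 := by
      have : |ε * (Complex.log (1 - a)).im| ≤ π / 2 := by rw [abs_mul, hε, one_mul]; exact h1
      have := (abs_le.1 this).2
      linarith [Real.pi_lt_d2]
    have h3 : Real.exp (ε * (Complex.log (1 - a)).im) ≤ 8 := by
      calc _ ≤ Real.exp 1.6 := Real.exp_le_exp.2 h2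
        _ ≤ Real.exp (1 + 1) := Real.exp_le_exp.2 (by norm_num)
        _ = Real.exp 1 * Real.exp 1 := Real.exp_add _ _
        _ ≤ 2.72 * 2.72 := by
          have := Real.exp_one_lt_d9
          gcongr <;> linarith
        _ ≤ 8 := by norm_num
    rw [abs_le] at him
    nlinarith

lemma im_L_le : ∀ (n : ℕ) (A : Matrix (Fin n) (Fin n) ℂ), |(L n A).im| ≤ n * π
  | 0, A => by simp [L]
  | n+1, A => by
    rw [L, Complex.add_im, Complex.log_im]
    have h1 := Complex.abs_arg_le_pi (1 - A 0 0)
    have h2 := im_L_le n (schur A)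
    have h3 := abs_add_le (1 - A 0 0).arg (L n (schur A)).im
    push_cast
    linarith

lemma integrable_cont {n : ℕ} (P : Measure (Matrix.unitaryGroup (Fin n) ℂ))
    [IsProbabilityMeasure P] {f : Matrix.unitaryGroup (Fin n) ℂ → ℝ} (hf : Continuous f) :
    Integrable f P :=
  hf.integrable_of_hasCompactSupport (HasCompactSupport.of_compactSpace f)

/-- permutation matrices as unitary group elements -/
lemma exists_swap {n : ℕ} (k : Fin (n+1)) : ∃ G : Matrix.unitaryGroup (Fin (n+1)) ℂ,
    ∀ A : Matrix (Fin (n+1)) (Fin (n+1)) ℂ,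
      ((G : Matrix (Fin (n+1)) (Fin (n+1)) ℂ) * A) 0 0 = A k 0 := by
  let σ := Equiv.swap (0 : Fin (n+1)) k
  let G : Matrix (Fin (n+1)) (Fin (n+1)) ℂ := Matrix.of fun i j => if σ i = j then 1 else 0
  have hG : G ∈ Matrix.unitaryGroup (Fin (n+1)) ℂ := by
    rw [Matrix.mem_unitaryGroup_iff]
    ext i j
    simp [G, Matrix.mul_apply, Matrix.one_apply, eq_comm]
  refine ⟨⟨G, hG⟩, fun A => ?_⟩
  simp [G, Matrix.mul_apply, σ]

lemma exp_entry {n : ℕ} (P : Measure (Matrix.unitaryGroup (Fin (n+1)) ℂ))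
    [IsProbabilityMeasure P] [P.IsMulLeftInvariant]
    {W : Matrix (Fin (n+1)) (Fin (n+1)) ℂ} (hW : SC W) :
    ∫ U, ‖((U : Matrix (Fin (n+1)) (Fin (n+1)) ℂ) * W) 0 0‖ ^ 2 ∂P ≤ 1 / (n+1) := by
  have hc : ∀ k, Continuous fun U : Matrix.unitaryGroup (Fin (n+1)) ℂ =>
      ‖((U : Matrix (Fin (n+1)) (Fin (n+1)) ℂ) * W) k 0‖ ^ 2 := fun k =>
    (((continuous_subtype_val.matrix_mul continuous_const).matrix_elem k 0).norm).pow 2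
  have h1 : ∀ k, ∫ U, ‖((U : Matrix (Fin (n+1)) (Fin (n+1)) ℂ) * W) k 0‖ ^ 2 ∂P =
      ∫ U, ‖((U : Matrix (Fin (n+1)) (Fin (n+1)) ℂ) * W) 0 0‖ ^ 2 ∂P := by
    intro k
    obtain ⟨G, hG⟩ := exists_swap k
    rw [← integral_mul_left_eq_self (fun U : Matrix.unitaryGroup (Fin (n+1)) ℂ =>
      ‖((U : Matrix (Fin (n+1)) (Fin (n+1)) ℂ) * W) 0 0‖ ^ 2) G]
    simp only [Submonoid.coe_mul, Matrix.mul_assoc, hG]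
  have h2 : ∑ k, ∫ U, ‖((U : Matrix (Fin (n+1)) (Fin (n+1)) ℂ) * W) k 0‖ ^ 2 ∂P ≤ 1 := by
    rw [← integral_finsetSum _ fun k _ => integrable_cont P (hc k)]
    calc _ ≤ ∫ U : Matrix.unitaryGroup (Fin (n+1)) ℂ, (1:ℝ) ∂P := by
          refine integral_mono (integrable_cont P (continuous_finsetSum _ fun k _ => hc k))
            (integrable_const _) fun U => (hW.umul U).entry.le
      _ = 1 := by simp
  simp only [h1, Finset.sum_const, Finset.card_univ, Fintype.card_fin, nsmul_eq_mul] at h2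
  rw [le_div_iff₀ (by positivity), mul_comm]
  exact_mod_cast h2

lemma im_entry {n : ℕ} (P : Measure (Matrix.unitaryGroup (Fin (n+1)) ℂ))
    [IsProbabilityMeasure P] [P.IsMulLeftInvariant]
    {W : Matrix (Fin (n+1)) (Fin (n+1)) ℂ} :
    ∫ U, (((U : Matrix (Fin (n+1)) (Fin (n+1)) ℂ) * W) 0 0).im ∂P = 0 := by
  have h := integral_mul_left_eq_self (μ := P) (fun U : Matrix.unitaryGroup (Fin (n+1)) ℂ =>
      (((U : Matrix (Fin (n+1)) (Fin (n+1)) ℂ) * W) 0 0).im) (-1)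
  have h2 : ∀ U : Matrix.unitaryGroup (Fin (n+1)) ℂ,
      ((((-1 * U : Matrix.unitaryGroup (Fin (n+1)) ℂ) : Matrix (Fin (n+1)) (Fin (n+1)) ℂ) * W) 0 0).im
      = - (((U : Matrix (Fin (n+1)) (Fin (n+1)) ℂ) * W) 0 0).im := by
    intro U
    have : ((-1 * U : Matrix.unitaryGroup (Fin (n+1)) ℂ) : Matrix (Fin (n+1)) (Fin (n+1)) ℂ) =
      - (U : Matrix (Fin (n+1)) (Fin (n+1)) ℂ) := by
      rw [neg_one_mul]; rfl
    rw [this, Matrix.neg_mul, Matrix.neg_apply, Complex.neg_im]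
  simp only [h2, integral_neg] at h
  linarith

lemma exp_moment (ε : ℝ) (hε : |ε| = 1) : ∀ (n : ℕ) (P : Measure (Matrix.unitaryGroup (Fin n) ℂ))
    [IsProbabilityMeasure P] [P.IsMulLeftInvariant] (W : Matrix (Fin n) (Fin n) ℂ), SC W →
    ∫ U, Real.exp (ε * (L n ((U : Matrix (Fin n) (Fin n) ℂ) * W)).im) ∂P ≤
      ∏ k ∈ Finset.range n, (1 + 32 / ((k:ℝ) + 1)) := by
  intro n
  induction n with
  | zero =>
    intro P _ _ W hW
    simp [L]
  | succ n ih =>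
    intro P _ _ W hW
    obtain ⟨Q, hQ, hQ'⟩ := exists_haar n
    rw [Finset.prod_range_succ]
    set K := ∏ k ∈ Finset.range n, (1 + 32 / ((k:ℝ) + 1)) with hK
    have hK0 : 0 ≤ K := Finset.prod_nonneg fun k _ => by positivity
    set F : Matrix.unitaryGroup (Fin (n+1)) ℂ → ℝ := fun U =>
      Real.exp (ε * (L (n+1) ((U : Matrix (Fin (n+1)) (Fin (n+1)) ℂ) * W)).im) with hF
    set a : Matrix.unitaryGroup (Fin (n+1)) ℂ → ℂ := fun U =>
      ((U : Matrix (Fin (n+1)) (Fin (n+1)) ℂ) * W) 0 0 with ha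
    have hac : Continuous a :=
      (continuous_subtype_val.matrix_mul continuous_const).matrix_elem 0 0
    have hlc : Continuous fun U => Real.exp (ε * (Complex.log (1 - a U)).im) := by
      have : Continuous fun U => Complex.log (1 - a U) :=
        (continuous_const.sub hac).clog fun U => mem_slit (hW.umul U).norm_lt
      exact Real.continuous_exp.comp (continuous_const.mul (Complex.continuous_im.comp this))
    have hFc : Continuous F := by
      have : Continuous fun U : Matrix.unitaryGroup (Fin (n+1)) ℂ =>
          L (n+1) ((U : Matrix (Fin (n+1)) (Fin (n+1)) ℂ) * W) :=
        continuous_L _ _ (continuous_subtype_val.matrix_mul continuous_const) fun U => hW.umul U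
      exact Real.continuous_exp.comp (continuous_const.mul (Complex.continuous_im.comp this))
    have hFV : ∀ V U, F (emb V * U) = Real.exp (ε * (Complex.log (1 - a U)).im) *
        Real.exp (ε * (L n ((V : Matrix (Fin n) (Fin n) ℂ) *
          schur ((U : Matrix (Fin (n+1)) (Fin (n+1)) ℂ) * W))).im) := by
      intro V U
      simp only [hF, Submonoid.coe_mul, Matrix.mul_assoc, L_emb, mul_add, Real.exp_add, ha]
    calc ∫ U, F U ∂P = ∫ V, ∫ U, F (emb V * U) ∂P ∂Q := by
          simp only [integral_mul_left_eq_self F]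
          simp
      _ = ∫ U, ∫ V, F (emb V * U) ∂Q ∂P := by
          refine integral_integral_swap_of_hasCompactSupport (f := fun V U => F (emb V * U)) ?_
            (HasCompactSupport.of_compactSpace _)
          exact hFc.comp ((continuous_emb.comp continuous_fst).mul continuous_snd)
      _ ≤ ∫ U, K * (1 - ε * (a U).im + 32 * ‖a U‖ ^ 2) ∂P := by
          refine integral_mono_of_nonneg (ae_of_all _ fun U => integral_nonneg fun V => ?_)
            (integrable_cont P (by fun_prop)) (ae_of_all _ fun U => ?_)
          · exact (Real.exp_pos _).le
          · simp only [hFV, integral_const_mul]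
            rw [mul_comm]
            have h1 := ih Q _ (hW.umul U).schur
            have h2 := exp_ptwise (hW.umul U).norm_lt hε
            exact mul_le_mul h1 h2 (Real.exp_pos _).le hK0
      _ = K * (1 + 32 * ∫ U, ‖a U‖ ^ 2 ∂P) := by
          rw [integral_const_mul, integral_add (integrable_cont P (by fun_prop))
            (integrable_cont P (by fun_prop)), integral_sub (integrable_const _)
            (integrable_cont P (by fun_prop)), integral_const_mul, integral_const_mul, im_entry P]
          simp
      _ ≤ K * (1 + 32 / ((n:ℝ) + 1)) := by
          have := exp_entry P hW
          gcongr
          rw [div_eq_mul_one_div]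
          gcongr

lemma prod_le (n : ℕ) : ∏ k ∈ Finset.range n, (1 + 32 / ((k:ℝ) + 1)) ≤
    Real.exp (32 * (1 + Real.log n)) := by
  calc _ ≤ ∏ k ∈ Finset.range n, Real.exp (32 * ((k:ℝ) + 1)⁻¹) := by
        refine Finset.prod_le_prod (fun k _ => by positivity) fun k _ => ?_
        rw [div_eq_mul_inv, add_comm]
        exact Real.add_one_le_exp _
    _ = Real.exp (32 * ∑ k ∈ Finset.range n, ((k:ℝ) + 1)⁻¹) := by
        rw [← Real.exp_sum, Finset.mul_sum]
    _ ≤ _ := by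
        have := harmonic_le_one_add_log n
        simp only [harmonic, Rat.cast_sum] at this
        push_cast at this
        gcongr

end

end Kol

namespace Kol

noncomputable section

/-- smoothed-free version of the argument of the characteristic polynomial -/
def S {n : ℕ} (U : Matrix.unitaryGroup (Fin n) ℂ) (α : ℝ) : ℝ :=
  ((U : Matrix (Fin n) (Fin n) ℂ).charpoly.roots.map
    fun z => (1 - Complex.exp (-(α:ℂ) * Complex.I) * z).arg).sum

lemma root_norm {n : ℕ} (U : Matrix.unitaryGroup (Fin n) ℂ) {z : ℂ}
    (hz : z ∈ (U : Matrix (Fin n) (Fin n) ℂ).charpoly.roots) : ‖z‖ = 1 := by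
  obtain ⟨v, hv, e⟩ := exists_eigvec hz
  have h1 := unitary_norm U v
  have h2 := sum_sq_pos hv
  rw [e] at h1
  simp only [Pi.smul_apply, norm_smul, mul_pow, ← Finset.mul_sum] at h1
  have h3 : ‖z‖ ^ 2 = 1 := by
    apply mul_right_cancel₀ h2.ne'
    linarith
  exact (pow_eq_one_iff_of_nonneg (norm_nonneg z) two_ne_zero).1 h3

lemma SC_scalar {n : ℕ} {c : ℂ} (hc : ‖c‖ < 1) : SC (c • (1 : Matrix (Fin n) (Fin n) ℂ)) := by
  intro v hv
  have h2 := sum_sq_pos hv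
  rw [Matrix.smul_mulVec, Matrix.one_mulVec]
  simp only [Pi.smul_apply, norm_smul, mul_pow, ← Finset.mul_sum]
  have : ‖c‖ ^ 2 < 1 := by nlinarith [norm_nonneg c]
  nlinarith

def rr (m : ℕ) : ℝ := (m:ℝ) / ((m:ℝ) + 1)

lemma rr_nonneg (m : ℕ) : 0 ≤ rr m := by unfold rr; positivity
lemma rr_lt (m : ℕ) : rr m < 1 := by
  unfold rr
  rw [div_lt_one (by positivity)]; linarith
lemma rr_tendsto : Tendsto rr atTop (nhds 1) := tendsto_natCast_div_add_atTop (1:ℝ)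

lemma arg_tendsto {w : ℂ} (hw : ‖w‖ = 1) :
    Tendsto (fun m => (1 - (rr m : ℂ) * w).arg) atTop (nhds (1 - w).arg) := by
  by_cases h1 : w = 1
  · subst h1
    have : ∀ m, (1 - (rr m : ℂ) * 1).arg = 0 := by
      intro m
      have : (1 - (rr m : ℂ) * 1) = ((1 - rr m : ℝ) : ℂ) := by push_cast; ring
      rw [this, Complex.arg_ofReal_of_nonneg (by linarith [rr_lt m])]
    simp only [this]
    simp
  · have hs : 1 - w ∈ Complex.slitPlane := by
      left
      have h2 := Complex.re_le_norm w
      rw [hw] at h2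
      have h3 : w.re ≠ 1 := by
        intro h3
        apply h1
        have h4 := Complex.sq_norm w
        rw [hw, Complex.normSq_apply, h3] at h4
        apply Complex.ext
        · simpa using h3
        · simp only [Complex.one_im]; nlinarith
      have := lt_of_le_of_ne h2 h3
      simp; linarith
    have hc := Complex.continuousAt_arg hs
    refine hc.tendsto.comp ?_
    have h5 : Tendsto (fun m => (rr m : ℂ)) atTop (nhds ((1:ℝ):ℂ)) :=
      (Complex.continuous_ofReal.tendsto 1).comp rr_tendsto
    have h6 := (tendsto_const_nhds (x := (1:ℂ))).sub (h5.mul_const w)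
    simpa using h6

lemma tendsto_multiset_sum {ι : Type*} (s : Multiset ι) {f : ι → ℕ → ℝ} {g : ι → ℝ}
    (h : ∀ z ∈ s, Tendsto (f z) atTop (nhds (g z))) :
    Tendsto (fun m => (s.map fun z => f z m).sum) atTop (nhds (s.map g).sum) := by
  induction s using Multiset.induction with
  | empty => simp
  | cons a s ih =>
    simp only [Multiset.map_cons, Multiset.sum_cons]
    exact (h a (Multiset.mem_cons_self a s)).add
      (ih fun z hz => h z (Multiset.mem_cons_of_mem hz))

/-- approximating continuous functions -/
def Sm {n : ℕ} (m : ℕ) (α : ℝ) (U : Matrix.unitaryGroup (Fin n) ℂ) : ℝ :=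
  (L n ((U : Matrix (Fin n) (Fin n) ℂ) *
    (((rr m : ℂ) * Complex.exp (-(α:ℂ) * Complex.I)) • 1))).im

lemma norm_e (α : ℝ) : ‖Complex.exp (-(α:ℂ) * Complex.I)‖ = 1 := by
  have := Complex.norm_exp_ofReal_mul_I (-α)
  simpa using this

lemma norm_c (m : ℕ) (α : ℝ) : ‖(rr m : ℂ) * Complex.exp (-(α:ℂ) * Complex.I)‖ < 1 := by
  rw [norm_mul, norm_e, mul_one, Complex.norm_real, Real.norm_eq_abs, abs_of_nonneg (rr_nonneg m)]
  exact rr_lt m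

lemma Sm_cont {n : ℕ} (m : ℕ) (α : ℝ) : Continuous (Sm (n := n) m α) := by
  refine Complex.continuous_im.comp (continuous_L _ _
    (continuous_subtype_val.matrix_mul continuous_const) fun U => (SC_scalar (norm_c m α)).umul U)

lemma Sm_tendsto {n : ℕ} (α : ℝ) (U : Matrix.unitaryGroup (Fin n) ℂ) :
    Tendsto (fun m => Sm m α U) atTop (nhds (S U α)) := by
  have h1 : ∀ m, Sm m α U = ((U : Matrix (Fin n) (Fin n) ℂ).charpoly.roots.map
      fun z => (1 - (rr m : ℂ) * (Complex.exp (-(α:ℂ) * Complex.I) * z)).arg).sum := by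
    intro m
    have h := (SC_scalar (n := n) (norm_c m α)).umul U
    unfold Sm
    rw [Matrix.mul_smul, Matrix.mul_one] at h ⊢
    rw [L_eq h, ← Complex.coe_imAddGroupHom, map_multiset_sum, Multiset.map_map]
    congr 1
    refine Multiset.map_congr rfl fun z _ => ?_
    simp [Complex.log_im, mul_assoc]
  simp only [h1]
  refine tendsto_multiset_sum _ fun z hz => arg_tendsto ?_
  rw [norm_mul, norm_e, root_norm U hz, mul_one]

lemma S_meas {n : ℕ} (α : ℝ) : Measurable fun U : Matrix.unitaryGroup (Fin n) ℂ => S U α :=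
  measurable_of_tendsto_metrizable (fun m => (Sm_cont m α).measurable)
    (tendsto_pi_nhds.2 fun U => Sm_tendsto α U)

lemma S_moment {n : ℕ} (P : Measure (Matrix.unitaryGroup (Fin n) ℂ))
    [IsProbabilityMeasure P] [P.IsMulLeftInvariant] (α ε : ℝ) (hε : |ε| = 1) :
    Integrable (fun U => Real.exp (ε * S U α)) P ∧
    ∫ U, Real.exp (ε * S U α) ∂P ≤ Real.exp (32 * (1 + Real.log n)) := by
  have hb : ∀ m (U : Matrix.unitaryGroup (Fin n) ℂ), ε * Sm m α U ≤ n * π := by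
    intro m U
    refine (le_abs_self _).trans ?_
    rw [abs_mul, hε, one_mul]
    exact im_L_le _ _
  have ht : ∀ U : Matrix.unitaryGroup (Fin n) ℂ,
      Tendsto (fun m => Real.exp (ε * Sm m α U)) atTop (nhds (Real.exp (ε * S U α))) := fun U =>
    (Real.continuous_exp.tendsto _).comp ((Sm_tendsto α U).const_mul ε)
  have hb' : ∀ U : Matrix.unitaryGroup (Fin n) ℂ, ε * S U α ≤ n * π := fun U =>
    le_of_tendsto ((Sm_tendsto α U).const_mul ε) (Eventually.of_forall fun m => hb m U)
  constructor
  · refine Integrable.of_bound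
      (Real.measurable_exp.comp ((S_meas α).const_mul ε)).aestronglyMeasurable
      (Real.exp (n * π)) (ae_of_all _ fun U => ?_)
    rw [Real.norm_eq_abs, abs_of_pos (Real.exp_pos _)]
    exact Real.exp_le_exp.2 (hb' U)
  · have h := tendsto_integral_of_dominated_convergence (μ := P)
      (F := fun m U => Real.exp (ε * Sm m α U)) (f := fun U => Real.exp (ε * S U α))
      (fun _ => Real.exp (n * π))
      (fun m => (Real.continuous_exp.comp ((Sm_cont m α).const_mul ε)).measurable.aestronglyMeasurable)
      (integrable_const _)
      (fun m => ae_of_all _ fun U => by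
        rw [Real.norm_eq_abs, abs_of_pos (Real.exp_pos _)]
        exact Real.exp_le_exp.2 (hb m U))
      (ae_of_all _ ht)
    refine le_of_tendsto h (Eventually.of_forall fun m => ?_)
    exact (exp_moment ε hε n P _ (SC_scalar (norm_c m α))).trans (prod_le n)

/-- sawtooth -/
def saw (x : ℝ) : ℝ := (1 - Complex.exp ((x:ℂ) * Complex.I)).arg

lemma saw_zero : saw 0 = 0 := by simp [saw]

lemma saw_periodic (x : ℝ) : saw (x + 2 * π) = saw x := by
  unfold saw
  congr 2
  push_cast
  rw [add_mul, Complex.exp_periodic _]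

lemma saw_pos {x : ℝ} (h0 : 0 < x) (h1 : x < 2 * π) : saw x = (x - π) / 2 := by
  unfold saw
  have hs : 0 < Real.sin (x / 2) := Real.sin_pos_of_pos_of_lt_pi (by linarith) (by linarith)
  have : 1 - Complex.exp ((x:ℂ) * Complex.I) = ((2 * Real.sin (x / 2) : ℝ) : ℂ) *
      (Complex.cos (((x - π) / 2 : ℝ) : ℂ) + Complex.sin (((x - π) / 2 : ℝ) : ℂ) * Complex.I) := by
    have hc : Real.cos ((x - π) / 2) = Real.sin (x / 2) := by
      rw [show (x - π) / 2 = x / 2 - π / 2 by ring, Real.cos_sub_pi_div_two]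
    have hss : Real.sin ((x - π) / 2) = - Real.cos (x / 2) := by
      rw [show (x - π) / 2 = x / 2 - π / 2 by ring, Real.sin_sub_pi_div_two]
    rw [Complex.exp_mul_I, ← Complex.ofReal_cos, ← Complex.ofReal_sin, ← Complex.ofReal_cos,
      ← Complex.ofReal_sin, hc, hss]
    have e1 : Real.cos x = 1 - 2 * Real.sin (x / 2) ^ 2 := by
      have := Real.cos_two_mul (x / 2)
      rw [mul_div_cancel₀ x (by norm_num : (2:ℝ) ≠ 0), Real.cos_sq'] at this
      linarith
    have e2 : Real.sin x = 2 * Real.sin (x / 2) * Real.cos (x / 2) := by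
      have := Real.sin_two_mul (x / 2)
      rwa [mul_div_cancel₀ x (by norm_num : (2:ℝ) ≠ 0)] at this
    rw [e1, e2]
    push_cast
    ring
  rw [this, Complex.arg_mul_cos_add_sin_mul_I (by positivity)]
  constructor <;> linarith

lemma saw_neg {x : ℝ} (h0 : -(2 * π) < x) (h1 : x < 0) : saw x = (x + π) / 2 := by
  rw [← saw_periodic, saw_pos (by linarith) (by linarith)]
  ring

lemma saw_big {x : ℝ} (h0 : 2 * π < x) (h1 : x < 4 * π) : saw x = (x - 3 * π) / 2 := by
  have := saw_periodic (x - 2 * π)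
  rw [sub_add_cancel] at this
  rw [this, saw_pos (by linarith) (by linarith)]
  ring

lemma saw_two_pi : saw (2 * π) = 0 := by
  have := saw_periodic 0
  rw [zero_add] at this
  rw [this, saw_zero]

lemma saw_upper {φ θ θ' δ : ℝ} (h0 : 0 ≤ φ) (h1 : φ < 2 * π) (hδ : 0 < δ) (hθ : 0 ≤ θ)
    (hθ' : θ < θ') (h : θ' + δ < 2 * π) :
    (if φ ≤ θ then 1 else 0 : ℝ) * π ≤ saw (φ - θ') - saw (φ + δ) + (θ' + δ) / 2 := by
  have hπ := Real.pi_pos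
  have hA : saw (φ - θ') = if φ < θ' then (φ - θ' + π) / 2 else if φ = θ' then 0
      else (φ - θ' - π) / 2 := by
    split_ifs with h2 h3
    · exact saw_neg (by linarith) (by linarith)
    · rw [h3, sub_self, saw_zero]
    · have : θ' < φ := lt_of_le_of_ne (not_lt.1 h2) (Ne.symm h3)
      exact saw_pos (by linarith) (by linarith)
  have hB : saw (φ + δ) = if φ + δ < 2 * π then (φ + δ - π) / 2 else if φ + δ = 2 * π then 0
      else (φ + δ - 3 * π) / 2 := by
    split_ifs with h2 h3
    · exact saw_pos (by linarith) (by linarith)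
    · rw [h3, saw_two_pi]
    · have : 2 * π < φ + δ := lt_of_le_of_ne (not_lt.1 h2) (Ne.symm h3)
      exact saw_big (by linarith) (by linarith)
  rw [hA, hB]
  split_ifs <;> linarith

lemma saw_lower {φ θ θ' : ℝ} (h0 : 0 ≤ φ) (h1 : φ < 2 * π)
    (hθ : 0 ≤ θ') (hθ' : θ' ≤ θ) (h : θ' < 2 * π) :
    saw (φ - θ') - saw φ + θ' / 2 ≤ (if φ ≤ θ then 1 else 0 : ℝ) * π := by
  have hπ := Real.pi_pos
  have hA : saw (φ - θ') = if φ < θ' then (φ - θ' + π) / 2 else if φ = θ' then 0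
      else (φ - θ' - π) / 2 := by
    split_ifs with h2 h3
    · exact saw_neg (by linarith) (by linarith)
    · rw [h3, sub_self, saw_zero]
    · have : θ' < φ := lt_of_le_of_ne (not_lt.1 h2) (Ne.symm h3)
      exact saw_pos (by linarith) (by linarith)
  have hB : saw φ = if φ = 0 then 0 else (φ - π) / 2 := by
    split_ifs with h3
    · rw [h3, saw_zero]
    · exact saw_pos (lt_of_le_of_ne h0 (Ne.symm h3)) h1
  rw [hA, hB]
  split_ifs <;> grind

/-- angle in `[0, 2π)` -/
def ang (z : ℂ) : ℝ := if 0 ≤ Complex.arg z then Complex.arg z else Complex.arg z + 2 * π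

lemma ang_nonneg (z : ℂ) : 0 ≤ ang z := by
  unfold ang
  split_ifs with h
  · exact h
  · linarith [Complex.neg_pi_lt_arg z, Real.pi_pos]

lemma ang_lt (z : ℂ) : ang z < 2 * π := by
  unfold ang
  split_ifs with h
  · linarith [Complex.arg_le_pi z, Real.pi_pos]
  · linarith

lemma exp_ang {z : ℂ} (hz : ‖z‖ = 1) : Complex.exp ((ang z : ℂ) * Complex.I) = z := by
  have h : Complex.exp ((z.arg : ℂ) * Complex.I) = z := by
    have := Complex.norm_mul_exp_arg_mul_I z
    rwa [hz, Complex.ofReal_one, one_mul] at this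
  unfold ang
  split_ifs
  · exact h
  · push_cast
    rw [add_mul, Complex.exp_periodic _, h]

lemma S_eq {n : ℕ} (U : Matrix.unitaryGroup (Fin n) ℂ) (α : ℝ) :
    S U α = ((U : Matrix (Fin n) (Fin n) ℂ).charpoly.roots.map fun z => saw (ang z - α)).sum := by
  unfold S
  congr 1
  refine Multiset.map_congr rfl fun z hz => ?_
  unfold saw
  conv_lhs => rw [← exp_ang (root_norm U hz), ← Complex.exp_add]
  congr 3
  push_cast
  ring

lemma count_aux (s : Multiset ℂ) (θ : ℝ) [DecidablePred fun x : ℝ => x ∈ Set.Icc 0 θ] :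
    ((Multiset.card (Multiset.filter (fun x : ℝ => x ∈ Set.Icc 0 θ) (s.map ang)) : ℕ) : ℝ) =
      (s.map fun z => (if ang z ≤ θ then 1 else 0 : ℝ)).sum := by
  induction s using Multiset.induction with
  | empty => simp
  | cons a s ih =>
    simp only [Multiset.map_cons, Multiset.sum_cons, Multiset.filter_cons, Multiset.card_add,
      Nat.cast_add, ih]
    congr 1
    by_cases h : ang a ≤ θ
    · simp [h, ang_nonneg]
    · simp [h]

lemma count_eq {n : ℕ} (U : Matrix.unitaryGroup (Fin n) ℂ) (θ : ℝ) :
    (countFun n U θ : ℝ) = ((U : Matrix (Fin n) (Fin n) ℂ).charpoly.roots.map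
      fun z => (if ang z ≤ θ then 1 else 0 : ℝ)).sum := by
  classical
  exact @count_aux _ θ (fun a => Classical.propDecidable _)

lemma count_upper {n : ℕ} (U : Matrix.unitaryGroup (Fin n) ℂ) {θ θ' δ : ℝ} (hδ : 0 < δ)
    (hθ : 0 ≤ θ) (hθ' : θ < θ') (h : θ' + δ < 2 * π) :
    countFun n U θ * π ≤ S U θ' - S U (-δ) + n * ((θ' + δ) / 2) := by
  have hc : (n:ℝ) * ((θ' + δ) / 2) = ((U : Matrix (Fin n) (Fin n) ℂ).charpoly.roots.map
      fun _ => (θ' + δ) / 2).sum := by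
    rw [Multiset.map_const', Multiset.sum_replicate, card_roots, nsmul_eq_mul]
  rw [count_eq, S_eq, S_eq, hc, ← Multiset.sum_map_mul_right, ← Multiset.sum_map_sub,
    ← Multiset.sum_map_add]
  refine Multiset.sum_map_le_sum_map _ _ fun z _ => ?_
  rw [sub_neg_eq_add]
  exact saw_upper (ang_nonneg z) (ang_lt z) hδ hθ hθ' h

lemma count_lower {n : ℕ} (U : Matrix.unitaryGroup (Fin n) ℂ) {θ θ' : ℝ}
    (hθ : 0 ≤ θ') (hθ' : θ' ≤ θ) (h : θ' < 2 * π) :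
    S U θ' - S U 0 + n * (θ' / 2) ≤ countFun n U θ * π := by
  have hc : (n:ℝ) * (θ' / 2) = ((U : Matrix (Fin n) (Fin n) ℂ).charpoly.roots.map
      fun _ => θ' / 2).sum := by
    rw [Multiset.map_const', Multiset.sum_replicate, card_roots, nsmul_eq_mul]
  rw [count_eq, S_eq, S_eq, hc, ← Multiset.sum_map_mul_right, ← Multiset.sum_map_sub,
    ← Multiset.sum_map_add]
  refine Multiset.sum_map_le_sum_map _ _ fun z _ => ?_
  rw [sub_zero]
  exact saw_lower (ang_nonneg z) (ang_lt z) hθ hθ' h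

lemma count_le {n : ℕ} (U : Matrix.unitaryGroup (Fin n) ℂ) (θ : ℝ) : countFun n U θ ≤ n := by
  unfold countFun countAngles eigenAngles
  refine (Multiset.card_le_card (@Multiset.filter_le _ _
    (fun a => Classical.propDecidable _) _)).trans ?_
  rw [Multiset.card_map, card_roots]

def grid (n : ℕ) (k : ℕ) : ℝ := 2 * π * ((k:ℝ) - 1) / n

lemma dK_le {n : ℕ} (hn : 1 ≤ n) (U : Matrix.unitaryGroup (Fin n) ℂ) {M : ℝ}
    (hM : ∀ k ∈ Finset.range (n+2), |S U (grid n k)| ≤ M) : dK n U ≤ (M + 2) / n := by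
  have hπ := Real.pi_pos
  have hπ3 := Real.pi_gt_three
  have hn0 : (0:ℝ) < n := by exact_mod_cast hn
  have : Nonempty (Set.Ico (0:ℝ) (2 * π)) := ⟨⟨0, by simp [hπ]⟩⟩
  have hM0 : 0 ≤ M := (abs_nonneg _).trans (hM 0 (by simp))
  refine ciSup_le fun ⟨θ, hθ0, hθ1⟩ => ?_
  simp only
  set t : ℝ := n * θ / (2 * π) with ht
  have ht0 : 0 ≤ t := by positivity
  have htn : t < n := by
    rw [ht, div_lt_iff₀ (by positivity)]
    nlinarith
  have hθt : θ = 2 * π * t / n := by rw [ht]; field_simp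
  set k := ⌊t⌋₊ with hk
  have hk1 : (k:ℝ) ≤ t := Nat.floor_le ht0
  have hk2 : t < k + 1 := Nat.lt_floor_add_one t
  have hkn : k < n := by
    have : (k:ℝ) < n := by linarith
    exact_mod_cast this
  have b0 := abs_le.1 (hM 0 (by simp))
  have b1 := abs_le.1 (hM 1 (by simp))
  have b2 := abs_le.1 (hM (k+1) (by simp; omega))
  have b3 := abs_le.1 (hM (k+2) (by simp; omega))
  have g0 : grid n 0 = -(2 * π / n) := by simp [grid]; ring
  have g1 : grid n 1 = 0 := by simp [grid]
  have g2 : grid n (k+1) = 2 * π * k / n := by simp [grid]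
  have g3 : grid n (k+2) = 2 * π * (k + 1) / n := by
    simp only [grid]; push_cast; ring
  rw [g0] at b0
  rw [g1] at b1
  rw [g2] at b2
  rw [g3] at b3
  have hmain : |(countFun n U θ : ℝ) - t| ≤ M + 2 := by
    rw [abs_le]
    constructor
    · have h := count_lower U (θ := θ) (θ' := 2 * π * k / n) (by positivity)
        (by rw [hθt]; gcongr) (by
          rw [div_lt_iff₀ hn0]
          have : (k:ℝ) < n := by linarith
          nlinarith)
      have e : (n:ℝ) * (2 * π * k / n / 2) = k * π := by field_simp
      rw [e] at h
      have h2 : (k * π - 2 * M) ≤ countFun n U θ * π := by linarith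
      have h3 : (t - (M + 2)) * π ≤ countFun n U θ * π := by nlinarith
      have h4 := le_of_mul_le_mul_right h3 hπ
      linarith
    · by_cases hlast : k + 2 < n
      · have hlast' : (k:ℝ) + 2 < n := by exact_mod_cast hlast
        have h := count_upper U (θ := θ) (θ' := 2 * π * (k + 1) / n) (δ := 2 * π / n)
          (by positivity) hθ0 (by rw [hθt]; gcongr) (by
            rw [← add_div, div_lt_iff₀ hn0]
            nlinarith)
        have e : (n:ℝ) * ((2 * π * (k + 1) / n + 2 * π / n) / 2) = (k + 2) * π := by
          field_simp; ring
        rw [e] at h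
        have h3 : countFun n U θ * π ≤ (t + (M + 2)) * π := by nlinarith
        have h4 := le_of_mul_le_mul_right h3 hπ
        linarith
      · have h1 : (countFun n U θ : ℝ) ≤ n := by exact_mod_cast count_le U θ
        have h2 : (n:ℝ) ≤ k + 2 := by exact_mod_cast not_lt.1 hlast
        linarith
  have e : (countFun n U θ : ℝ) / n - θ / (2 * π) = ((countFun n U θ : ℝ) - t) / n := by
    rw [ht]; field_simp
  rw [e, abs_div, abs_of_pos hn0]
  gcongr

lemma dK_nonneg {n : ℕ} (U : Matrix.unitaryGroup (Fin n) ℂ) : 0 ≤ dK n U :=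
  Real.iSup_nonneg fun _ => abs_nonneg _

end

end Kol

/-- There is a universal constant `c₂ > 0` such that for every `N ≥ 2` and every Haar-distributed
random `N × N` unitary matrix, `𝔼 d_K(μ_N, ν) ≤ c₂ log N / N`. -/
theorem expected_kolmogorov_upper_bound :
    ∃ c₂ : ℝ, 0 < c₂ ∧ ∀ N : ℕ, 2 ≤ N →
      ∀ ℙ : Measure (Matrix.unitaryGroup (Fin N) ℂ),
        IsProbabilityMeasure ℙ → ℙ.IsHaarMeasure →
          ∫ U, dK N U ∂ℙ ≤ c₂ * Real.log N / N := by
  refine ⟨103, by norm_num, fun N hN P hP hH => ?_⟩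
  have hN2 : (2:ℝ) ≤ N := by exact_mod_cast hN
  have hN0 : (0:ℝ) < N := by linarith
  set E : ℝ := Real.exp (32 * (1 + Real.log N)) with hE
  have hE0 : 0 < E := Real.exp_pos _
  set B : ℝ := 2 * (N + 2) * E with hB
  have hB0 : 0 < B := by positivity
  set Y : Matrix.unitaryGroup (Fin N) ℂ → ℝ := fun U =>
    ∑ k ∈ Finset.range (N+2), (Real.exp (1 * Kol.S U (Kol.grid N k)) +
      Real.exp (-1 * Kol.S U (Kol.grid N k))) with hY
  have m1 := fun k => Kol.S_moment P (Kol.grid N k) 1 (by simp)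
  have m2 := fun k => Kol.S_moment P (Kol.grid N k) (-1) (by simp)
  have hYi : Integrable Y P :=
    integrable_finsetSum _ fun k _ => (m1 k).1.add (m2 k).1
  have hYB : ∫ U, Y U ∂P ≤ B := by
    have e1 : ∫ U, Y U ∂P = ∑ k ∈ Finset.range (N+2), ∫ U, (Real.exp (1 * Kol.S U (Kol.grid N k)) +
      Real.exp (-1 * Kol.S U (Kol.grid N k))) ∂P :=
      integral_finsetSum _ fun k _ => (m1 k).1.add (m2 k).1
    rw [e1]
    calc _ ≤ ∑ k ∈ Finset.range (N+2), (E + E) := by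
          refine Finset.sum_le_sum fun k _ => ?_
          rw [integral_add (m1 k).1 (m2 k).1]
          exact add_le_add (m1 k).2 (m2 k).2
      _ = B := by
          rw [Finset.sum_const, Finset.card_range, nsmul_eq_mul, hB]
          push_cast; ring
  have hlogB : Real.log B ≤ 32 + 35 * Real.log N := by
    have h1 : (2 * (N + 2) : ℝ) ≤ (N:ℝ) ^ 3 := by nlinarith [mul_nonneg hN0.le hN0.le]
    have h2 : Real.log (2 * (N + 2)) ≤ 3 * Real.log N := by
      have := Real.log_le_log (by positivity) h1
      rwa [Real.log_pow] at this
    rw [hB, Real.log_mul (by positivity) hE0.ne', hE, Real.log_exp]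
    linarith
  have hlogN : (1/2 : ℝ) ≤ Real.log N := by
    have h1 := Real.log_le_log (by norm_num) hN2
    linarith [Real.log_two_gt_d9]
  have hpt : ∀ U, dK N U ≤ (Real.log B + Y U / B + 1) / N := by
    intro U
    have hterm : ∀ k, 0 ≤ Real.exp (1 * Kol.S U (Kol.grid N k)) +
        Real.exp (-1 * Kol.S U (Kol.grid N k)) := fun k => by positivity
    have hk : ∀ k ∈ Finset.range (N+2), |Kol.S U (Kol.grid N k)| ≤ Real.log (Y U) := by
      intro k hk
      have h1 : Real.exp (1 * Kol.S U (Kol.grid N k)) +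
        Real.exp (-1 * Kol.S U (Kol.grid N k)) ≤ Y U :=
        Finset.single_le_sum (f := fun k => Real.exp (1 * Kol.S U (Kol.grid N k)) +
          Real.exp (-1 * Kol.S U (Kol.grid N k))) (fun k _ => hterm k) hk
      have p1 := Real.exp_pos (1 * Kol.S U (Kol.grid N k))
      have p2 := Real.exp_pos (-1 * Kol.S U (Kol.grid N k))
      have hY0 : 0 < Y U := by linarith
      rw [abs_le']
      constructor
      · rw [Real.le_log_iff_exp_le hY0]
        rw [one_mul] at h1
        linarith
      · rw [Real.le_log_iff_exp_le hY0]
        rw [neg_one_mul] at h1 p2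
        linarith
    have hY0 : 0 < Y U := by
      refine Finset.sum_pos (fun k _ => by positivity) ⟨0, by simp⟩
    have h1 := Kol.dK_le (by omega) U hk
    have h2 : Real.log (Y U) ≤ Real.log B + Y U / B - 1 := by
      have := Real.log_le_sub_one_of_pos (div_pos hY0 hB0)
      rw [Real.log_div hY0.ne' hB0.ne'] at this
      linarith
    refine h1.trans (div_le_div_of_nonneg_right ?_ hN0.le)
    linarith
  have hgi : Integrable (fun U => (Real.log B + Y U / B + 1) / N) P :=
    (((integrable_const _).add (hYi.div_const B)).add (integrable_const _)).div_const _
  calc ∫ U, dK N U ∂P ≤ ∫ U, (Real.log B + Y U / B + 1) / N ∂P :=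
        integral_mono_of_nonneg (ae_of_all _ fun U => Kol.dK_nonneg U) hgi (ae_of_all _ hpt)
    _ = (Real.log B + (∫ U, Y U ∂P) / B + 1) / N := by
        have hi : Integrable (fun U => Real.log B + Y U / B) P :=
          (integrable_const _).add (hYi.div_const B)
        rw [integral_div, integral_add hi (integrable_const _), integral_add (integrable_const _) (hYi.div_const B), integral_div]
        simp
    _ ≤ 103 * Real.log N / N := by
        have : (∫ U, Y U ∂P) / B ≤ 1 := (div_le_one hB0).2 hYB
        refine div_le_div_of_nonneg_right ?_ hN0.le
        linarith
end

section
/- There exists a universal constant c₁ > 0 such that for every N ≥ 2, if U is an N × N random unitary matrix distributed according to Haar measure on the unitary group U(N), then the expected Kolmogorov distance between its empirical spectral measure and the uniform measure on the unit circle satisfies E d_K(μ_N, ν) ≥ c₁ · log(N)/N. -/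
open MeasureTheory Real Filter

open MeasureTheory Real Filter
open Polynomial in
lemma det_aeval_eq_prod {n : Type*} [Fintype n] [DecidableEq n] (A : Matrix n n ℂ) (p : ℂ[X]) :
    (aeval A p).det = (A.charpoly.roots.map (fun z => p.eval z)).prod := by
  have key : ∀ s : Multiset ℂ, (aeval A ((s.map (fun a => X - C a)).prod)).det =
      (A.charpoly.roots.map (fun z => ((s.map (fun a => X - C a)).prod).eval z)).prod := by
    intro s
    induction s using Multiset.induction with
    | empty => simp
    | cons a s ih =>
      simp only [Multiset.map_cons, Multiset.prod_cons, map_mul, Matrix.det_mul, ih, eval_mul,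
        Multiset.prod_map_mul]
      congr 1
      have h1 : A.charpoly = (A.charpoly.roots.map (fun a => X - C a)).prod :=
        ((IsAlgClosed.splits A.charpoly).eq_prod_roots_of_monic A.charpoly_monic)
      have h2 := Matrix.eval_charpoly A a
      have h3 : (aeval A (X - C a)) = -(Matrix.scalar n a - A) := by
        simp [Matrix.algebraMap_eq_diagonal, Matrix.scalar]
      rw [h3, Matrix.det_neg, ← h2]
      conv_lhs => rw [h1]
      rw [eval_multiset_prod, Multiset.map_map]
      have hcard : Multiset.card A.charpoly.roots = Fintype.card n := by
        rw [← (IsAlgClosed.splits A.charpoly).natDegree_eq_card_roots, A.charpoly_natDegree_eq_dim]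
      rw [← hcard]
      generalize A.charpoly.roots = R
      induction R using Multiset.induction with
      | empty => simp
      | cons b R ih => 
        simp only [Multiset.map_cons, Multiset.prod_cons, Multiset.card_cons, ← ih]
        simp; ring
  have hp := (IsAlgClosed.splits p).eq_prod_roots
  have hcard : Multiset.card A.charpoly.roots = Fintype.card n := by
    rw [← (IsAlgClosed.splits A.charpoly).natDegree_eq_card_roots, A.charpoly_natDegree_eq_dim]
  rw [hp]
  simp only [map_mul, Matrix.det_mul, key, eval_mul, Multiset.prod_map_mul]
  congr 1
  simp [Matrix.algebraMap_eq_diagonal, hcard]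

open Polynomial in
lemma trace_pow_eq {n : Type*} [Fintype n] [DecidableEq n] (A : Matrix n n ℂ) (k : ℕ) :
    (A ^ k).trace = (A.charpoly.roots.map (fun z => z ^ k)).sum := by
  have h : (A ^ k).charpoly = ((A.charpoly.roots.map (fun z => z ^ k)).map (fun a => X - C a)).prod := by
    apply Polynomial.funext
    intro x
    rw [Matrix.eval_charpoly]
    have : Matrix.scalar n x - A ^ k = aeval A (C x - X ^ k) := by
      simp [Matrix.algebraMap_eq_diagonal, Matrix.scalar]
    rw [this, det_aeval_eq_prod, eval_multiset_prod, Multiset.map_map, Multiset.map_map]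
    simp
  rw [Matrix.trace_eq_sum_roots_charpoly, h, Polynomial.roots_multiset_prod_X_sub_C]

lemma card_roots_charpoly {n : Type*} [Fintype n] [DecidableEq n] (A : Matrix n n ℂ) :
    Multiset.card A.charpoly.roots = Fintype.card n := by
  rw [← (IsAlgClosed.splits A.charpoly).natDegree_eq_card_roots, A.charpoly_natDegree_eq_dim]

lemma norm_root_unitary {N : ℕ} (U : Matrix.unitaryGroup (Fin N) ℂ) {z : ℂ}
    (hz : z ∈ (U : Matrix (Fin N) (Fin N) ℂ).charpoly.roots) : ‖z‖ = 1 := by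
  have h1 : z ∈ spectrum ℂ (U : Matrix (Fin N) (Fin N) ℂ) := by
    apply Matrix.mem_spectrum_of_isRoot_charpoly
    exact (Polynomial.mem_roots'.1 hz).2
  open scoped Matrix.Norms.L2Operator in
  have := spectrum.subset_circle_of_unitary (𝕜 := ℂ) U.2 h1
  simpa using this

/-- The angle in `[0,2π)` of a complex number. -/
noncomputable def ang (z : ℂ) : ℝ := if 0 ≤ Complex.arg z then Complex.arg z else Complex.arg z + 2 * π

lemma ang_nonneg (z : ℂ) : 0 ≤ ang z := by
  unfold ang
  split_ifs with h
  · exact h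
  · linarith [Complex.neg_pi_lt_arg z, Real.pi_pos]

lemma ang_lt (z : ℂ) : ang z < 2 * π := by
  unfold ang
  split_ifs with h
  · linarith [Complex.arg_le_pi z, Real.pi_pos]
  · linarith

lemma exp_ang {z : ℂ} (hz : ‖z‖ = 1) : Complex.exp (ang z * Complex.I) = z := by
  have h := Complex.norm_mul_exp_arg_mul_I z
  rw [hz, Complex.ofReal_one, one_mul] at h
  unfold ang
  split_ifs
  · exact h
  · push_cast
    rw [add_mul, Complex.exp_add, h, Complex.exp_two_pi_mul_I, mul_one]

/-- power sums of eigenvalues -/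
noncomputable def pw (N : ℕ) (k : ℕ) (U : Matrix.unitaryGroup (Fin N) ℂ) : ℂ :=
  ((U : Matrix (Fin N) (Fin N) ℂ) ^ k).trace

lemma pw_eq (N : ℕ) (k : ℕ) (U : Matrix.unitaryGroup (Fin N) ℂ) :
    pw N k U = ((eigenAngles N U).map (fun x : ℝ => Complex.exp ((k : ℂ) * x * Complex.I))).sum := by
  unfold pw eigenAngles
  rw [trace_pow_eq, Multiset.map_map]
  congr 1
  apply Multiset.map_congr rfl
  intro z hz
  have := exp_ang (norm_root_unitary U hz)
  change z ^ k = Complex.exp ((k : ℂ) * (ang z : ℝ) * Complex.I)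
  rw [mul_assoc, Complex.exp_nat_mul, this]

lemma card_eigenAngles (N : ℕ) (U : Matrix.unitaryGroup (Fin N) ℂ) :
    Multiset.card (eigenAngles N U) = N := by
  simp [eigenAngles, card_roots_charpoly]

lemma mem_eigenAngles {N : ℕ} {U : Matrix.unitaryGroup (Fin N) ℂ} {x : ℝ}
    (hx : x ∈ eigenAngles N U) : 0 ≤ x ∧ x < 2 * π := by
  unfold eigenAngles at hx
  obtain ⟨z, _, rfl⟩ := Multiset.mem_map.1 hx
  exact ⟨ang_nonneg z, ang_lt z⟩

open MeasureTheory Real Filter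

lemma fejer_aux (y : ℝ) (n : ℕ) :
    (n : ℝ) + 2 * ∑ k ∈ Finset.Ico 1 n, ((n : ℝ) - k) * Real.cos (k * y) =
      (∑ j ∈ Finset.range n, Real.cos (j * y)) ^ 2 + (∑ j ∈ Finset.range n, Real.sin (j * y)) ^ 2 := by
  induction n with
  | zero => simp
  | succ n ih =>
    have h1 : ∑ k ∈ Finset.Ico 1 (n+1), (((n + 1 : ℕ) : ℝ) - k) * Real.cos (k * y) =
        ∑ k ∈ Finset.Ico 1 n, ((n : ℝ) - k) * Real.cos (k * y) +
        ∑ k ∈ Finset.Ico 1 (n+1), Real.cos (k * y) := by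
      have : ∑ k ∈ Finset.Ico 1 n, ((n : ℝ) - k) * Real.cos (k * y) =
          ∑ k ∈ Finset.Ico 1 (n+1), ((n : ℝ) - k) * Real.cos (k * y) := by
        rcases Nat.eq_zero_or_pos n with rfl | hn
        · simp
        · rw [Finset.sum_Ico_succ_top hn]; simp
      rw [this, ← Finset.sum_add_distrib]
      apply Finset.sum_congr rfl
      intro k _
      push_cast; ring
    have h2 : ∑ k ∈ Finset.Ico 1 (n+1), Real.cos (k * y) =
        ∑ j ∈ Finset.range n, (Real.cos (n * y) * Real.cos (j * y) + Real.sin (n * y) * Real.sin (j * y)) := by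
      rw [Finset.sum_Ico_eq_sum_range, ← Finset.sum_range_reflect]
      apply Finset.sum_congr (by simp)
      intro j hj
      have hj' : j < n := by simpa using hj
      rw [← Real.cos_sub]
      congr 1
      have : ((1 + (n + 1 - 1 - 1 - j) : ℕ) : ℝ) = n - j := by
        rw [show 1 + (n + 1 - 1 - 1 - j) = n - j by omega, Nat.cast_sub hj'.le]
      rw [this]; ring
    rw [h1, h2, Finset.sum_add_distrib, ← Finset.mul_sum, ← Finset.mul_sum,
      Finset.sum_range_succ, Finset.sum_range_succ]
    have := Real.cos_sq_add_sin_sq (n * y)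
    push_cast
    linear_combination ih - this

lemma fejer_nonneg (y : ℝ) (n : ℕ) :
    -(1/2 : ℝ) ≤ ∑ k ∈ Finset.Ico 1 n, (1 - (k : ℝ) / n) * Real.cos (k * y) := by
  rcases Nat.eq_zero_or_pos n with rfl | hn
  · simp
  have hn' : (0 : ℝ) < n := by exact_mod_cast hn
  have h := fejer_aux y n
  have h2 : ∑ k ∈ Finset.Ico 1 n, ((n : ℝ) - k) * Real.cos (k * y) =
      n * ∑ k ∈ Finset.Ico 1 n, (1 - (k : ℝ) / n) * Real.cos (k * y) := by
    rw [Finset.mul_sum]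
    apply Finset.sum_congr rfl
    intro k _
    field_simp
  rw [h2] at h
  have h3 : 0 ≤ (n : ℝ) * (1 + 2 * ∑ k ∈ Finset.Ico 1 n, (1 - (k : ℝ) / n) * Real.cos (k * y)) := by
    have := add_nonneg (sq_nonneg (∑ j ∈ Finset.range n, Real.cos (j * y))) (sq_nonneg (∑ j ∈ Finset.range n, Real.sin (j * y)))
    linarith
  have := nonneg_of_mul_nonneg_right h3 hn'
  linarith

open Classical in
lemma sum_count_integral (s : Multiset ℝ) (g g' : ℝ → ℝ) (hg : ∀ x, HasDerivAt g (g' x) x)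
    (hc : Continuous g') (hs : ∀ x ∈ s, 0 ≤ x ∧ x < 2 * π) :
    IntervalIntegrable (fun θ => (Multiset.card (s.filter (· ∈ Set.Icc 0 θ)) : ℝ) * g' θ) volume 0 (2 * π) ∧
    (s.map g).sum = (Multiset.card s : ℝ) * g (2 * π) -
      ∫ θ in (0:ℝ)..(2 * π), (Multiset.card (s.filter (· ∈ Set.Icc 0 θ)) : ℝ) * g' θ := by
  induction s using Multiset.induction with
  | empty => simp
  | cons x s ih =>
    have ih' := ih (fun y hy => hs y (Multiset.mem_cons_of_mem hy))
    obtain ⟨hx0, hx1⟩ := hs x (Multiset.mem_cons_self x s)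
    have hfun : (fun θ => (Multiset.card ((x ::ₘ s).filter (· ∈ Set.Icc 0 θ)) : ℝ) * g' θ) =
        fun θ => (if x ≤ θ then g' θ else 0) +
          (Multiset.card (s.filter (· ∈ Set.Icc 0 θ)) : ℝ) * g' θ := by
      funext θ
      by_cases h : x ≤ θ
      · rw [Multiset.filter_cons_of_pos _ (by exact ⟨hx0, h⟩)]
        simp [h]; ring
      · rw [Multiset.filter_cons_of_neg _ (by exact fun h' => h h'.2)]
        simp [h]
    have i1 : IntervalIntegrable (fun θ => if x ≤ θ then g' θ else 0) volume 0 x := by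
      rw [intervalIntegrable_congr_uIoo (g := fun _ => (0:ℝ))]
      · simp
      · intro θ hθ
        rw [Set.uIoo_of_le hx0] at hθ
        simp [hθ.2]
    have i2 : IntervalIntegrable (fun θ => if x ≤ θ then g' θ else 0) volume x (2 * π) := by
      rw [intervalIntegrable_congr_uIoo (g := g')]
      · exact hc.intervalIntegrable _ _
      · intro θ hθ
        rw [Set.uIoo_of_le hx1.le] at hθ
        simp [hθ.1.le]
    have e1 : ∫ θ in (0:ℝ)..x, (if x ≤ θ then g' θ else 0) = 0 := by
      rw [intervalIntegral.integral_congr_uIoo (g := fun _ => (0:ℝ))]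
      · simp
      · intro θ hθ
        rw [Set.uIoo_of_le hx0] at hθ
        simp [hθ.2]
    have e2 : ∫ θ in x..(2*π), (if x ≤ θ then g' θ else 0) = g (2 * π) - g x := by
      rw [intervalIntegral.integral_congr_uIoo (g := g')]
      · exact intervalIntegral.integral_eq_sub_of_hasDerivAt (fun y _ => hg y) (hc.intervalIntegrable _ _)
      · intro θ hθ
        rw [Set.uIoo_of_le hx1.le] at hθ
        simp [hθ.1.le]
    rw [hfun]
    refine ⟨(i1.trans i2).add ih'.1, ?_⟩
    rw [intervalIntegral.integral_add (i1.trans i2) ih'.1,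
      ← intervalIntegral.integral_add_adjacent_intervals i1 i2, e1, e2]
    simp [ih'.2]; ring

lemma countFun_le (N : ℕ) (U : Matrix.unitaryGroup (Fin N) ℂ) (θ : ℝ) : countFun N U θ ≤ N := by
  classical
  unfold countFun countAngles
  refine le_trans (Multiset.card_le_card (@Multiset.filter_le ℝ _ (fun _ => Classical.propDecidable _) _)) (card_eigenAngles N U).le

lemma dev_le_one (N : ℕ) (U : Matrix.unitaryGroup (Fin N) ℂ) {θ : ℝ} (h0 : 0 ≤ θ) (h1 : θ ≤ 2 * π) :
    |(countFun N U θ : ℝ) / N - θ / (2 * π)| ≤ 1 := by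
  have hc : (countFun N U θ : ℝ) ≤ N := by exact_mod_cast countFun_le N U θ
  have a1 : (countFun N U θ : ℝ) / N ≤ 1 := div_le_one_of_le₀ hc (by positivity)
  have a2 : 0 ≤ (countFun N U θ : ℝ) / N := by positivity
  have a3 : θ / (2 * π) ≤ 1 := div_le_one_of_le₀ h1 (by positivity)
  have a4 : 0 ≤ θ / (2 * π) := by positivity
  rw [abs_le]; constructor <;> linarith

lemma bdd_dev (N : ℕ) (U : Matrix.unitaryGroup (Fin N) ℂ) :
    BddAbove (Set.range fun θ : Set.Ico (0:ℝ) (2 * π) => |(countFun N U θ : ℝ) / N - (θ : ℝ) / (2 * π)|) :=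
  ⟨1, by rintro _ ⟨θ, rfl⟩; exact dev_le_one N U θ.2.1 θ.2.2.le⟩

lemma dev_le_dK (N : ℕ) (U : Matrix.unitaryGroup (Fin N) ℂ) {θ : ℝ} (h : θ ∈ Set.Ico (0:ℝ) (2 * π)) :
    |(countFun N U θ : ℝ) / N - θ / (2 * π)| ≤ dK N U :=
  le_ciSup (bdd_dev N U) ⟨θ, h⟩

lemma dK_nonneg (N : ℕ) (U : Matrix.unitaryGroup (Fin N) ℂ) : 0 ≤ dK N U :=
  Real.iSup_nonneg fun _ => abs_nonneg _

lemma dK_le_one (N : ℕ) (U : Matrix.unitaryGroup (Fin N) ℂ) : dK N U ≤ 1 := by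
  have : Nonempty (Set.Ico (0:ℝ) (2 * π)) := ⟨⟨0, le_rfl, by positivity⟩⟩
  exact ciSup_le fun θ => dev_le_one N U θ.2.1 θ.2.2.le

lemma dK_ge (N : ℕ) (hN : 1 ≤ N) (U : Matrix.unitaryGroup (Fin N) ℂ) : 1 / (2 * N) ≤ dK N U := by
  have hN' : (1 : ℝ) ≤ N := by exact_mod_cast hN
  have hp := Real.pi_pos
  have h := dev_le_dK N U (θ := π / N) ⟨by positivity, by
    have : π / N ≤ π := div_le_self hp.le hN'
    linarith⟩
  refine le_trans ?_ h
  have e : (countFun N U (π / N) : ℝ) / N - π / N / (2 * π) = ((countFun N U (π / N) : ℝ) - 1 / 2) / N := by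
    field_simp
  rw [e, abs_div, abs_of_pos (by linarith : (0:ℝ) < N)]
  rw [show (1:ℝ) / (2 * N) = (1/2) / N by field_simp]
  gcongr
  rcases Nat.eq_zero_or_pos (countFun N U (π / N)) with h0 | h0
  · rw [h0]; norm_num
  · have : (1:ℝ) ≤ countFun N U (π / N) := by exact_mod_cast h0
    rw [abs_of_nonneg (by linarith)]; linarith

/-- Fejér-weighted linear statistic. -/
noncomputable def fej (n : ℕ) (φ : ℝ) (x : ℝ) : ℝ :=
  ∑ k ∈ Finset.Ico 1 n, (1 - (k : ℝ) / n) / k * Real.sin (k * (x + φ))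

noncomputable def fej' (n : ℕ) (φ : ℝ) (x : ℝ) : ℝ :=
  ∑ k ∈ Finset.Ico 1 n, (1 - (k : ℝ) / n) * Real.cos (k * (x + φ))

lemma hasDerivAt_fej (n : ℕ) (φ x : ℝ) : HasDerivAt (fej n φ) (fej' n φ x) x := by
  unfold fej fej'
  apply HasDerivAt.fun_sum
  intro k hk
  have hk' : (k : ℝ) ≠ 0 := by
    have : 1 ≤ k := (Finset.mem_Ico.1 hk).1
    positivity
  have h1 : HasDerivAt (fun x : ℝ => (k : ℝ) * (x + φ)) k x := by
    simpa using ((hasDerivAt_id x).add_const φ).const_mul (k : ℝ)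
  convert! (h1.sin).const_mul ((1 - (k : ℝ) / n) / k) using 1
  field_simp

lemma continuous_fej' (n : ℕ) (φ : ℝ) : Continuous (fej' n φ) := by unfold fej'; fun_prop

lemma fej_periodic (n : ℕ) (φ : ℝ) : fej n φ (2 * π) = fej n φ 0 := by
  unfold fej
  apply Finset.sum_congr rfl
  intro k _
  congr 1
  rw [show (k : ℝ) * (2 * π + φ) = k * (0 + φ) + k * (2 * π) by ring, Real.sin_add_nat_mul_two_pi]

lemma integral_fej (n : ℕ) (φ : ℝ) : ∫ x in (0:ℝ)..(2 * π), fej n φ x = 0 := by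
  unfold fej
  rw [intervalIntegral.integral_finsetSum (fun k _ => by apply Continuous.intervalIntegrable; fun_prop)]
  apply Finset.sum_eq_zero
  intro k hk
  have hk' : (k : ℝ) ≠ 0 := by
    have : 1 ≤ k := (Finset.mem_Ico.1 hk).1
    positivity
  rw [intervalIntegral.integral_const_mul]
  have : ∫ x in (0:ℝ)..(2 * π), Real.sin (k * (x + φ)) = 0 := by
    have hd : ∀ x ∈ Set.uIcc (0:ℝ) (2 * π), HasDerivAt (fun x : ℝ => -(Real.cos (k * (x + φ)) / k)) (Real.sin (k * (x + φ))) x := by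
      intro x _
      have h1 : HasDerivAt (fun x : ℝ => (k : ℝ) * (x + φ)) k x := by
        simpa using ((hasDerivAt_id x).add_const φ).const_mul (k : ℝ)
      convert! (h1.cos.div_const (k:ℝ)).neg using 1
      field_simp
    rw [intervalIntegral.integral_eq_sub_of_hasDerivAt hd (by apply Continuous.intervalIntegrable; fun_prop)]
    rw [show (k : ℝ) * (2 * π + φ) = k * (0 + φ) + k * (2 * π) by ring, Real.cos_add_nat_mul_two_pi]
    ring
  rw [this, mul_zero]

lemma sum_fej_le (N : ℕ) (hN : 1 ≤ N) (U : Matrix.unitaryGroup (Fin N) ℂ) (n : ℕ) (φ : ℝ) :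
    ((eigenAngles N U).map (fej n φ)).sum ≤ 2 * π * N * dK N U := by
  classical
  have hp := Real.pi_pos
  have hN' : (0 : ℝ) < N := by exact_mod_cast hN
  obtain ⟨hi, hs⟩ := sum_count_integral (eigenAngles N U) (fej n φ) (fej' n φ) (hasDerivAt_fej n φ)
    (continuous_fej' n φ) (fun x hx => mem_eigenAngles hx)
  have hcf : ∀ θ, Multiset.card ((eigenAngles N U).filter (· ∈ Set.Icc 0 θ)) = countFun N U θ := by
    intro θ
    unfold countFun countAngles
    congr!
  simp only [hcf, card_eigenAngles] at hi hs
  have hcont : Continuous (fun θ => fej' n φ θ) := continuous_fej' n φ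
  have hi2 : IntervalIntegrable (fun θ => (N * θ / (2 * π)) * fej' n φ θ) volume 0 (2 * π) := by
    apply Continuous.intervalIntegrable; fun_prop
  have hparts : ∫ θ in (0:ℝ)..(2 * π), (N * θ / (2 * π)) * fej' n φ θ = N * fej n φ (2 * π) := by
    have hu : ∀ x ∈ Set.uIcc (0:ℝ) (2 * π), HasDerivAt (fun θ : ℝ => N * θ / (2 * π)) (N / (2 * π)) x := by
      intro x _
      simpa using ((hasDerivAt_id x).const_mul (N:ℝ)).div_const (2 * π)
    rw [intervalIntegral.integral_mul_deriv_eq_deriv_mul hu (fun x _ => hasDerivAt_fej n φ x)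
      (by simp) (hcont.intervalIntegrable _ _), intervalIntegral.integral_const_mul, integral_fej]
    field_simp
    simp
  have heq : ((eigenAngles N U).map (fej n φ)).sum =
      ∫ θ in (0:ℝ)..(2 * π), ((N * θ / (2 * π)) * fej' n φ θ - (countFun N U θ : ℝ) * fej' n φ θ) := by
    rw [intervalIntegral.integral_sub hi2 hi, hparts, hs]
  rw [heq]
  have hbound : ∫ θ in (0:ℝ)..(2 * π), ((N * θ / (2 * π)) * fej' n φ θ - (countFun N U θ : ℝ) * fej' n φ θ)
      ≤ ∫ θ in (0:ℝ)..(2 * π), N * dK N U * (fej' n φ θ + 1) := by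
    apply intervalIntegral.integral_mono_on_of_le_Ioo (by positivity) (hi2.sub hi)
    · apply Continuous.intervalIntegrable; fun_prop
    · intro θ hθ
      have hd := dev_le_dK N U (θ := θ) ⟨hθ.1.le, hθ.2⟩
      have hf : -(1/2 : ℝ) ≤ fej' n φ θ := fejer_nonneg (θ + φ) n
      have hf2 : |fej' n φ θ| ≤ fej' n φ θ + 1 := by
        rw [abs_le]; constructor <;> linarith
      have e : (N * θ / (2 * π)) * fej' n φ θ - (countFun N U θ : ℝ) * fej' n φ θ =
          N * (-((countFun N U θ : ℝ) / N - θ / (2 * π)) * fej' n φ θ) := by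
        field_simp; ring
      rw [e, mul_assoc]
      refine mul_le_mul_of_nonneg_left ?_ hN'.le
      calc -((countFun N U θ : ℝ) / N - θ / (2 * π)) * fej' n φ θ
          ≤ |-((countFun N U θ : ℝ) / N - θ / (2 * π)) * fej' n φ θ| := le_abs_self _
        _ = |(countFun N U θ : ℝ) / N - θ / (2 * π)| * |fej' n φ θ| := by rw [abs_mul, abs_neg]
        _ ≤ dK N U * (fej' n φ θ + 1) := by
          apply mul_le_mul hd hf2 (abs_nonneg _) (dK_nonneg N U)
  refine hbound.trans_eq ?_
  rw [intervalIntegral.integral_const_mul, intervalIntegral.integral_add (hcont.intervalIntegrable _ _) (by simp),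
    intervalIntegral.integral_eq_sub_of_hasDerivAt (fun x _ => hasDerivAt_fej n φ x) (hcont.intervalIntegrable _ _),
    fej_periodic]
  simp; ring

/-- The key linear statistic: `Im ∑ (1-k/n)/k ω^k Tr U^k ≤ 2π N d_K`. -/
lemma im_stat_le (N : ℕ) (hN : 1 ≤ N) (U : Matrix.unitaryGroup (Fin N) ℂ) (n : ℕ) (ω : ℂ) (hω : ‖ω‖ = 1) :
    (∑ k ∈ Finset.Ico 1 n, (((1 - (k : ℝ) / n) / k : ℝ) : ℂ) * ω ^ k * pw N k U).im ≤
      2 * π * N * dK N U := by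
  refine le_trans (le_of_eq ?_) (sum_fej_le N hN U n (Complex.arg ω))
  have hω' : Complex.exp (Complex.arg ω * Complex.I) = ω := by
    have h := Complex.norm_mul_exp_arg_mul_I ω
    rwa [hω, Complex.ofReal_one, one_mul] at h
  simp only [pw_eq]
  generalize eigenAngles N U = s
  induction s using Multiset.induction with
  | empty => simp
  | cons x s ih =>
    simp only [Multiset.map_cons, Multiset.sum_cons, mul_add, Finset.sum_add_distrib, Complex.add_im, ih]
    congr 1
    unfold fej
    rw [Complex.im_sum]
    apply Finset.sum_congr rfl
    intro k _
    rw [mul_assoc, Complex.im_ofReal_mul]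
    congr 1
    nth_rewrite 1 [← hω']
    rw [← Complex.exp_nat_mul, ← Complex.exp_add]
    rw [show (k : ℂ) * (Complex.arg ω * Complex.I) + k * x * Complex.I =
      ((k * (x + Complex.arg ω) : ℝ) : ℂ) * Complex.I by push_cast; ring]
    rw [Complex.exp_ofReal_mul_I_im]

open MeasureTheory Real Filter

lemma continuous_pw (N k : ℕ) : Continuous (pw N k) := by
  unfold pw
  apply Continuous.matrix_trace
  exact (continuous_subtype_val).pow k

lemma fourier_two_pi (n : ℤ) (x : ℝ) :
    fourier n (x : AddCircle (2 * π)) = Complex.exp ((n : ℂ) * x * Complex.I) := by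
  rw [fourier_coe_apply]
  congr 1
  have : (π : ℂ) ≠ 0 := by exact_mod_cast Real.pi_ne_zero
  push_cast
  field_simp

lemma measurable_sum_fourier (N : ℕ) (n : ℤ) :
    Measurable fun U : Matrix.unitaryGroup (Fin N) ℂ =>
      ((eigenAngles N U).map (fun x : ℝ => fourier n (x : AddCircle (2 * π)))).sum := by
  obtain ⟨k, rfl | rfl⟩ := n.eq_nat_or_neg
  · convert (continuous_pw N k).measurable using 2 with U
    rw [pw_eq]
    simp only [fourier_two_pi]
    simp
  · have : Measurable fun U => (starRingEnd ℂ) (pw N k U) :=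
      (Complex.continuous_conj.comp (continuous_pw N k)).measurable
    convert this using 2 with U
    rw [pw_eq, map_multiset_sum, Multiset.map_map]
    congr 1
    apply Multiset.map_congr rfl
    intro x _
    rw [fourier_two_pi, Function.comp_apply, ← Complex.exp_conj]
    simp

lemma measurable_sum_cont (N : ℕ) (f : C(AddCircle (2 * π), ℂ)) :
    Measurable fun U : Matrix.unitaryGroup (Fin N) ℂ =>
      ((eigenAngles N U).map (fun x : ℝ => f (x : AddCircle (2 * π)))).sum := by
  have : Fact (0 < 2 * π) := ⟨by positivity⟩
  have hf : f ∈ closure ((Submodule.span ℂ (Set.range (@fourier (2 * π))) : Submodule ℂ _) : Set C(AddCircle (2 * π), ℂ)) := by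
    have := @span_fourier_closure_eq_top (2 * π) _
    have h2 : f ∈ (Submodule.span ℂ (Set.range (@fourier (2 * π)))).topologicalClosure := by rw [this]; trivial
    exact h2
  have hspan : ∀ g ∈ Submodule.span ℂ (Set.range (@fourier (2 * π))),
      Measurable fun U : Matrix.unitaryGroup (Fin N) ℂ =>
      ((eigenAngles N U).map (fun x : ℝ => g (x : AddCircle (2 * π)))).sum := by
    intro g hg
    induction hg using Submodule.span_induction with
    | mem g hg => obtain ⟨n, rfl⟩ := hg; exact measurable_sum_fourier N n
    | zero => simp
    | add g h _ _ h1 h2 => 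
      simp only [ContinuousMap.add_apply, Multiset.sum_map_add]
      exact h1.add h2
    | smul c g _ h1 => 
      simp only [ContinuousMap.smul_apply, smul_eq_mul, Multiset.sum_map_mul_left]
      exact h1.const_mul c
  obtain ⟨g, hg, hlim⟩ := mem_closure_iff_seq_limit.1 hf
  refine measurable_of_tendsto_metrizable (fun n => hspan (g n) (hg n)) ?_
  rw [tendsto_pi_nhds]
  intro U
  apply tendsto_multiset_sum
  intro x _
  exact ((continuous_eval_const (F := C(AddCircle (2 * π), ℂ)) (x : AddCircle (2 * π))).tendsto f).comp hlim

open Classical in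
lemma measurable_card_closed (N : ℕ) (K : Set (AddCircle (2 * π))) (hK : IsClosed K) :
    Measurable fun U : Matrix.unitaryGroup (Fin N) ℂ =>
      (Multiset.card ((eigenAngles N U).filter (fun x : ℝ => (x : AddCircle (2 * π)) ∈ K)) : ℂ) := by
  have hδ : ∀ n : ℕ, (0:ℝ) < 1 / ((n:ℝ) + 1) := fun n => by positivity
  have hlim := thickenedIndicator_tendsto_indicator_closure hδ tendsto_one_div_add_atTop_nhds_zero_nat K
  let f : ℕ → C(AddCircle (2 * π), ℂ) := fun n =>
    ⟨fun x => ((thickenedIndicator (hδ n) K x : NNReal) : ℂ), by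
      exact Complex.continuous_ofReal.comp (NNReal.continuous_coe.comp (thickenedIndicator (hδ n) K).continuous)⟩
  refine measurable_of_tendsto_metrizable (fun n => measurable_sum_cont N (f n)) ?_
  rw [tendsto_pi_nhds]
  intro U
  have h2 : (Multiset.card ((eigenAngles N U).filter (fun x : ℝ => (x : AddCircle (2 * π)) ∈ K)) : ℂ) =
      ((eigenAngles N U).map (fun x : ℝ => (if (x : AddCircle (2 * π)) ∈ K then (1:ℂ) else 0))).sum := by
    generalize eigenAngles N U = s
    induction s using Multiset.induction with
    | empty => simp
    | cons x s ih =>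
      by_cases hx : (x : AddCircle (2 * π)) ∈ K
      · rw [Multiset.filter_cons_of_pos (p := fun x : ℝ => (x : AddCircle (2 * π)) ∈ K) _ hx]; simp [hx, ← ih]; ring
      · rw [Multiset.filter_cons_of_neg (p := fun x : ℝ => (x : AddCircle (2 * π)) ∈ K) _ hx]; simp [hx, ← ih]
  rw [h2]
  apply tendsto_multiset_sum
  intro x _
  have h3 := (tendsto_pi_nhds.1 hlim) (x : AddCircle (2 * π))
  rw [hK.closure_eq] at h3
  have h4 : Tendsto (fun n => ((thickenedIndicator (hδ n) K (x : AddCircle (2 * π)) : NNReal) : ℂ)) atTop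
      (nhds (((K.indicator (fun _ => (1:NNReal)) (x : AddCircle (2 * π)) : NNReal) : ℝ) : ℂ)) :=
    ((Complex.continuous_ofReal.comp NNReal.continuous_coe).tendsto _).comp h3
  have h5 : (if (x : AddCircle (2 * π)) ∈ K then (1:ℂ) else 0) =
      (((K.indicator (fun _ => (1:NNReal)) (x : AddCircle (2 * π)) : NNReal) : ℝ) : ℂ) := by
    by_cases hx : (x : AddCircle (2 * π)) ∈ K <;> simp [hx]
  rw [h5]
  exact h4

lemma measurable_countFun (N : ℕ) {θ : ℝ} (hθ : θ ∈ Set.Ico (0:ℝ) (2 * π)) :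
    Measurable fun U : Matrix.unitaryGroup (Fin N) ℂ => (countFun N U θ : ℝ) := by
  classical
  have : Fact (0 < 2 * π) := ⟨by positivity⟩
  have hK : IsClosed ((fun x : ℝ => (x : AddCircle (2 * π))) '' Set.Icc 0 θ) :=
    (isCompact_Icc.image (AddCircle.continuous_mk' (2 * π))).isClosed
  have h := Complex.measurable_re.comp (measurable_card_closed N _ hK)
  convert h using 2 with U
  simp only [Function.comp_apply, Complex.natCast_re, Nat.cast_inj]
  unfold countFun countAngles
  congr 1
  refine @Multiset.filter_congr ℝ _ _ (fun _ => Classical.propDecidable _) (fun _ => Classical.propDecidable _) _ ?_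
  intro x hx
  have hx' := mem_eigenAngles hx
  constructor
  · intro h; exact ⟨x, h, rfl⟩
  · rintro ⟨y, hy, hxy⟩
    have := (AddCircle.coe_eq_coe_iff_of_mem_Ico (p := 2 * π) (a := 0) (x := y) (y := x)
      ⟨hy.1, by simpa using hy.2.trans_lt hθ.2⟩ ⟨hx'.1, by simpa using hx'.2⟩).1 hxy
    rwa [← this]

lemma countFun_right (N : ℕ) (U : Matrix.unitaryGroup (Fin N) ℂ) (θ : ℝ) :
    ∀ᶠ q in nhdsWithin θ (Set.Ioi θ), countFun N U q = countFun N U θ := by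
  classical
  have h : ∀ᶠ q in nhdsWithin θ (Set.Ioi θ), ∀ x ∈ (eigenAngles N U).toFinset,
      (x ∈ Set.Icc 0 q ↔ x ∈ Set.Icc 0 θ) := by
    rw [Filter.eventually_all_finset]
    intro x _
    by_cases hx : x ≤ θ
    · filter_upwards [self_mem_nhdsWithin] with q hq
      have : θ < q := hq
      simp only [Set.mem_Icc]
      constructor
      · rintro ⟨h1, _⟩; exact ⟨h1, hx⟩
      · rintro ⟨h1, _⟩; exact ⟨h1, hx.trans this.le⟩
    · push Not at hx
      filter_upwards [mem_nhdsWithin_of_mem_nhds (Iio_mem_nhds hx)] with q hq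
      have : q < x := hq
      simp only [Set.mem_Icc]
      constructor
      · rintro ⟨h1, h2⟩; linarith
      · rintro ⟨h1, h2⟩; linarith
  filter_upwards [h] with q hq
  unfold countFun countAngles
  congr 1
  refine @Multiset.filter_congr ℝ _ _ (fun _ => Classical.propDecidable _) (fun _ => Classical.propDecidable _) _ ?_
  intro x hx
  exact hq x (by simpa using hx)

lemma measurable_dK (N : ℕ) : Measurable (dK N) := by
  apply measurable_of_Ioi
  intro a
  have : dK N ⁻¹' Set.Ioi a = ⋃ q : {q : ℚ // (q : ℝ) ∈ Set.Ico (0:ℝ) (2 * π)},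
      {U | a < |(countFun N U (q.1 : ℝ) : ℝ) / N - (q.1 : ℝ) / (2 * π)|} := by
    ext U
    simp only [Set.mem_preimage, Set.mem_Ioi, Set.mem_iUnion, Set.mem_ofPred_eq]
    constructor
    · intro h
      have hne : Nonempty (Set.Ico (0:ℝ) (2 * π)) := ⟨⟨0, le_rfl, by positivity⟩⟩
      obtain ⟨⟨θ, hθ⟩, h⟩ := exists_lt_of_lt_ciSup h
      have e1 := countFun_right N U θ
      have hcont : Continuous (fun q : ℝ => |(countFun N U θ : ℝ) / N - q / (2 * π)|) := by fun_prop
      have e2 : ∀ᶠ q in nhdsWithin θ (Set.Ioi θ), a < |(countFun N U θ : ℝ) / N - q / (2 * π)| :=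
        mem_nhdsWithin_of_mem_nhds ((hcont.tendsto θ).eventually (lt_mem_nhds h))
      have e3 : ∀ᶠ q in nhdsWithin θ (Set.Ioi θ), q < 2 * π :=
        mem_nhdsWithin_of_mem_nhds (Iio_mem_nhds hθ.2)
      obtain ⟨u, hu, hsub⟩ := mem_nhdsGT_iff_exists_Ioo_subset.1 (e1.and (e2.and e3))
      obtain ⟨q, hq1, hq2⟩ := exists_rat_btwn (show θ < u from hu)
      obtain ⟨c1, c2, c3⟩ := hsub ⟨hq1, hq2⟩
      refine ⟨⟨q, hθ.1.trans hq1.le, c3⟩, ?_⟩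
      rw [c1]; exact c2
    · rintro ⟨q, hq⟩
      exact hq.trans_le (dev_le_dK N U q.2)
  rw [this]
  apply MeasurableSet.iUnion
  intro q
  apply measurableSet_lt measurable_const
  have := measurable_countFun N q.2
  fun_prop

lemma integrable_dK (N : ℕ) (P : Measure (Matrix.unitaryGroup (Fin N) ℂ)) [IsFiniteMeasure P] :
    Integrable (dK N) P := by
  refine Integrable.of_bound (measurable_dK N).aestronglyMeasurable 1 (Eventually.of_forall fun U => ?_)
  rw [Real.norm_eq_abs, abs_of_nonneg (dK_nonneg N U)]
  exact dK_le_one N U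

open MeasureTheory Real Filter

instance compactSpace_unitaryGroup (N : ℕ) : CompactSpace (Matrix.unitaryGroup (Fin N) ℂ) := by
  apply isCompact_iff_compactSpace.1
  have hK : IsCompact (Set.pi Set.univ fun _ : Fin N => Set.pi Set.univ fun _ : Fin N =>
      Metric.closedBall (0:ℂ) 1) :=
    isCompact_univ_pi fun _ => isCompact_univ_pi fun _ => isCompact_closedBall 0 1
  refine IsCompact.of_isClosed_subset hK ?_ ?_
  · have : ((Matrix.unitaryGroup (Fin N) ℂ : Submonoid (Matrix (Fin N) (Fin N) ℂ)) : Set (Matrix (Fin N) (Fin N) ℂ))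
        = {A | star A * A = 1} := by
      ext A; simp [Matrix.mem_unitaryGroup_iff']
    rw [this]
    exact isClosed_eq (by fun_prop) continuous_const
  · intro A hA i _ j _
    have := entry_norm_bound_of_unitary hA i j
    exact mem_closedBall_zero_iff.2 this

lemma integrable_of_cont {N : ℕ} (P : Measure (Matrix.unitaryGroup (Fin N) ℂ)) [IsFiniteMeasure P]
    {f : Matrix.unitaryGroup (Fin N) ℂ → ℂ} (hf : Continuous f) : Integrable f P :=
  hf.integrable_of_hasCompactSupport (HasCompactSupport.of_compactSpace f)

lemma integrable_of_cont_real {N : ℕ} (P : Measure (Matrix.unitaryGroup (Fin N) ℂ)) [IsFiniteMeasure P]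
    {f : Matrix.unitaryGroup (Fin N) ℂ → ℝ} (hf : Continuous f) : Integrable f P :=
  hf.integrable_of_hasCompactSupport (HasCompactSupport.of_compactSpace f)

/-- One-parameter subgroup generated by a skew-Hermitian matrix. -/
noncomputable def expU {N : ℕ} (X : Matrix (Fin N) (Fin N) ℂ) (hX : star X = -X) (t : ℝ) :
    Matrix.unitaryGroup (Fin N) ℂ :=
  ⟨NormedSpace.exp (t • X), by
    rw [Matrix.mem_unitaryGroup_iff', Matrix.star_eq_conjTranspose, ← Matrix.exp_conjTranspose,
      ← Matrix.star_eq_conjTranspose, star_smul, hX, star_trivial, smul_neg, ← Matrix.exp_add_of_commute]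
    · simp
    · exact (Commute.refl (t • X)).neg_left⟩

lemma expU_add {N : ℕ} (X : Matrix (Fin N) (Fin N) ℂ) (hX : star X = -X) (t s : ℝ) :
    expU X hX (t + s) = expU X hX t * expU X hX s := by
  apply Subtype.ext
  simp only [expU, Submonoid.coe_mul]
  rw [add_smul, Matrix.exp_add_of_commute]
  exact (Commute.refl X).smul_left t |>.smul_right s

lemma expU_zero {N : ℕ} (X : Matrix (Fin N) (Fin N) ℂ) (hX : star X = -X) :
    expU X hX 0 = 1 := by
  apply Subtype.ext
  simp [expU]

lemma integral_deriv_zero {N : ℕ} (P : Measure (Matrix.unitaryGroup (Fin N) ℂ))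
    [IsFiniteMeasure P] [P.IsMulLeftInvariant]
    (X : Matrix (Fin N) (Fin N) ℂ) (hX : star X = -X)
    (f f' : Matrix.unitaryGroup (Fin N) ℂ → ℂ) (hf : Continuous f) (hf' : Continuous f')
    (h : ∀ U, HasDerivAt (fun t : ℝ => f (expU X hX t * U)) (f' U) 0) :
    ∫ U, f' U ∂P = 0 := by
  have h2 : ∀ U, ∀ t₀ : ℝ, HasDerivAt (fun t : ℝ => f (expU X hX t * U)) (f' (expU X hX t₀ * U)) t₀ := by
    intro U t₀
    have h3 := h (expU X hX t₀ * U)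
    have h4 : HasDerivAt (fun t : ℝ => t - t₀) 1 t₀ := (hasDerivAt_id t₀).sub_const t₀
    have h5 : HasDerivAt (fun t : ℝ => f (expU X hX t * (expU X hX t₀ * U))) (f' (expU X hX t₀ * U)) (t₀ - t₀) := by
      simpa using h3
    have h6 := HasDerivAt.scomp (h := fun t : ℝ => t - t₀) t₀ h5 h4
    simp only [one_smul] at h6
    have e : (fun t : ℝ => f (expU X hX t * U)) =
        (fun t => f (expU X hX t * (expU X hX t₀ * U))) ∘ fun t => t - t₀ := by
      funext t
      simp only [Function.comp_apply]
      rw [← mul_assoc, ← expU_add]; simp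
    rw [e]
    exact h6
  obtain ⟨C, hC⟩ : ∃ C, ∀ U, ‖f' U‖ ≤ C := by
    obtain ⟨C, hC⟩ := (isCompact_range hf').isBounded.exists_norm_le
    exact ⟨C, fun U => hC _ ⟨U, rfl⟩⟩
  have key := (hasDerivAt_integral_of_dominated_loc_of_deriv_le (μ := P) (x₀ := (0:ℝ)) (s := Set.univ)
    (F := fun t U => f (expU X hX t * U)) (F' := fun t U => f' (expU X hX t * U)) (bound := fun _ => C)
    Filter.univ_mem (Eventually.of_forall fun t => ?_) ?_ ?_ ?_ (integrable_const _) ?_).2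
  · have e : (fun t : ℝ => ∫ U, f (expU X hX t * U) ∂P) = fun _ => ∫ U, f U ∂P := by
      ext t; exact integral_mul_left_eq_self f _
    rw [e] at key
    have := key.unique (hasDerivAt_const _ _)
    simpa [expU_zero] using this
  · exact (hf.comp (continuous_const_mul _)).aestronglyMeasurable
  · exact integrable_of_cont P (hf.comp (continuous_const_mul _))
  · exact (hf'.comp (continuous_const_mul _)).aestronglyMeasurable
  · exact Eventually.of_forall fun U t _ => hC _
  · exact Eventually.of_forall fun U t _ => h2 U t

open MeasureTheory Real Filter

lemma hasDerivAt_pow_gen {A : Type*} [NormedRing A] [NormedAlgebra ℝ A] [CompleteSpace A]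
    (X W : A) (k : ℕ) (L : A →L[ℝ] ℂ) :
    HasDerivAt (fun t : ℝ => L ((NormedSpace.exp (t • X) * W) ^ k))
      (L (∑ l ∈ Finset.range k, W ^ l * X * W ^ (k - l))) 0 := by
  have h1 : HasDerivAt (fun t : ℝ => NormedSpace.exp (t • X)) X 0 := by
    have := hasDerivAt_exp_smul_const (𝕂 := ℝ) X 0
    simpa using this
  have h2 : HasDerivAt (fun t : ℝ => NormedSpace.exp (t • X) * W) (X * W) 0 :=
    h1.mul_const _
  have h3 : HasDerivAt (fun t : ℝ => (NormedSpace.exp (t • X) * W) ^ k)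
      (∑ l ∈ Finset.range k, W ^ l * X * W ^ (k - l)) 0 := by
    induction k with
    | zero => simpa using hasDerivAt_const (0:ℝ) (1 : A)
    | succ k ih =>
      have := ih.fun_mul h2
      simp only [pow_succ]
      refine this.congr_deriv ?_
      rw [Finset.sum_range_succ, Finset.sum_mul]
      congr 1
      · apply Finset.sum_congr rfl
        intro l hl
        rw [Finset.mem_range] at hl
        rw [Nat.sub_add_comm hl.le, pow_succ]
        simp [mul_assoc]
      · simp [mul_assoc]
  exact L.hasFDerivAt.comp_hasDerivAt (0:ℝ) h3

section
variable {N : ℕ}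

/-- Derivative of `W ^ k` in direction `X W`. -/
noncomputable def dpow (k : ℕ) (X W : Matrix (Fin N) (Fin N) ℂ) : Matrix (Fin N) (Fin N) ℂ :=
  ∑ l ∈ Finset.range k, W ^ l * X * W ^ (k - l)

lemma hasDerivAt_pow_entry (X : Matrix (Fin N) (Fin N) ℂ) (hX : star X = -X)
    (U : Matrix.unitaryGroup (Fin N) ℂ) (k : ℕ) (i j : Fin N) :
    HasDerivAt (fun t : ℝ => (((expU X hX t * U : Matrix.unitaryGroup (Fin N) ℂ) : Matrix (Fin N) (Fin N) ℂ) ^ k) i j)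
      (dpow k X (U : Matrix (Fin N) (Fin N) ℂ) i j) 0 := by
  let _ : NormedRing (Matrix (Fin N) (Fin N) ℂ) := Matrix.linftyOpNormedRing
  let _ : NormedAlgebra ℝ (Matrix (Fin N) (Fin N) ℂ) := Matrix.linftyOpNormedAlgebra
  exact hasDerivAt_pow_gen X (U : Matrix (Fin N) (Fin N) ℂ) k
    (LinearMap.toContinuousLinearMap (Matrix.entryLinearMap ℝ ℂ i j))

lemma trace_dpow (k : ℕ) (X W : Matrix (Fin N) (Fin N) ℂ) :
    (dpow k X W).trace = k * (X * W ^ k).trace := by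
  unfold dpow
  rw [Matrix.trace_sum, Finset.sum_congr rfl (g := fun _ => (X * W ^ k).trace)]
  · simp
  · intro l hl
    rw [Finset.mem_range] at hl
    rw [mul_assoc, Matrix.trace_mul_comm, mul_assoc, ← pow_add]
    congr 3; omega

lemma hasDerivAt_pw (X : Matrix (Fin N) (Fin N) ℂ) (hX : star X = -X)
    (U : Matrix.unitaryGroup (Fin N) ℂ) (k : ℕ) :
    HasDerivAt (fun t : ℝ => pw N k (expU X hX t * U))
      (k * (X * (U : Matrix (Fin N) (Fin N) ℂ) ^ k).trace) 0 := by
  rw [← trace_dpow]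
  unfold pw Matrix.trace
  exact HasDerivAt.fun_sum fun i _ => hasDerivAt_pow_entry X hX U k i i

/-- Product of power sums. -/
noncomputable def PP (N : ℕ) (s : Multiset ℕ) (U : Matrix.unitaryGroup (Fin N) ℂ) : ℂ :=
  (s.map (fun m => pw N m U)).prod

lemma continuous_PP (s : Multiset ℕ) : Continuous (PP N s) := by
  unfold PP
  exact continuous_multiset_prod _ fun m _ => continuous_pw N m

/-- derivative of `PP s` -/
noncomputable def dPP (s : Multiset ℕ) (X : Matrix (Fin N) (Fin N) ℂ) (U : Matrix.unitaryGroup (Fin N) ℂ) : ℂ :=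
  (s.map (fun m => PP N (s.erase m) U * (m * (X * (U : Matrix (Fin N) (Fin N) ℂ) ^ m).trace))).sum

/-- derivative of `conj PP s` -/
noncomputable def dPPc (s : Multiset ℕ) (X : Matrix (Fin N) (Fin N) ℂ) (U : Matrix.unitaryGroup (Fin N) ℂ) : ℂ :=
  (s.map (fun m => star (PP N (s.erase m) U) *
    (m * (X * star ((U : Matrix (Fin N) (Fin N) ℂ) ^ m)).trace))).sum

lemma hasDerivAt_PP (X : Matrix (Fin N) (Fin N) ℂ) (hX : star X = -X)
    (U : Matrix.unitaryGroup (Fin N) ℂ) (s : Multiset ℕ) :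
    HasDerivAt (fun t : ℝ => PP N s (expU X hX t * U)) (dPP s X U) 0 := by
  have := (HasFDerivAt.multiset_prod (u := s) (x := (0:ℝ))
    (g := fun m (t:ℝ) => pw N m (expU X hX t * U)) (fun m _ => (hasDerivAt_pw X hX U m).hasFDerivAt)).hasDerivAt
  refine this.congr_deriv ?_
  rw [← ContinuousLinearMap.apply_apply (𝕜 := ℝ) (1:ℝ), map_multiset_sum, Multiset.map_map]
  unfold dPP PP
  congr 1
  apply Multiset.map_congr rfl
  intro m _
  simp [expU_zero]

lemma dPPc_eq (X : Matrix (Fin N) (Fin N) ℂ) (hX : star X = -X)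
    (U : Matrix.unitaryGroup (Fin N) ℂ) (s : Multiset ℕ) : dPPc s X U = - star (dPP s X U) := by
  unfold dPPc dPP
  rw [← starRingEnd_apply, map_multiset_sum, Multiset.map_map, ← Multiset.sum_map_neg', Multiset.map_map]
  congr 1
  apply Multiset.map_congr rfl
  intro m _
  simp only [Function.comp_apply, map_mul, map_natCast, starRingEnd_apply]
  have : star ((X * (U : Matrix (Fin N) (Fin N) ℂ) ^ m).trace) =
      - (X * star ((U : Matrix (Fin N) (Fin N) ℂ) ^ m)).trace := by
    rw [← Matrix.trace_conjTranspose, Matrix.conjTranspose_mul, ← Matrix.star_eq_conjTranspose,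
      ← Matrix.star_eq_conjTranspose, hX, Matrix.trace_mul_comm]
    simp
  rw [this]
  simp

end

open MeasureTheory Real Filter

section
variable {N : ℕ}

noncomputable def DX (k : ℕ) (i j : Fin N) (s t : Multiset ℕ) (X : Matrix (Fin N) (Fin N) ℂ)
    (U : Matrix.unitaryGroup (Fin N) ℂ) : ℂ :=
  dpow k X (U : Matrix (Fin N) (Fin N) ℂ) i j * PP N s U * star (PP N t U)
    + ((U : Matrix (Fin N) (Fin N) ℂ) ^ k) i j * dPP s X U * star (PP N t U)
    - ((U : Matrix (Fin N) (Fin N) ℂ) ^ k) i j * PP N s U * dPPc t X U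

lemma cont_pow (m : ℕ) : Continuous fun U : Matrix.unitaryGroup (Fin N) ℂ =>
    (U : Matrix (Fin N) (Fin N) ℂ) ^ m := continuous_subtype_val.pow m

lemma cont_pow_entry (m : ℕ) (i j : Fin N) : Continuous fun U : Matrix.unitaryGroup (Fin N) ℂ =>
    ((U : Matrix (Fin N) (Fin N) ℂ) ^ m) i j := (cont_pow m).matrix_elem i j

lemma continuous_DX (k : ℕ) (i j : Fin N) (s t : Multiset ℕ) (X : Matrix (Fin N) (Fin N) ℂ) :
    Continuous (DX k i j s t X) := by
  have h1 : Continuous fun U : Matrix.unitaryGroup (Fin N) ℂ => dpow k X (U : Matrix (Fin N) (Fin N) ℂ) i j := by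
    apply Continuous.matrix_elem
    unfold dpow
    exact continuous_finsetSum _ fun l _ => ((cont_pow l).mul continuous_const).mul (cont_pow _)
  have h2 : Continuous (dPP (N := N) s X) := by
    unfold dPP
    apply continuous_multiset_sum
    intro m _
    exact (continuous_PP _).mul (continuous_const.mul (continuous_const.mul (cont_pow m)).matrix_trace)
  have h3 : Continuous (dPPc (N := N) t X) := by
    unfold dPPc
    apply continuous_multiset_sum
    intro m _
    exact (continuous_PP _).star.mul (continuous_const.mul (continuous_const.mul (cont_pow m).star).matrix_trace)
  have h4 := continuous_PP (N := N) s
  have h5 := (continuous_PP (N := N) t).star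
  have h6 := cont_pow_entry k i j
  exact ((h1.mul h4).mul h5).add ((h6.mul h2).mul h5) |>.sub ((h6.mul h4).mul h3)

lemma DX_add (k : ℕ) (i j : Fin N) (s t : Multiset ℕ) (X Y : Matrix (Fin N) (Fin N) ℂ) 
    (U : Matrix.unitaryGroup (Fin N) ℂ) : DX k i j s t (X + Y) U = DX k i j s t X U + DX k i j s t Y U := by
  have h1 : dpow k (X + Y) (U : Matrix (Fin N) (Fin N) ℂ) = dpow k X U + dpow k Y U := by
    simp [dpow, mul_add, add_mul, Finset.sum_add_distrib]
  have h2 : dPP s (X + Y) U = dPP s X U + dPP s Y U := by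
    simp [dPP, add_mul, mul_add, Multiset.sum_map_add]
  have h3 : dPPc t (X + Y) U = dPPc t X U + dPPc t Y U := by
    simp [dPPc, add_mul, mul_add, Multiset.sum_map_add]
  simp only [DX, h1, h2, h3, Matrix.add_apply]; ring

lemma DX_smul (k : ℕ) (i j : Fin N) (s t : Multiset ℕ) (c : ℂ) (X : Matrix (Fin N) (Fin N) ℂ) 
    (U : Matrix.unitaryGroup (Fin N) ℂ) : DX k i j s t (c • X) U = c * DX k i j s t X U := by
  have h1 : dpow k (c • X) (U : Matrix (Fin N) (Fin N) ℂ) = c • dpow k X U := by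
    simp [dpow, Finset.smul_sum]
  have h2 : dPP s (c • X) U = c * dPP s X U := by
    unfold dPP
    rw [← Multiset.sum_map_mul_left]
    congr 1; apply Multiset.map_congr rfl; intro m _
    simp; ring
  have h3 : dPPc t (c • X) U = c * dPPc t X U := by
    unfold dPPc
    rw [← Multiset.sum_map_mul_left]
    congr 1; apply Multiset.map_congr rfl; intro m _
    simp; ring
  simp only [DX, h1, h2, h3, Matrix.smul_apply, smul_eq_mul]; ring

lemma integral_DX_skew (P : Measure (Matrix.unitaryGroup (Fin N) ℂ))
    [IsFiniteMeasure P] [P.IsMulLeftInvariant] (k : ℕ) (i j : Fin N) (s t : Multiset ℕ)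
    (X : Matrix (Fin N) (Fin N) ℂ) (hX : star X = -X) : ∫ U, DX k i j s t X U ∂P = 0 := by
  apply integral_deriv_zero P X hX (fun U => ((U : Matrix (Fin N) (Fin N) ℂ) ^ k) i j * PP N s U * star (PP N t U))
  · exact ((cont_pow_entry k i j).mul (continuous_PP s)).mul (continuous_PP t).star
  · exact continuous_DX k i j s t X
  · intro U
    have h := ((hasDerivAt_pow_entry X hX U k i j).fun_mul (hasDerivAt_PP X hX U s)).fun_mul (hasDerivAt_PP X hX U t).star
    refine h.congr_deriv ?_
    simp only [expU_zero, one_mul, DX, dPPc_eq X hX]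
    ring

lemma integral_DX (P : Measure (Matrix.unitaryGroup (Fin N) ℂ))
    [IsFiniteMeasure P] [P.IsMulLeftInvariant] (k : ℕ) (i j : Fin N) (s t : Multiset ℕ)
    (X : Matrix (Fin N) (Fin N) ℂ) : ∫ U, DX k i j s t X U ∂P = 0 := by
  have hX : X = (1/2 : ℂ) • (X - star X) + (-Complex.I / 2) • (Complex.I • (X + star X)) := by
    rw [smul_smul]
    have : -Complex.I / 2 * Complex.I = 1 / 2 := by
      have := Complex.I_mul_I
      linear_combination (-1/2) * this
    rw [this, ← smul_add, sub_add_add_cancel, ← two_smul ℂ, smul_smul]; norm_num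
  have hA : star (X - star X) = -(X - star X) := by rw [star_sub, star_star]; abel
  have hB : star (Complex.I • (X + star X)) = -(Complex.I • (X + star X)) := by
    rw [star_smul, star_add, star_star, add_comm (star X) X]; simp [add_comm]
  have iA := integral_DX_skew P k i j s t _ hA
  have iB := integral_DX_skew P k i j s t _ hB
  have cA := continuous_DX k i j s t (X - star X)
  have cB := continuous_DX k i j s t (Complex.I • (X + star X))
  generalize X - star X = A at *
  generalize Complex.I • (X + star X) = B at *
  rw [hX]
  simp only [DX_add, DX_smul]
  rw [integral_add, integral_const_mul, integral_const_mul, iA, iB]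
  · simp
  · exact (integrable_of_cont P cA).const_mul _
  · exact (integrable_of_cont P cB).const_mul _

variable (N) in
/-- power sums as continuous functions -/
noncomputable def pc (k : ℕ) : C(Matrix.unitaryGroup (Fin N) ℂ, ℂ) := ⟨pw N k, continuous_pw N k⟩

variable (N) in
noncomputable def PC (s : Multiset ℕ) : C(Matrix.unitaryGroup (Fin N) ℂ, ℂ) := (s.map (pc N)).prod

variable (N) in
noncomputable def qc (k m : ℕ) : C(Matrix.unitaryGroup (Fin N) ℂ, ℂ) :=
  if m ≤ k then pc N (k - m) else star (pc N (m - k))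

lemma PC_apply (s : Multiset ℕ) (U : Matrix.unitaryGroup (Fin N) ℂ) : PC N s U = PP N s U := by
  unfold PC PP
  have := map_multiset_prod (ContinuousMap.evalAlgHom ℂ ℂ U) (s.map (pc N))
  rw [Multiset.map_map] at this
  exact this

lemma trace_pow_star (k m : ℕ) (U : Matrix.unitaryGroup (Fin N) ℂ) :
    ((U : Matrix (Fin N) (Fin N) ℂ) ^ k * star ((U : Matrix (Fin N) (Fin N) ℂ) ^ m)).trace = qc N k m U := by
  have hm : ∀ m : ℕ, (U : Matrix (Fin N) (Fin N) ℂ) ^ m * star ((U : Matrix (Fin N) (Fin N) ℂ) ^ m) = 1 := fun m =>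
    Matrix.mem_unitaryGroup_iff.1 (U ^ m).2
  unfold qc
  split_ifs with h
  · obtain ⟨d, rfl⟩ := Nat.exists_eq_add_of_le h
    rw [add_comm m d, pow_add, mul_assoc, hm]
    simp [pc, pw]
  · push Not at h
    obtain ⟨d, rfl⟩ := Nat.exists_eq_add_of_le h.le
    rw [pow_add, star_mul, Matrix.trace_mul_comm, mul_assoc]
    have := Matrix.mem_unitaryGroup_iff'.1 (U ^ k).2
    rw [show star ((U : Matrix (Fin N) (Fin N) ℂ) ^ k) * (U : Matrix (Fin N) (Fin N) ℂ) ^ k = 1 from this]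
    rw [Matrix.mul_one, Matrix.star_eq_conjTranspose, Matrix.trace_conjTranspose]
    simp [pc, pw]

/-- expectation as a linear functional -/
noncomputable def EE (P : Measure (Matrix.unitaryGroup (Fin N) ℂ)) [IsFiniteMeasure P] :
    C(Matrix.unitaryGroup (Fin N) ℂ, ℂ) →ₗ[ℂ] ℂ where
  toFun f := ∫ U, f U ∂P
  map_add' f g := by
    simp only [ContinuousMap.add_apply]
    exact integral_add (integrable_of_cont P f.continuous) (integrable_of_cont P g.continuous)
  map_smul' c f := by
    simp only [ContinuousMap.smul_apply, RingHom.id_apply]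
    exact integral_smul c f

lemma EE_star (P : Measure (Matrix.unitaryGroup (Fin N) ℂ)) [IsFiniteMeasure P]
    (f : C(Matrix.unitaryGroup (Fin N) ℂ, ℂ)) : EE P (star f) = star (EE P f) := by
  simp only [EE, LinearMap.coe_mk, AddHom.coe_mk, ContinuousMap.star_apply]
  exact integral_conj

lemma sum_DX (k : ℕ) (s t : Multiset ℕ) (U : Matrix.unitaryGroup (Fin N) ℂ) :
    ∑ i, ∑ j, DX k i j s t (Matrix.single i j 1) U =
     ∑ l ∈ Finset.range k, pw N l U * pw N (k - l) U * PP N s U * star (PP N t U)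
     + (s.map fun m : ℕ => (m : ℂ) * (pw N (k + m) U * PP N (s.erase m) U * star (PP N t U))).sum
     - (t.map fun m : ℕ => (m : ℂ) * (PP N s U * qc N k m U * star (PP N (t.erase m) U))).sum := by
  have h1 : ∑ i, ∑ j, dpow k (Matrix.single i j 1) (U : Matrix (Fin N) (Fin N) ℂ) i j =
      ∑ l ∈ Finset.range k, pw N l U * pw N (k - l) U := by
    unfold dpow
    simp only [Matrix.sum_apply]
    rw [Finset.sum_congr rfl fun i _ => Finset.sum_comm, Finset.sum_comm]
    apply Finset.sum_congr rfl
    intro l _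
    unfold pw Matrix.trace
    rw [Finset.sum_mul_sum]
    apply Finset.sum_congr rfl; intro i _
    apply Finset.sum_congr rfl; intro j _
    rw [Matrix.mul_assoc, Matrix.mul_apply, Finset.sum_eq_single i]
    · simp
    · intro b _ hb
      simp [Matrix.single_mul_apply_of_ne _ _ _ _ _ hb]
    · simp
  have htr : ∀ (k : ℕ) (A : Matrix (Fin N) (Fin N) ℂ),
      ∑ i, ∑ j, ((U : Matrix (Fin N) (Fin N) ℂ) ^ k) i j * (Matrix.single i j 1 * A).trace =
      ((U : Matrix (Fin N) (Fin N) ℂ) ^ k * A).trace := by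
    intro k A
    rw [Matrix.trace]
    apply Finset.sum_congr rfl; intro i _
    rw [Matrix.diag_apply, Matrix.mul_apply]
    apply Finset.sum_congr rfl; intro j _
    rw [Matrix.trace_single_mul]; simp
  have hms : ∀ (s : Multiset ℕ) (F : ℕ → ℂ) (A : ℕ → Matrix (Fin N) (Fin N) ℂ),
      ∑ i, ∑ j, ((U : Matrix (Fin N) (Fin N) ℂ) ^ k) i j *
        (s.map fun m : ℕ => F m * (m * (Matrix.single i j 1 * A m).trace)).sum =
      (s.map fun m : ℕ => F m * (m * ((U : Matrix (Fin N) (Fin N) ℂ) ^ k * A m).trace)).sum := by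
    intro s F A
    induction s using Multiset.induction with
    | empty => simp
    | cons a s ih =>
      simp only [Multiset.map_cons, Multiset.sum_cons, mul_add, Finset.sum_add_distrib, ih]
      congr 1
      rw [← htr, Finset.mul_sum, Finset.mul_sum]
      apply Finset.sum_congr rfl; intro i _
      rw [Finset.mul_sum, Finset.mul_sum]
      apply Finset.sum_congr rfl; intro j _
      ring
  have h2 := hms s (fun m => PP N (s.erase m) U) (fun m => (U : Matrix (Fin N) (Fin N) ℂ) ^ m)
  have h3 := hms t (fun m => star (PP N (t.erase m) U)) (fun m => star ((U : Matrix (Fin N) (Fin N) ℂ) ^ m))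
  have h4 : ∑ i, ∑ j, DX k i j s t (Matrix.single i j 1) U =
      (∑ i, ∑ j, dpow k (Matrix.single i j 1) (U : Matrix (Fin N) (Fin N) ℂ) i j) * (PP N s U * star (PP N t U))
      + (∑ i, ∑ j, ((U : Matrix (Fin N) (Fin N) ℂ) ^ k) i j * dPP s (Matrix.single i j 1) U) * star (PP N t U)
      - (∑ i, ∑ j, ((U : Matrix (Fin N) (Fin N) ℂ) ^ k) i j * dPPc t (Matrix.single i j 1) U) * PP N s U := by
    simp only [Finset.sum_mul, ← Finset.sum_add_distrib, ← Finset.sum_sub_distrib]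
    apply Finset.sum_congr rfl; intro i _
    apply Finset.sum_congr rfl; intro j _
    unfold DX; ring
  rw [h4, h1]
  unfold dPP dPPc
  rw [h2, h3, Finset.sum_mul, ← Multiset.sum_map_mul_right, ← Multiset.sum_map_mul_right]
  congr 1
  · congr 1
    · apply Finset.sum_congr rfl; intro l _; ring
    · congr 1; apply Multiset.map_congr rfl; intro m _
      rw [← pow_add]
      unfold pw; ring
  · congr 1; apply Multiset.map_congr rfl; intro m _
    rw [trace_pow_star]; ring

lemma loop_eq (P : Measure (Matrix.unitaryGroup (Fin N) ℂ))
    [IsFiniteMeasure P] [P.IsMulLeftInvariant] (k : ℕ) (s t : Multiset ℕ) :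
    ∑ l ∈ Finset.range k, EE P (pc N l * pc N (k - l) * PC N s * star (PC N t))
     + (s.map fun m : ℕ => (m : ℂ) * EE P (pc N (k + m) * PC N (s.erase m) * star (PC N t))).sum
     = (t.map fun m : ℕ => (m : ℂ) * EE P (PC N s * qc N k m * star (PC N (t.erase m)))).sum := by
  have h0 : ∫ U, ∑ i, ∑ j, DX k i j s t (Matrix.single i j 1) U ∂P = 0 := by
    rw [integral_finsetSum _ fun i _ => integrable_finsetSum _ fun j _ =>
      integrable_of_cont P (continuous_DX k i j s t _)]
    apply Finset.sum_eq_zero; intro i _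
    rw [integral_finsetSum _ fun j _ => integrable_of_cont P (continuous_DX k i j s t _)]
    apply Finset.sum_eq_zero; intro j _
    exact integral_DX P k i j s t _
  let F : C(Matrix.unitaryGroup (Fin N) ℂ, ℂ) :=
    ∑ l ∈ Finset.range k, (pc N l * pc N (k - l) * PC N s * star (PC N t))
     + (s.map fun m : ℕ => (m : ℂ) • (pc N (k + m) * PC N (s.erase m) * star (PC N t))).sum
     - (t.map fun m : ℕ => (m : ℂ) • (PC N s * qc N k m * star (PC N (t.erase m)))).sum
  have hF : EE P F = 0 := by
    rw [← h0]
    simp only [EE, LinearMap.coe_mk, AddHom.coe_mk]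
    congr 1
    funext U
    rw [sum_DX]
    have hs : ∀ (s : Multiset ℕ) (g : ℕ → C(Matrix.unitaryGroup (Fin N) ℂ, ℂ)),
        (s.map g).sum U = (s.map fun m => g m U).sum := by
      intro s g
      have := map_multiset_sum (ContinuousMap.evalAlgHom ℂ ℂ U) (s.map g)
      rw [Multiset.map_map] at this
      exact this
    simp only [F, ContinuousMap.sub_apply, ContinuousMap.add_apply, hs, ContinuousMap.sum_apply,
      ContinuousMap.mul_apply, ContinuousMap.star_apply, ContinuousMap.smul_apply, PC_apply, smul_eq_mul]
    rfl
  simp only [F, map_sub, map_add, map_sum, map_multiset_sum, Multiset.map_map, Function.comp_def,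
    map_smul, smul_eq_mul] at hF
  exact sub_eq_zero.1 hF
end

open MeasureTheory Real Filter

section
variable {N : ℕ}

lemma multiset_sum_count (s : Multiset ℕ) (K : ℕ) (h : ∀ m ∈ s, m < K) (f : ℕ → ℂ) :
    (s.map f).sum = ∑ m ∈ Finset.range K, (s.count m : ℂ) * f m := by
  rw [Finset.sum_multiset_map_count]
  simp only [nsmul_eq_mul]
  apply Finset.sum_subset
  · intro m hm; simp at hm; simpa using h m hm
  · intro m _ hm
    have : s.count m = 0 := by simpa using hm
    simp [this]

variable (P : Measure (Matrix.unitaryGroup (Fin N) ℂ)) [IsFiniteMeasure P]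

noncomputable def ee (k : ℕ) (s t : Multiset ℕ) : ℂ := EE P (pc N k * PC N s * star (PC N t))

noncomputable def rr (k : ℕ) (s t : Multiset ℕ) : ℂ :=
  (k : ℂ) * t.count k * EE P (PC N s * star (PC N (t.erase k)))

lemma pc_zero : pc N 0 = (N : ℂ) • (1 : C(Matrix.unitaryGroup (Fin N) ℂ, ℂ)) := by
  ext U; simp [pc, pw]

lemma PC_cons (a : ℕ) (s : Multiset ℕ) : PC N (a ::ₘ s) = pc N a * PC N s := by
  simp [PC]

lemma star_step [P.IsMulLeftInvariant] (k : ℕ) (hk : 1 ≤ k) (s t : Multiset ℕ) 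
    (ih : ∀ m ∈ t, k < m → ee P (m - k) (t.erase m) s = rr P (m - k) (t.erase m) s) :
    (N : ℂ) * (ee P k s t - rr P k s t) = 
    - ∑ l ∈ Finset.Ico 1 k, (ee P l ((k - l) ::ₘ s) t - rr P l ((k - l) ::ₘ s) t)
    - (s.map fun m : ℕ => (m : ℂ) * (ee P (k + m) (s.erase m) t - rr P (k + m) (s.erase m) t)).sum := by
  have hloop := loop_eq P k s t
  have h1 : ∑ l ∈ Finset.range k, EE P (pc N l * pc N (k - l) * PC N s * star (PC N t)) =
      N * ee P k s t + ∑ l ∈ Finset.Ico 1 k, ee P l ((k - l) ::ₘ s) t := by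
    rw [Finset.range_eq_Ico, Finset.sum_eq_sum_Ico_succ_bot (by omega)]
    congr 1
    · rw [pc_zero, smul_mul_assoc, smul_mul_assoc, smul_mul_assoc, map_smul]
      simp [ee]
    · apply Finset.sum_congr rfl
      intro l _
      rw [ee, PC_cons, mul_assoc (pc N l)]
  have hs : ∀ m ∈ s, m < s.sum + t.sum + 1 := fun m hm => by
    have := Multiset.single_le_sum (fun x _ => Nat.zero_le x) m hm
    omega
  have ht : ∀ m ∈ t, m < k + (s.sum + t.sum + 1) := fun m hm => by
    have := Multiset.single_le_sum (fun x _ => Nat.zero_le x) m hm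
    omega
  have h2 : (t.map fun m : ℕ => (m : ℂ) * EE P (PC N s * qc N k m * star (PC N (t.erase m)))).sum =
      N * rr P k s t + ∑ l ∈ Finset.Ico 1 k, rr P l ((k - l) ::ₘ s) t + 
      (s.map fun m : ℕ => (m : ℂ) * rr P (k + m) (s.erase m) t).sum := by
    rw [multiset_sum_count t _ ht, multiset_sum_count s _ hs, Finset.sum_range_add, 
      Finset.sum_range_succ' _ (s.sum + t.sum), Finset.sum_range_succ' _ (s.sum + t.sum)]
    have a1 : ∑ m ∈ Finset.range k, (t.count m : ℂ) * ((m : ℂ) * EE P (PC N s * qc N k m * star (PC N (t.erase m))))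
        = ∑ l ∈ Finset.Ico 1 k, rr P l ((k - l) ::ₘ s) t := by
      rw [Finset.range_eq_Ico, Finset.sum_eq_sum_Ico_succ_bot (by omega)]
      simp only [Nat.cast_zero, zero_mul, mul_zero, zero_add]
      apply Finset.sum_congr rfl
      intro l hl
      rw [Finset.mem_Ico] at hl
      rw [rr, PC_cons, qc, if_pos hl.2.le, mul_comm (PC N s)]
      ring
    have a2 : (t.count (k + 0) : ℂ) * (((k + 0 : ℕ) : ℂ) * EE P (PC N s * qc N k (k + 0) * star (PC N (t.erase (k + 0)))))
        = N * rr P k s t := by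
      simp only [add_zero, qc, le_refl, if_true, Nat.sub_self, pc_zero]
      rw [mul_smul_comm, mul_one, smul_mul_assoc, map_smul, rr, smul_eq_mul]
      ring
    rw [a1, a2]
    have a3 : ∑ j ∈ Finset.range (s.sum + t.sum), (t.count (k + (j + 1)) : ℂ) * (((k + (j + 1) : ℕ) : ℂ) *
          EE P (PC N s * qc N k (k + (j + 1)) * star (PC N (t.erase (k + (j + 1)))))) =
        ∑ j ∈ Finset.range (s.sum + t.sum), (s.count (j + 1) : ℂ) * (((j + 1 : ℕ) : ℂ) * 
          rr P (k + (j + 1)) (s.erase (j + 1)) t) := by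
      apply Finset.sum_congr rfl
      intro j _
      by_cases hm : k + (j + 1) ∈ t
      · have := ih _ hm (by omega)
        rw [show k + (j + 1) - k = j + 1 by omega] at this
        have h3 : EE P (PC N s * qc N k (k + (j + 1)) * star (PC N (t.erase (k + (j + 1))))) = 
            star (ee P (j + 1) (t.erase (k + (j + 1))) s) := by
          rw [ee, ← EE_star, qc, if_neg (by omega), show k + (j + 1) - k = j + 1 by omega]
          congr 1
          simp only [star_mul', star_star]; ring
        rw [h3, this, rr, rr]
        simp only [star_mul', star_natCast, ← EE_star, star_star]
        rw [mul_comm (star (PC N (t.erase (k + (j + 1)))))]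
        ring
      · have : t.count (k + (j + 1)) = 0 := by simpa using hm
        simp [rr, this]
    rw [a3]
    simp
    ring
  rw [h1, h2] at hloop
  have h3 : (s.map fun m : ℕ => (m : ℂ) * EE P (pc N (k + m) * PC N (s.erase m) * star (PC N t))).sum = 
     (s.map fun m : ℕ => (m : ℂ) * ee P (k + m) (s.erase m) t).sum := rfl
  rw [h3] at hloop
  simp only [mul_sub, Multiset.sum_map_sub, Finset.sum_sub_distrib]
  linear_combination hloop
end

open MeasureTheory Real Filter

section
variable {N : ℕ}

lemma norm_pw_le (k : ℕ) (U : Matrix.unitaryGroup (Fin N) ℂ) : ‖pw N k U‖ ≤ N := by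
  rw [pw_eq]
  have h := card_eigenAngles N U
  refine (norm_multiset_sum_le _).trans ?_
  rw [Multiset.map_map]
  have : (Multiset.map ((fun x => ‖x‖) ∘ fun x : ℝ => Complex.exp ((k:ℂ) * x * Complex.I)) (eigenAngles N U)) =
      (eigenAngles N U).map (fun _ => (1:ℝ)) := by
    apply Multiset.map_congr rfl
    intro x _
    have := Complex.norm_exp_ofReal_mul_I (k * x)
    push_cast at this
    exact this
  rw [this]
  simp [h]

lemma norm_pc_le (k : ℕ) : ‖pc N k‖ ≤ N :=
  (ContinuousMap.norm_le _ (by positivity)).2 fun U => norm_pw_le k U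

lemma norm_PC_le (s : Multiset ℕ) : ‖PC N s‖ ≤ (N:ℝ) ^ (Multiset.card s) := by
  induction s using Multiset.induction with
  | empty =>
    refine (ContinuousMap.norm_le _ (by positivity)).2 fun U => ?_
    simp [PC]
  | cons a s ih =>
    rw [PC_cons, Multiset.card_cons, pow_succ']
    refine (norm_mul_le _ _).trans ?_
    gcongr
    exact norm_pc_le a

variable (P : Measure (Matrix.unitaryGroup (Fin N) ℂ)) [IsProbabilityMeasure P]

lemma norm_EE_le (f : C(Matrix.unitaryGroup (Fin N) ℂ, ℂ)) : ‖EE P f‖ ≤ ‖f‖ := by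
  have := norm_integral_le_of_norm_le_const (μ := P) (f := fun U => f U) (C := ‖f‖)
    (Eventually.of_forall fun U => f.norm_coe_le_norm U)
  simpa [EE] using this

lemma card_le_sum_of_pos (s : Multiset ℕ) (h : 0 ∉ s) : Multiset.card s ≤ s.sum := by
  induction s using Multiset.induction with
  | empty => simp
  | cons a s ih =>
    simp only [Multiset.mem_cons, not_or] at h
    have := ih h.2
    simp only [Multiset.card_cons, Multiset.sum_cons]
    omega

lemma sum_erase_add {s : Multiset ℕ} {m : ℕ} (h : m ∈ s) : m + (s.erase m).sum = s.sum := by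
  conv_rhs => rw [← Multiset.cons_erase h]
  simp

lemma not_mem_erase {s : Multiset ℕ} {m : ℕ} (h : 0 ∉ s) : 0 ∉ s.erase m :=
  fun hh => h (Multiset.mem_of_mem_erase hh)

lemma delta_bound (hN : 1 ≤ N) (d : ℕ) (t : Multiset ℕ) : ∃ C : ℝ, 0 ≤ C ∧ ∀ k s, 0 ∉ s → k + s.sum = d →
    ‖ee P k s t - rr P k s t‖ ≤ C := by
  have hN' : (1:ℝ) ≤ N := by exact_mod_cast hN
  refine ⟨N * N ^ d * N ^ (Multiset.card t) + d * Multiset.card t * (N ^ d * N ^ (Multiset.card t)), by positivity, ?_⟩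
  intro k s hs hd
  have hcard : Multiset.card s ≤ d := (card_le_sum_of_pos s hs).trans (by omega)
  refine (norm_sub_le _ _).trans ?_
  gcongr
  · refine (norm_EE_le P _).trans ((norm_mul_le _ _).trans ?_)
    rw [norm_star]
    gcongr
    · refine (norm_mul_le _ _).trans ?_
      gcongr
      · exact norm_pc_le k
      · exact (norm_PC_le s).trans (pow_le_pow_right₀ hN' hcard)
    · exact norm_PC_le t
  · rw [rr, norm_mul, norm_mul, Complex.norm_natCast, Complex.norm_natCast]
    gcongr
    · omega
    · exact Multiset.count_le_card _ _
    · refine (norm_EE_le P _).trans ((norm_mul_le _ _).trans ?_)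
      rw [norm_star]
      gcongr
      · exact (norm_PC_le s).trans (pow_le_pow_right₀ hN' hcard)
      · exact (norm_PC_le _).trans (pow_le_pow_right₀ hN' (Multiset.card_le_card (Multiset.erase_le _ _)))

theorem star_id [P.IsMulLeftInvariant] (n : ℕ) : ∀ (k : ℕ) (s t : Multiset ℕ), 1 ≤ k → 0 ∉ s → 0 ∉ t →
    k + s.sum ≤ N → t.sum ≤ N → k + s.sum + t.sum = n → ee P k s t = rr P k s t := by
  induction n using Nat.strong_induction_on with
  | _ n IH =>
  intro k s t hk hs ht hks htN hn
  obtain ⟨d, hd⟩ : ∃ d, k + s.sum = d := ⟨_, rfl⟩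
  have hN : 1 ≤ N := by omega
  obtain ⟨C, hC0, hC⟩ := delta_bound P hN d t
  have hNpos : (0:ℝ) < N := by exact_mod_cast hN
  set r : ℝ := ((d:ℝ) - 1) / N with hr
  have hd1 : (1:ℝ) ≤ d := by exact_mod_cast (show 1 ≤ d by omega)
  have hr0 : 0 ≤ r := div_nonneg (by linarith) hNpos.le
  have hr1 : r < 1 := by
    rw [hr, div_lt_one hNpos]
    have : (d:ℝ) ≤ N := by exact_mod_cast (show d ≤ N by omega)
    linarith
  have key : ∀ j : ℕ, ∀ k s, 1 ≤ k → 0 ∉ s → k + s.sum = d →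
      ‖ee P k s t - rr P k s t‖ ≤ r ^ j * C := by
    intro j
    induction j with
    | zero => intro k s _ hs hd; simpa using hC k s hs hd
    | succ j ihj =>
      intro k s hk hs hd'
      have hstep := star_step P k hk s t (by
        intro m hm hkm
        have hsum := sum_erase_add hm
        exact IH _ (by omega) (m - k) (t.erase m) s (by omega) (not_mem_erase ht) hs (by omega) (by omega) rfl)
      have hnorm : (N:ℝ) * ‖ee P k s t - rr P k s t‖ ≤ ((d:ℝ) - 1) * (r ^ j * C) := by
        have e1 : (N:ℝ) * ‖ee P k s t - rr P k s t‖ = ‖(N:ℂ) * (ee P k s t - rr P k s t)‖ := by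
          rw [norm_mul, Complex.norm_natCast]
        rw [e1, hstep]
        refine (norm_sub_le _ _).trans ?_
        rw [norm_neg]
        have b1 : ‖∑ l ∈ Finset.Ico 1 k, (ee P l ((k - l) ::ₘ s) t - rr P l ((k - l) ::ₘ s) t)‖ ≤
            ((k:ℝ) - 1) * (r ^ j * C) := by
          refine (norm_sum_le_of_le (f := fun l => (ee P l ((k - l) ::ₘ s) t - rr P l ((k - l) ::ₘ s) t))
            (n := fun _ => r ^ j * C) _ ?_).trans ?_
          · intro l hl
            rw [Finset.mem_Ico] at hl
            apply ihj
            · exact hl.1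
            · simp only [Multiset.mem_cons, not_or]; exact ⟨by omega, hs⟩
            · rw [Multiset.sum_cons]; omega
          · rw [Finset.sum_const, Nat.card_Ico, nsmul_eq_mul, Nat.cast_sub hk, Nat.cast_one]
        have b2 : ‖(s.map fun m : ℕ => (m : ℂ) * (ee P (k + m) (s.erase m) t - rr P (k + m) (s.erase m) t)).sum‖ ≤
            (s.sum : ℝ) * (r ^ j * C) := by
          refine (norm_multiset_sum_le _).trans ?_
          rw [Multiset.map_map]
          have : (s.sum : ℝ) * (r ^ j * C) = (s.map (fun m : ℕ => (m:ℝ) * (r ^ j * C))).sum := by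
            rw [Multiset.sum_map_mul_right, Nat.cast_multiset_sum]
          rw [this]
          apply Multiset.sum_map_le_sum_map
          intro m hm
          simp only [Function.comp_apply, norm_mul, Complex.norm_natCast]
          have hsum := sum_erase_add hm
          gcongr
          exact ihj _ _ (by omega) (not_mem_erase hs) (by omega)
        refine (add_le_add b1 b2).trans (le_of_eq ?_)
        rw [← add_mul, ← hd']
        push_cast; ring
      have : ‖ee P k s t - rr P k s t‖ ≤ (((d:ℝ) - 1) * (r ^ j * C)) / N := by
        rw [le_div_iff₀ hNpos]; linarith
      refine this.trans (le_of_eq ?_)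
      rw [pow_succ, hr]; ring
  have hlim : Tendsto (fun j : ℕ => r ^ j * C) atTop (nhds (0 * C)) :=
    (tendsto_pow_atTop_nhds_zero_of_lt_one hr0 hr1).mul_const C
  rw [zero_mul] at hlim
  have h0 : ‖ee P k s t - rr P k s t‖ ≤ 0 := ge_of_tendsto' hlim fun j => key j k s hk hs hd
  exact sub_eq_zero.1 (norm_le_zero_iff.1 h0)
end

open MeasureTheory Real Filter

section
variable {N : ℕ}

/-- monomial attached to a multiset of indices -/
noncomputable def mon (s : Multiset ℕ) : MvPolynomial ℕ ℂ := (s.map MvPolynomial.X).prod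

lemma mon_cons (a : ℕ) (s : Multiset ℕ) : mon (a ::ₘ s) = MvPolynomial.X a * mon s := by simp [mon]

lemma mon_add (s t : Multiset ℕ) : mon (s + t) = mon s * mon t := by simp [mon]

lemma pderiv_mon (k : ℕ) (s : Multiset ℕ) :
    MvPolynomial.pderiv k (mon s) = (s.count k : ℂ) • mon (s.erase k) := by
  induction s using Multiset.induction with
  | empty => simp [mon]
  | cons a s ih =>
    rw [mon_cons, Derivation.leibniz, ih, MvPolynomial.pderiv_X]
    by_cases h : a = k
    · subst h
      simp only [Pi.single_eq_same, Multiset.count_cons_self, Multiset.erase_cons_head, smul_eq_mul, mul_one]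
      by_cases hs : a ∈ s
      · have : MvPolynomial.X a * mon (s.erase a) = mon s := by rw [← mon_cons, Multiset.cons_erase hs]
        rw [mul_smul_comm, this]; push_cast; rw [add_smul, one_smul]
      · simp [hs]
    · rw [Multiset.count_cons_of_ne (Ne.symm h), Multiset.erase_cons_tail _ h, mon_cons]
      simp [h]

/-- polynomials of weighted degree at most `d` -/
noncomputable def WW (d : ℕ) : Submodule ℂ (MvPolynomial ℕ ℂ) :=
  Submodule.span ℂ (mon '' {s | 0 ∉ s ∧ s.sum ≤ d})

lemma WW_mono {d e : ℕ} (h : d ≤ e) : WW d ≤ WW e :=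
  Submodule.span_mono (Set.image_mono fun _ hs => ⟨hs.1, hs.2.trans h⟩)

lemma WW_mul {d e : ℕ} {f g : MvPolynomial ℕ ℂ} (hf : f ∈ WW d) (hg : g ∈ WW e) : f * g ∈ WW (d + e) := by
  have h : WW d * WW e ≤ WW (d + e) := by
    unfold WW
    rw [Submodule.span_mul_span]
    apply Submodule.span_mono
    rintro _ ⟨_, ⟨s, hs, rfl⟩, _, ⟨t, ht, rfl⟩, rfl⟩
    refine ⟨s + t, ⟨?_, ?_⟩, mon_add s t⟩
    · simp [hs.1, ht.1]
    · rw [Multiset.sum_add]; exact add_le_add hs.2 ht.2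
  exact h (Submodule.mul_mem_mul hf hg)

lemma WW_one (d : ℕ) : (1 : MvPolynomial ℕ ℂ) ∈ WW d :=
  Submodule.subset_span ⟨0, by simp, by simp [mon]⟩

lemma WW_X {k d : ℕ} (hk : 1 ≤ k) (h : k ≤ d) : (MvPolynomial.X k : MvPolynomial ℕ ℂ) ∈ WW d :=
  Submodule.subset_span ⟨{k}, by simp; omega, by simp [mon]⟩

variable (N) in
noncomputable def ev : MvPolynomial ℕ ℂ →ₐ[ℂ] C(Matrix.unitaryGroup (Fin N) ℂ, ℂ) :=
  MvPolynomial.aeval (pc N)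

lemma ev_mon (s : Multiset ℕ) : ev N (mon s) = PC N s := by
  unfold ev mon PC
  rw [map_multiset_prod, Multiset.map_map]
  simp

lemma ev_X (k : ℕ) : ev N (MvPolynomial.X k) = pc N k := by simp [ev]

variable (P : Measure (Matrix.unitaryGroup (Fin N) ℂ)) [IsProbabilityMeasure P]

/-- the sesquilinear form -/
noncomputable def ip (f g : MvPolynomial ℕ ℂ) : ℂ := EE P (ev N f * star (ev N g))

lemma ip_add_left (f g h : MvPolynomial ℕ ℂ) : ip P (f + g) h = ip P f h + ip P g h := by
  simp [ip, add_mul]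
lemma ip_add_right (f g h : MvPolynomial ℕ ℂ) : ip P h (f + g) = ip P h f + ip P h g := by
  simp [ip, mul_add]
lemma ip_smul_left (c : ℂ) (f h : MvPolynomial ℕ ℂ) : ip P (c • f) h = c * ip P f h := by
  simp [ip]
lemma ip_smul_right (c : ℂ) (f h : MvPolynomial ℕ ℂ) : ip P h (c • f) = star c * ip P h f := by
  simp [ip]
lemma ip_zero_right (h : MvPolynomial ℕ ℂ) : ip P h 0 = 0 := by simp [ip]
lemma ip_zero_left (h : MvPolynomial ℕ ℂ) : ip P 0 h = 0 := by simp [ip]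
lemma ip_star (f g : MvPolynomial ℕ ℂ) : star (ip P f g) = ip P g f := by
  rw [ip, ← EE_star, ip, star_mul', star_star, mul_comm]
lemma ip_sum_left {ι : Type*} (s : Finset ι) (f : ι → MvPolynomial ℕ ℂ) (h : MvPolynomial ℕ ℂ) :
    ip P (∑ i ∈ s, f i) h = ∑ i ∈ s, ip P (f i) h := by
  simp [ip, Finset.sum_mul]
lemma ip_sum_right {ι : Type*} (s : Finset ι) (f : ι → MvPolynomial ℕ ℂ) (h : MvPolynomial ℕ ℂ) :
    ip P h (∑ i ∈ s, f i) = ∑ i ∈ s, ip P h (f i) := by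
  simp [ip, Finset.mul_sum]

lemma ibp_X [P.IsMulLeftInvariant] {k d : ℕ} (hk : 1 ≤ k) (hd : k + d ≤ N) {f g : MvPolynomial ℕ ℂ}
    (hf : f ∈ WW d) (hg : g ∈ WW N) :
    ip P (MvPolynomial.X k * f) g = k * ip P f (MvPolynomial.pderiv k g) := by
  unfold WW at hf hg
  induction hf using Submodule.span_induction with
  | zero => simp [ip_zero_left]
  | add f f' _ _ h1 h2 => rw [mul_add, ip_add_left, h1, h2, ip_add_left]; ring
  | smul c f _ h1 => rw [mul_smul_comm, ip_smul_left, h1, ip_smul_left]; ring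
  | mem f hf =>
  induction hg using Submodule.span_induction with
  | zero => simp [ip_zero_right]
  | add f f' _ _ h1 h2 => rw [map_add, ip_add_right, h1, h2, ip_add_right]; ring
  | smul c f _ h1 => rw [Derivation.map_smul, ip_smul_right, h1, ip_smul_right]; ring
  | mem g hg =>
  obtain ⟨s, hs, rfl⟩ := hf
  obtain ⟨t, ht, rfl⟩ := hg
  have := star_id P _ k s t hk hs.1 ht.1 (by have := hs.2; omega) ht.2 rfl
  rw [pderiv_mon, ip_smul_right]
  unfold ip
  rw [map_mul (ev N), ev_X, ev_mon, ev_mon, ev_mon]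
  rw [ee, rr] at this
  rw [this]; simp; ring

/-- linear form -/
noncomputable def lf (F : Finset ℕ) (c : ℕ → ℂ) : MvPolynomial ℕ ℂ := ∑ k ∈ F, c k • MvPolynomial.X k

/-- adjoint derivation of `lf F c` -/
noncomputable def DD (F : Finset ℕ) (c : ℕ → ℂ) : Derivation ℂ (MvPolynomial ℕ ℂ) (MvPolynomial ℕ ℂ) :=
  ∑ k ∈ F, (star (c k) * k) • MvPolynomial.pderiv k

lemma DD_apply (F : Finset ℕ) (c : ℕ → ℂ) (g : MvPolynomial ℕ ℂ) :
    DD F c g = ∑ k ∈ F, (star (c k) * k) • MvPolynomial.pderiv k g := by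
  unfold DD
  rw [← Derivation.coeFnAddMonoidHom_apply, map_sum, Finset.sum_apply]
  rfl

lemma ibp_lf [P.IsMulLeftInvariant] {F : Finset ℕ} (c : ℕ → ℂ) {m d : ℕ} (hF : ∀ k ∈ F, 1 ≤ k ∧ k ≤ m)
    (hd : m + d ≤ N) {f g : MvPolynomial ℕ ℂ} (hf : f ∈ WW d) (hg : g ∈ WW N) :
    ip P (lf F c * f) g = ip P f (DD F c g) := by
  rw [lf, Finset.sum_mul, ip_sum_left, DD_apply, ip_sum_right]
  apply Finset.sum_congr rfl
  intro k hk
  rw [smul_mul_assoc, ip_smul_left, ibp_X P (hF k hk).1 (by have := (hF k hk).2; omega) hf hg, ip_smul_right]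
  simp
  ring

lemma pderiv_lf (k : ℕ) (F : Finset ℕ) (c : ℕ → ℂ) :
    MvPolynomial.pderiv k (lf F c) = (if k ∈ F then c k else 0) • (1 : MvPolynomial ℕ ℂ) := by
  rw [lf, map_sum]
  simp only [Derivation.map_smul, MvPolynomial.pderiv_X]
  split_ifs with h
  · rw [Finset.sum_eq_single k]
    · simp
    · intro b _ hb; simp [Pi.single_apply, hb.symm]
    · intro h'; exact absurd h h'
  · rw [zero_smul]
    apply Finset.sum_eq_zero
    intro b hb
    have : b ≠ k := fun e => h (e ▸ hb)
    simp [Pi.single_apply, this.symm]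

lemma DD_lf_same (F : Finset ℕ) (c c' : ℕ → ℂ) :
    DD F c (lf F c') = (∑ k ∈ F, (k:ℂ) * star (c k) * c' k) • (1 : MvPolynomial ℕ ℂ) := by
  rw [DD_apply, Finset.sum_smul]
  apply Finset.sum_congr rfl
  intro k hk
  rw [pderiv_lf, if_pos hk, smul_smul]
  congr 1; ring

lemma DD_lf_disj {F F' : Finset ℕ} (h : Disjoint F F') (c c' : ℕ → ℂ) :
    DD F c (lf F' c') = 0 := by
  rw [DD_apply]
  apply Finset.sum_eq_zero
  intro k hk
  rw [pderiv_lf, if_neg (Finset.disjoint_left.1 h hk)]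
  simp

lemma WW_lf {F : Finset ℕ} (c : ℕ → ℂ) {m : ℕ} (hF : ∀ k ∈ F, 1 ≤ k ∧ k ≤ m) : lf F c ∈ WW m :=
  Submodule.sum_mem _ fun k hk => Submodule.smul_mem _ _ (WW_X (hF k hk).1 (hF k hk).2)
end

open MeasureTheory Real Filter

section
variable {N : ℕ} (P : Measure (Matrix.unitaryGroup (Fin N) ℂ)) [IsProbabilityMeasure P]

/-- covariance of two linear forms -/
noncomputable def cov (F : Finset ℕ) (c c' : ℕ → ℂ) : ℂ := ∑ k ∈ F, (k:ℂ) * star (c k) * c' k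

lemma cov_star (F : Finset ℕ) (c c' : ℕ → ℂ) : star (cov F c c') = cov F c' c := by
  unfold cov
  rw [star_sum]
  apply Finset.sum_congr rfl
  intro k _
  simp only [star_mul', star_natCast, star_star]; ring

lemma DD_lf_mul (F : Finset ℕ) (c c' : ℕ → ℂ) (g : MvPolynomial ℕ ℂ) :
    DD F c (lf F c' * g) = lf F c' * DD F c g + cov F c c' • g := by
  rw [Derivation.leibniz, DD_lf_same, smul_eq_mul, smul_eq_mul, mul_smul_comm, mul_one]; rfl

structure Blk (N : ℕ) (F : Finset ℕ) (c c' : ℕ → ℂ) (m e : ℕ) (g : MvPolynomial ℕ ℂ) : Prop where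
  hF : ∀ k ∈ F, 1 ≤ k ∧ k ≤ m
  hN : 2 * m + e ≤ N
  hg : g ∈ WW e
  hD : DD F c g = 0
  hD' : DD F c' g = 0

variable {F : Finset ℕ} {c c' : ℕ → ℂ} {m e : ℕ} {g : MvPolynomial ℕ ℂ}

lemma Blk.symm (h : Blk N F c c' m e g) : Blk N F c' c m e g := ⟨h.hF, h.hN, h.hg, h.hD', h.hD⟩
lemma Blk.diag (h : Blk N F c c' m e g) : Blk N F c c m e g := ⟨h.hF, h.hN, h.hg, h.hD, h.hD⟩

lemma Blk.mem1 (h : Blk N F c c' m e g) : lf F c * g ∈ WW (m + e) := WW_mul (WW_lf c h.hF) h.hg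

lemma Blk.i10 [P.IsMulLeftInvariant] (h : Blk N F c c' m e g) : ip P (lf F c * g) g = 0 := by
  have := h.hN
  rw [ibp_lf P c h.hF (d := e) (by omega) h.hg (WW_mono (by omega) h.hg), h.hD, ip_zero_right]

lemma Blk.i01 [P.IsMulLeftInvariant] (h : Blk N F c c' m e g) : ip P g (lf F c * g) = 0 := by
  rw [← ip_star, h.i10 P, star_zero]

lemma Blk.i12 [P.IsMulLeftInvariant] (h : Blk N F c c' m e g) :
    ip P (lf F c * g) (lf F c' * g) = star (cov F c c') * ip P g g := by
  have := h.hN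
  rw [ibp_lf P c h.hF (d := e) (by omega) h.hg (WW_mono (by omega) h.symm.mem1), DD_lf_mul, h.hD, mul_zero,
    zero_add, ip_smul_right]

/-- pairing with the quadratic element -/
lemma Blk.i3 [P.IsMulLeftInvariant] (h : Blk N F c c' m e g) {f : MvPolynomial ℕ ℂ} (hf : f ∈ WW N) :
    ip P (lf F c * (lf F c' * g)) f = ip P (lf F c' * g) (DD F c f) := by
  have := h.hN
  rw [ibp_lf P c h.hF (d := m + e) (by omega) h.symm.mem1 hf]

lemma Blk.i30 [P.IsMulLeftInvariant] (h : Blk N F c c' m e g) :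
    ip P (lf F c * (lf F c' * g)) g = 0 := by
  have := h.hN
  rw [h.i3 P (WW_mono (by omega) h.hg), h.hD, ip_zero_right]

lemma Blk.i31 [P.IsMulLeftInvariant] (h : Blk N F c c' m e g) :
    ip P (lf F c * (lf F c' * g)) (lf F c * g) = 0 := by
  have := h.hN
  rw [h.i3 P (WW_mono (by omega) h.mem1), DD_lf_mul, h.hD, mul_zero, zero_add, ip_smul_right, h.symm.i10 P, mul_zero]

lemma Blk.i32 [P.IsMulLeftInvariant] (h : Blk N F c c' m e g) :
    ip P (lf F c * (lf F c' * g)) (lf F c' * g) = 0 := by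
  have := h.hN
  rw [h.i3 P (WW_mono (by omega) h.symm.mem1), DD_lf_mul, h.hD, mul_zero, zero_add, ip_smul_right, h.symm.i10 P, mul_zero]

lemma Blk.mem3 (h : Blk N F c c' m e g) : lf F c * (lf F c' * g) ∈ WW N := by
  have := h.hN
  exact WW_mono (by omega) (WW_mul (WW_lf c h.hF) h.symm.mem1)

lemma Blk.i33 [P.IsMulLeftInvariant] (h : Blk N F c c' m e g) :
    ip P (lf F c * (lf F c' * g)) (lf F c * (lf F c' * g)) =
      (star (cov F c c') * cov F c c' + star (cov F c c) * star (cov F c' c')) * ip P g g := by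
  rw [h.i3 P h.mem3, DD_lf_mul, DD_lf_mul, h.hD, mul_zero, zero_add, mul_smul_comm, ip_add_right, ip_smul_right,
    ip_smul_right, h.symm.i12 P, h.symm.diag.i12 P, cov_star, cov_star, cov_star]
  ring

lemma Blk.norm1 [P.IsMulLeftInvariant] (h : Blk N F c c' m e g) (β : ℂ) :
    ip P ((1 + β • lf F c) * g) ((1 + β • lf F c) * g) = (1 + β * star β * star (cov F c c)) * ip P g g := by
  have e1 : (1 + β • lf F c) * g = g + β • (lf F c * g) := by rw [add_mul, one_mul, smul_mul_assoc]
  rw [e1]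
  simp only [ip_add_left, ip_add_right, ip_smul_left, ip_smul_right, h.i10 P, h.i01 P, h.diag.i12 P]
  ring

lemma Blk.norm2 [P.IsMulLeftInvariant] (h : Blk N F c c' m e g) (β : ℂ) :
    ip P ((1 + β • lf F c) * ((1 + β • lf F c') * g)) ((1 + β • lf F c) * ((1 + β • lf F c') * g)) =
      (1 + β * star β * (star (cov F c c) + star (cov F c' c') + cov F c c' + star (cov F c c')) +
        (β * star β) ^ 2 * (star (cov F c c') * cov F c c' + star (cov F c c) * star (cov F c' c'))) * ip P g g := by
  have e1 : (1 + β • lf F c) * ((1 + β • lf F c') * g) =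
      g + β • (lf F c * g) + β • (lf F c' * g) + (β * β) • (lf F c * (lf F c' * g)) := by
    simp only [Algebra.smul_def, map_mul]; ring
  have i03 := congrArg star (h.i30 P)
  have i13 := congrArg star (h.i31 P)
  have i23 := congrArg star (h.i32 P)
  rw [ip_star, star_zero] at i03 i13 i23
  rw [e1]
  simp only [ip_add_left, ip_add_right, ip_smul_left, ip_smul_right, h.i10 P, h.i01 P, h.symm.i10 P, h.symm.i01 P,
    h.diag.i12 P, h.symm.diag.i12 P, h.i12 P, h.symm.i12 P, h.i30 P, h.i31 P, h.i32 P, h.i33 P, i03, i13, i23, star_mul',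
    cov_star]
  ring

lemma Blk.mean [P.IsMulLeftInvariant] (h : Blk N F c c' m e g) (β : ℂ) :
    ip P (lf F c * ((1 + β • lf F c) * g)) ((1 + β • lf F c) * g) = star β * star (cov F c c) * ip P g g := by
  have e1 : (1 + β • lf F c) * g = g + β • (lf F c * g) := by rw [add_mul, one_mul, smul_mul_assoc]
  rw [e1, mul_add, mul_smul_comm]
  simp only [ip_add_left, ip_add_right, ip_smul_left, ip_smul_right, h.i10 P, h.diag.i12 P, h.diag.i30 P, h.diag.i31 P]
  ring

lemma Blk.second [P.IsMulLeftInvariant] (h : Blk N F c c' m e g) (β : ℂ) :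
    ip P (lf F c * ((1 + β • lf F c) * g)) (lf F c * ((1 + β • lf F c) * g)) =
     (star (cov F c c) + β * star β * (star (cov F c c) * cov F c c + star (cov F c c) * star (cov F c c))) * ip P g g := by
  have e1 : lf F c * ((1 + β • lf F c) * g) = lf F c * g + β • (lf F c * (lf F c * g)) := by
    rw [add_mul, one_mul, smul_mul_assoc, mul_add, mul_smul_comm]
  have i13 := congrArg star (h.diag.i31 P)
  rw [ip_star, star_zero] at i13
  rw [e1]
  simp only [ip_add_left, ip_add_right, ip_smul_left, ip_smul_right, h.diag.i12 P, h.diag.i31 P, h.diag.i33 P, i13]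
  ring
end

open MeasureTheory Real Filter

section
variable {N : ℕ} (P : Measure (Matrix.unitaryGroup (Fin N) ℂ)) [IsProbabilityMeasure P]

def blk (b : ℕ) : Finset ℕ := Finset.Ico (2 ^ b) (2 ^ (b + 1))

lemma blk_bd (b : ℕ) : ∀ k ∈ blk b, 1 ≤ k ∧ k ≤ 2 ^ (b + 1) := by
  intro k hk
  rw [blk, Finset.mem_Ico] at hk
  exact ⟨Nat.one_le_two_pow.trans hk.1, hk.2.le⟩

lemma blk_disj {a b : ℕ} (h : a ≠ b) : Disjoint (blk a) (blk b) := by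
  have key : ∀ a b : ℕ, a < b → Disjoint (blk a) (blk b) := by
    intro a b h
    rw [Finset.disjoint_left]
    intro k h1 h2
    rw [blk, Finset.mem_Ico] at h1 h2
    have := Nat.pow_le_pow_right (n := 2) (by norm_num) (show a + 1 ≤ b from h)
    omega
  rcases lt_or_gt_of_ne h with h | h
  · exact key a b h
  · exact (key b a h).symm

noncomputable def hh (c : ℕ → ℂ) (β : ℂ) (S : Finset ℕ) : MvPolynomial ℕ ℂ :=
  ∏ b ∈ S, (1 + β • lf (blk b) c)

def wt (S : Finset ℕ) : ℕ := ∑ b ∈ S, 2 ^ (b + 1)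

lemma wt_le {S : Finset ℕ} {B : ℕ} (h : S ⊆ Finset.range B) : 2 * wt S ≤ 2 ^ (B + 2) := by
  have h1 : wt S ≤ ∑ b ∈ Finset.range B, 2 ^ (b + 1) := Finset.sum_le_sum_of_subset h
  have h2 : ∀ B : ℕ, ∑ b ∈ Finset.range B, 2 ^ (b + 1) ≤ 2 ^ (B + 1) := by
    intro B
    induction B with
    | zero => simp
    | succ B ih => rw [Finset.sum_range_succ, pow_succ 2 (B + 1)]; omega
  have := h2 B
  rw [pow_succ 2 (B + 1)]; omega

lemma hh_insert (c : ℕ → ℂ) (β : ℂ) {S : Finset ℕ} {b : ℕ} (h : b ∉ S) :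
    hh c β (insert b S) = (1 + β • lf (blk b) c) * hh c β S := Finset.prod_insert h

lemma wt_insert {S : Finset ℕ} {b : ℕ} (h : b ∉ S) : wt (insert b S) = 2 ^ (b + 1) + wt S := Finset.sum_insert h

lemma hh_mem (c : ℕ → ℂ) (β : ℂ) (S : Finset ℕ) : hh c β S ∈ WW (wt S) := by
  induction S using Finset.induction_on with
  | empty => simpa [hh] using WW_one _
  | insert b S h ih =>
    rw [hh_insert c β h, wt_insert h]
    exact WW_mul (Submodule.add_mem _ (WW_one _) (Submodule.smul_mem _ _ (WW_lf c (blk_bd b)))) ih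

lemma hh_D (c c' : ℕ → ℂ) (β : ℂ) (S : Finset ℕ) {b : ℕ} (hb : b ∉ S) : DD (blk b) c' (hh c β S) = 0 := by
  induction S using Finset.induction_on with
  | empty => simp [hh]
  | insert a S h ih =>
    rw [Finset.mem_insert, not_or] at hb
    rw [hh_insert c β h, Derivation.leibniz, ih hb.2, map_add, Derivation.map_smul, DD_lf_disj (blk_disj hb.1)]
    simp

/-- squared `L²` norm -/
noncomputable def nn (f : MvPolynomial ℕ ℂ) : ℝ := ∫ U, ‖ev N f U‖ ^ 2 ∂P

lemma nn_nonneg (f : MvPolynomial ℕ ℂ) : 0 ≤ nn P f := integral_nonneg fun U => by positivity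

lemma ip_self (f : MvPolynomial ℕ ℂ) : ip P f f = (nn P f : ℂ) := by
  unfold ip nn EE
  simp only [LinearMap.coe_mk, AddHom.coe_mk, ContinuousMap.mul_apply, ContinuousMap.star_apply]
  rw [← integral_complex_ofReal]
  congr 1
  funext U
  rw [← starRingEnd_apply, Complex.mul_conj, Complex.normSq_eq_norm_sq]

lemma nn_one : nn P 1 = 1 := by simp [nn]

variable [P.IsMulLeftInvariant] {c c' : ℕ → ℂ} {β : ℂ} {α : ℝ} {v : ℕ → ℝ} {B : ℕ}

lemma blkOf {S : Finset ℕ} {b : ℕ} (hN : 2 * wt (insert b S) ≤ N) (hb : b ∉ S) (c : ℕ → ℂ) (β : ℂ) :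
    Blk N (blk b) c c (2 ^ (b + 1)) (wt S) (hh c β S) := by
  rw [wt_insert hb] at hN
  exact ⟨blk_bd b, by omega, hh_mem c β S, hh_D c c β S hb, hh_D c c β S hb⟩

lemma nn_hh (hα : β * star β = (α:ℂ)) (hc : ∀ b, cov (blk b) c c = (v b : ℂ)) (S : Finset ℕ) (hN : 2 * wt S ≤ N) :
    nn P (hh c β S) = ∏ b ∈ S, (1 + α * v b) := by
  induction S using Finset.induction_on with
  | empty => simp [hh, nn_one]
  | insert b S hb ih =>
    have h1 := (blkOf hN hb c β).norm1 P β
    have hle : 2 * wt S ≤ N := by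
      rw [wt_insert hb] at hN
      exact (Nat.mul_le_mul_left 2 (Nat.le_add_left _ _)).trans hN
    rw [← hh_insert c β hb, ip_self, ip_self, hα, hc, ih hle] at h1
    rw [Finset.prod_insert hb]
    have h2 : star (v b : ℂ) = (v b : ℂ) := Complex.conj_ofReal _
    rw [h2] at h1
    exact_mod_cast h1

lemma nn_hh_mul (hα : β * star β = (α:ℂ)) (hα0 : 0 ≤ α) (hv : ∀ b, 0 ≤ v b)
    (hc : ∀ b, cov (blk b) c c = (v b : ℂ)) (hc' : ∀ b, cov (blk b) c' c' = (v b : ℂ))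
    (S : Finset ℕ) (hN : 2 * wt S ≤ N) :
    nn P (hh c β S * hh c' β S) ≤ ∏ b ∈ S, ((1 + α * v b) ^ 2 * (1 + α * ‖cov (blk b) c c'‖) ^ 2) := by
  induction S using Finset.induction_on with
  | empty => simp [hh, nn_one]
  | insert b S hb ih =>
    have hle : 2 * wt S ≤ N := by
      rw [wt_insert hb] at hN
      exact (Nat.mul_le_mul_left 2 (Nat.le_add_left _ _)).trans hN
    have hblk : Blk N (blk b) c c' (2 ^ (b + 1)) (wt S + wt S) (hh c β S * hh c' β S) := by
      rw [wt_insert hb] at hN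
      refine ⟨blk_bd b, by omega, WW_mul (hh_mem c β S) (hh_mem c' β S), ?_, ?_⟩
      · rw [Derivation.leibniz, hh_D c c β S hb, hh_D c' c β S hb]; simp
      · rw [Derivation.leibniz, hh_D c c' β S hb, hh_D c' c' β S hb]; simp
    have h1 := hblk.norm2 P β
    have e1 : (1 + β • lf (blk b) c) * ((1 + β • lf (blk b) c') * (hh c β S * hh c' β S)) =
        hh c β (insert b S) * hh c' β (insert b S) := by
      rw [hh_insert c β hb, hh_insert c' β hb]; ring
    have h2 : star (v b : ℂ) = (v b : ℂ) := Complex.conj_ofReal _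
    rw [e1, ip_self, ip_self, hα, hc, hc', h2] at h1
    set K := cov (blk b) c c' with hK
    have h3 : star K * K = ((‖K‖ ^ 2 : ℝ) : ℂ) := by
      rw [mul_comm, ← starRingEnd_apply, Complex.mul_conj, Complex.normSq_eq_norm_sq]
    have h4 : (v b : ℂ) + v b + K + star K = ((2 * v b + 2 * K.re : ℝ) : ℂ) := by
      have := Complex.add_conj K
      rw [starRingEnd_apply] at this
      rw [add_assoc, this]; push_cast; ring
    rw [h3, h4] at h1
    have h5 : nn P (hh c β (insert b S) * hh c' β (insert b S)) =
      (1 + α * (2 * v b + 2 * K.re) + α ^ 2 * (‖K‖ ^ 2 + v b * v b)) * nn P (hh c β S * hh c' β S) := by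
      exact_mod_cast h1
    rw [h5, Finset.prod_insert hb]
    refine mul_le_mul ?_ (ih hle) (nn_nonneg P _) (by positivity)
    have hre : K.re ≤ ‖K‖ := Complex.re_le_norm K
    have hn : 0 ≤ ‖K‖ := norm_nonneg K
    have hvb := hv b
    rw [← hK]
    have k1 : α * K.re ≤ α * ‖K‖ := mul_le_mul_of_nonneg_left hre hα0
    have k2 : 0 ≤ α * v b := by positivity
    have k3 : 0 ≤ α * ‖K‖ := by positivity
    have k4 : (1:ℝ) ≤ (1 + α * v b) ^ 2 := by nlinarith
    have k5 : (0:ℝ) ≤ 2 * (α * ‖K‖) + (α * ‖K‖) ^ 2 := by positivity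
    nlinarith [mul_le_mul_of_nonneg_right k4 k5]

lemma mean_hh (hα : β * star β = (α:ℂ)) (hc : ∀ b, cov (blk b) c c = (v b : ℂ)) {S : Finset ℕ}
    (hN : 2 * wt S ≤ N) {b : ℕ} (hb : b ∈ S) :
    ip P (lf (blk b) c * hh c β S) (hh c β S) = star β * v b * ((∏ a ∈ S.erase b, (1 + α * v a) : ℝ) : ℂ) := by
  have hS : insert b (S.erase b) = S := Finset.insert_erase hb
  have hb' : b ∉ S.erase b := Finset.notMem_erase b S
  rw [← hS] at hN
  have h1 := (blkOf hN hb' c β).mean P β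
  have hle : 2 * wt (S.erase b) ≤ N := by
    rw [wt_insert hb'] at hN
    exact (Nat.mul_le_mul_left 2 (Nat.le_add_left _ _)).trans hN
  have h2 : star (v b : ℂ) = (v b : ℂ) := Complex.conj_ofReal _
  rw [← hh_insert c β hb', hS, ip_self, nn_hh P hα hc _ hle, hc, h2] at h1
  exact h1

lemma second_hh (hα : β * star β = (α:ℂ)) (hc : ∀ b, cov (blk b) c c = (v b : ℂ)) {S : Finset ℕ}
    (hN : 2 * wt S ≤ N) {b : ℕ} (hb : b ∈ S) :
    nn P (lf (blk b) c * hh c β S) = (v b + 2 * α * v b ^ 2) * ∏ a ∈ S.erase b, (1 + α * v a) := by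
  have hS : insert b (S.erase b) = S := Finset.insert_erase hb
  have hb' : b ∉ S.erase b := Finset.notMem_erase b S
  rw [← hS] at hN
  have h1 := (blkOf hN hb' c β).second P β
  have hle : 2 * wt (S.erase b) ≤ N := by
    rw [wt_insert hb'] at hN
    exact (Nat.mul_le_mul_left 2 (Nat.le_add_left _ _)).trans hN
  have h2 : star (v b : ℂ) = (v b : ℂ) := Complex.conj_ofReal _
  rw [← hh_insert c β hb', hS, ip_self, ip_self, nn_hh P hα hc _ hle, hc, h2, hα] at h1
  have h3 : nn P (lf (blk b) c * hh c β S) = (v b + α * (v b * v b + v b * v b)) * ∏ a ∈ S.erase b, (1 + α * v a) := by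
    exact_mod_cast h1
  rw [h3]; ring
end

open MeasureTheory Real Filter

section

/-- Parseval identity over roots of unity (as an inequality-free identity). -/
lemma parseval_roots {m : ℕ} {ζ : ℂ} (hζ : IsPrimitiveRoot ζ m) (hm : 0 < m) (F : Finset ℕ)
    (hF : ∀ k ∈ F, k < m) (a : ℕ → ℂ) :
    ∑ l ∈ Finset.range m, ‖∑ k ∈ F, a k * (ζ ^ l) ^ k‖ ^ 2 = m * ∑ k ∈ F, ‖a k‖ ^ 2 := by
  have hn : ‖ζ‖ = 1 := hζ.norm'_eq_one hm.ne'
  have h0 : ζ ≠ 0 := by rintro rfl; simp at hn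
  have hc : star ζ = ζ⁻¹ := by
    rw [Complex.inv_def, Complex.normSq_eq_norm_sq, hn]; simp
  have hgeo : ∀ k ∈ F, ∀ k' ∈ F, ∑ l ∈ Finset.range m, (ζ ^ l) ^ k * star ((ζ ^ l) ^ k') =
      if k = k' then (m:ℂ) else 0 := by
    intro k hk k' hk'
    have e : ∀ l, (ζ ^ l) ^ k * star ((ζ ^ l) ^ k') = (ζ ^ k * (ζ⁻¹) ^ k') ^ l := by
      intro l
      rw [star_pow, star_pow, hc, mul_pow]
      congr 1
      · rw [← pow_mul, ← pow_mul, mul_comm]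
      · rw [← pow_mul, ← pow_mul, mul_comm]
    simp_rw [e]
    by_cases h : k = k'
    · subst h
      rw [if_pos rfl, ← mul_pow, mul_inv_cancel₀ h0]; simp
    · rw [if_neg h]
      have hne : ζ ^ k * (ζ⁻¹) ^ k' ≠ 1 := by
        intro h1
        apply h
        refine hζ.pow_inj (hF k hk) (hF k' hk') ?_
        rw [inv_pow] at h1
        exact (mul_inv_eq_one₀ (pow_ne_zero _ h0)).1 h1
      rw [geom_sum_eq hne]
      have : (ζ ^ k * (ζ⁻¹) ^ k') ^ m = 1 := by
        rw [mul_pow, ← pow_mul, ← pow_mul, mul_comm k, mul_comm k', pow_mul, pow_mul, inv_pow, hζ.pow_eq_one]; simp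
      rw [this]; simp
  have key : ((∑ l ∈ Finset.range m, ‖∑ k ∈ F, a k * (ζ ^ l) ^ k‖ ^ 2 : ℝ) : ℂ) = ((m * ∑ k ∈ F, ‖a k‖ ^ 2 : ℝ):ℂ) := by
    have hsq : ∀ z : ℂ, ((‖z‖ ^ 2 : ℝ) : ℂ) = z * star z := by
      intro z
      rw [← starRingEnd_apply, Complex.mul_conj, Complex.normSq_eq_norm_sq]
    rw [Complex.ofReal_mul, Complex.ofReal_sum, Complex.ofReal_sum]
    simp_rw [hsq, star_sum, Finset.sum_mul_sum]
    rw [Finset.sum_comm]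
    rw [Complex.ofReal_natCast, Finset.mul_sum]
    refine Finset.sum_congr rfl fun k hk => ?_
    rw [Finset.sum_comm]
    have : ∀ k' ∈ F, ∑ l ∈ Finset.range m, a k * (ζ ^ l) ^ k * star (a k' * (ζ ^ l) ^ k') =
        if k = k' then (m:ℂ) * (a k * star (a k')) else 0 := by
      intro k' hk'
      have := hgeo k hk k' hk'
      calc _ = a k * star (a k') * ∑ l ∈ Finset.range m, (ζ ^ l) ^ k * star ((ζ ^ l) ^ k') := by
            rw [Finset.mul_sum]
            refine Finset.sum_congr rfl fun l _ => ?_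
            rw [star_mul']; ring
        _ = _ := by rw [this]; split_ifs <;> ring
    rw [Finset.sum_congr rfl this, Finset.sum_ite_eq, if_pos hk]
  exact_mod_cast key

/-- the Fejér type coefficients -/
noncomputable def cw (n : ℕ) (k : ℕ) : ℝ := (1 - (k:ℝ) / n) / k

noncomputable def cc (n : ℕ) (ω : ℂ) (k : ℕ) : ℂ := (cw n k : ℂ) * ω ^ k

noncomputable def vv (n b : ℕ) : ℝ := ∑ k ∈ blk b, k * cw n k ^ 2

lemma vv_nonneg (n b : ℕ) : 0 ≤ vv n b := Finset.sum_nonneg fun k _ => by positivity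

lemma cov_cc (n : ℕ) {ω : ℂ} (hω : ‖ω‖ = 1) (b : ℕ) : cov (blk b) (cc n ω) (cc n ω) = (vv n b : ℂ) := by
  unfold cov vv cc
  push_cast
  refine Finset.sum_congr rfl fun k _ => ?_
  have h1 : star (ω ^ k) * ω ^ k = 1 := by
    rw [mul_comm, ← starRingEnd_apply, Complex.mul_conj, Complex.normSq_eq_norm_sq, norm_pow, hω]; simp
  have h2 : star (cw n k : ℂ) = cw n k := Complex.conj_ofReal _
  rw [star_mul', h2]
  linear_combination (k:ℂ) * (cw n k:ℂ) ^ 2 * h1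

lemma cw_bd {B b k : ℕ} (hb : b < B) (hk : k ∈ blk b) :
    0 ≤ (k:ℝ) * cw (2 ^ B) k ^ 2 ∧ (k:ℝ) * cw (2 ^ B) k ^ 2 ≤ (1/2) ^ b := by
  refine ⟨by positivity, ?_⟩
  rw [blk, Finset.mem_Ico] at hk
  have h1 : (2:ℝ) ^ b ≤ k := by exact_mod_cast hk.1
  have h2 : k < 2 ^ B := hk.2.trans_le (Nat.pow_le_pow_right (by norm_num) hb)
  have h3 : (k:ℝ) < 2 ^ B := by exact_mod_cast h2
  have hpos : (0:ℝ) < 2 ^ b := by positivity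
  have hk0 : (0:ℝ) < k := hpos.trans_le h1
  have h4 : 0 ≤ 1 - (k:ℝ) / 2 ^ B := by
    rw [sub_nonneg, div_le_one (by positivity)]; exact h3.le
  have h5 : 1 - (k:ℝ) / 2 ^ B ≤ 1 := by
    have : 0 ≤ (k:ℝ) / 2 ^ B := by positivity
    linarith
  have e : (k:ℝ) * cw (2 ^ B) k ^ 2 = (1 - (k:ℝ) / 2 ^ B) ^ 2 / k := by
    unfold cw; push_cast; field_simp
  rw [e, one_div, inv_pow, ← one_div]
  exact div_le_div₀ (by norm_num) (by nlinarith) hpos h1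

lemma card_blk (b : ℕ) : (blk b).card = 2 ^ b := by
  rw [blk, Nat.card_Ico, pow_succ]; omega

lemma vv_le {B b : ℕ} (hb : b < B) : vv (2 ^ B) b ≤ 1 := by
  have : vv (2 ^ B) b ≤ (blk b).card • ((1/2:ℝ) ^ b) := Finset.sum_le_card_nsmul _ _ _ fun k hk => (cw_bd hb hk).2
  rw [card_blk, nsmul_eq_mul] at this
  refine this.trans (le_of_eq ?_)
  push_cast
  rw [← mul_pow]; norm_num

lemma vv_ge {B b : ℕ} (hb : b + 2 ≤ B) : 1 / 8 ≤ vv (2 ^ B) b := by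
  have h : (blk b).card • ((1/8:ℝ) * (1/2) ^ b) ≤ vv (2 ^ B) b := by
    refine Finset.card_nsmul_le_sum _ _ _ fun k hk => ?_
    rw [blk, Finset.mem_Ico] at hk
    have h1 : (2:ℝ) ^ b ≤ k := by exact_mod_cast hk.1
    have h2 : (k:ℝ) ≤ 2 ^ b * 2 := by rw [← pow_succ]; exact_mod_cast hk.2.le
    have h3 : (2:ℝ) ^ b * 4 ≤ 2 ^ B := by
      have := pow_le_pow_right₀ (a := (2:ℝ)) (by norm_num) hb
      rw [pow_add] at this; linarith
    have hpos : (0:ℝ) < 2 ^ b := by positivity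
    have hk0 : (0:ℝ) < k := hpos.trans_le h1
    have h4 : (k:ℝ) / 2 ^ B ≤ 1 / 2 := by
      rw [div_le_div_iff₀ (by positivity) (by norm_num)]; linarith
    have e : (k:ℝ) * cw (2 ^ B) k ^ 2 = (1 - (k:ℝ) / 2 ^ B) ^ 2 / k := by
      unfold cw; push_cast; field_simp
    rw [e, le_div_iff₀ hk0, one_div, one_div, inv_pow]
    have h5 : (1/4:ℝ) ≤ (1 - (k:ℝ) / 2 ^ B) ^ 2 := by nlinarith
    have h6 : ((2:ℝ) ^ b)⁻¹ * k ≤ 2 := by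
      rw [inv_mul_le_iff₀ hpos]; exact h2
    linarith
  rw [card_blk, nsmul_eq_mul] at h
  refine le_trans (le_of_eq ?_) h
  push_cast
  have : (2:ℝ) ^ b * (1/2) ^ b = 1 := by rw [← mul_pow]; norm_num
  linear_combination (-1/8) * this

/-- the coefficient sequence of a covariance -/
noncomputable def ak (n : ℕ) (ω : ℂ) (k : ℕ) : ℂ := ((k * cw n k ^ 2 : ℝ) : ℂ) * star (ω ^ k)

lemma norm_ak (n : ℕ) {ω : ℂ} (hω : ‖ω‖ = 1) (k : ℕ) : ‖ak n ω k‖ = k * cw n k ^ 2 := by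
  unfold ak
  rw [norm_mul, Complex.norm_real, norm_star, norm_pow, hω, one_pow, mul_one, Real.norm_of_nonneg (by positivity)]

lemma cov_eq (n b : ℕ) (ω ω' : ℂ) : cov (blk b) (cc n ω) (cc n ω') = ∑ k ∈ blk b, ak n ω k * ω' ^ k := by
  unfold cov cc ak
  refine Finset.sum_congr rfl fun k _ => ?_
  have h2 : star (cw n k : ℂ) = cw n k := Complex.conj_ofReal _
  rw [star_mul', h2]; push_cast; ring

lemma cov_le {B b : ℕ} (hb : b < B) {ω ω' : ℂ} (hω : ‖ω‖ = 1) (hω' : ‖ω'‖ = 1) :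
    ‖cov (blk b) (cc (2 ^ B) ω) (cc (2 ^ B) ω')‖ ≤ 1 := by
  rw [cov_eq]
  refine (norm_sum_le _ _).trans ((Finset.sum_le_sum fun k _ => ?_).trans (vv_le hb))
  rw [norm_mul, norm_ak _ hω, norm_pow, hω', one_pow, mul_one]

lemma cov_avg {B b : ℕ} (hb : b < B) {ω ζ : ℂ} (hω : ‖ω‖ = 1) (hζ : IsPrimitiveRoot ζ (2 ^ B)) :
    ∑ l ∈ Finset.range (2 ^ B), ‖cov (blk b) (cc (2 ^ B) ω) (cc (2 ^ B) (ζ ^ l))‖ ^ 2 ≤ 2 ^ B * (1/2) ^ b := by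
  simp_rw [cov_eq]
  rw [parseval_roots hζ (by positivity) (blk b)]
  · push_cast
    refine mul_le_mul_of_nonneg_left ?_ (by positivity)
    have : ∑ k ∈ blk b, ‖ak (2 ^ B) ω k‖ ^ 2 ≤ (blk b).card • (((1/2:ℝ) ^ b) ^ 2) := by
      refine Finset.sum_le_card_nsmul _ _ _ fun k hk => ?_
      rw [norm_ak _ hω]
      exact pow_le_pow_left₀ (cw_bd hb hk).1 (cw_bd hb hk).2 2
    refine this.trans (le_of_eq ?_)
    rw [card_blk, nsmul_eq_mul]
    push_cast
    have : (2:ℝ) ^ b * (1/2) ^ b = 1 := by rw [← mul_pow]; norm_num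
    linear_combination (1/2) ^ b * this
  · intro k hk
    rw [blk, Finset.mem_Ico] at hk
    exact hk.2.trans_le (Nat.pow_le_pow_right (by norm_num) hb)

lemma prod_le_aux (B : ℕ) (x : ℕ → ℝ) (hx : ∀ b < B, 0 ≤ x b ∧ x b ≤ 1) :
    ∏ b ∈ Finset.range B, (1 + 1/4 * x b) ≤ 1 + ∑ b ∈ Finset.range B, 1/4 * (5/4) ^ b * x b ∧
    ∏ b ∈ Finset.range B, (1 + 1/4 * x b) ≤ (5/4) ^ B := by
  induction B with
  | zero => simp
  | succ B ih =>
    obtain ⟨h1, h2⟩ := ih fun b hb => hx b (by omega)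
    obtain ⟨h3, h4⟩ := hx B (by omega)
    rw [Finset.prod_range_succ, Finset.sum_range_succ]
    have hp : 0 ≤ ∏ b ∈ Finset.range B, (1 + 1/4 * x b) := Finset.prod_nonneg fun b hb => by
      have := (hx b (by rw [Finset.mem_range] at hb; omega)).1
      linarith
    constructor
    · nlinarith [mul_le_mul_of_nonneg_right h2 h3]
    · rw [pow_succ]
      exact mul_le_mul h2 (by linarith) (by linarith) (by positivity)

lemma geom_sum_le_inv (B : ℕ) (q : ℝ) (h0 : 0 ≤ q) (h1 : q < 1) : ∑ b ∈ Finset.range B, q ^ b ≤ (1 - q)⁻¹ := by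
  rw [← tsum_geometric_of_lt_one h0 h1]
  exact (summable_geometric_of_lt_one h0 h1).sum_le_tsum _ fun i _ => by positivity

lemma prod_sq_le (B : ℕ) (x : ℕ → ℝ) (hx : ∀ b < B, 0 ≤ x b ∧ x b ≤ 1) :
    (∏ b ∈ Finset.range B, (1 + 1/4 * x b)) ^ 2 ≤ 2 + ∑ b ∈ Finset.range B, (25/14) ^ b * x b ^ 2 := by
  have h := (prod_le_aux B x hx).1
  have hp : 0 ≤ ∏ b ∈ Finset.range B, (1 + 1/4 * x b) := Finset.prod_nonneg fun b hb => by
      have := (hx b (by rw [Finset.mem_range] at hb; omega)).1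
      linarith
  set s := ∑ b ∈ Finset.range B, 1/4 * (5/4) ^ b * x b with hs
  have hcs : s ^ 2 ≤ (∑ b ∈ Finset.range B, (7/8:ℝ) ^ b) * ∑ b ∈ Finset.range B, 1/16 * (25/14) ^ b * x b ^ 2 := by
    refine Finset.sum_sq_le_sum_mul_sum_of_sq_le_mul _ (fun b _ => by positivity) (fun b _ => by positivity) fun b _ => le_of_eq ?_
    have : (7/8:ℝ) ^ b * (25/14) ^ b = (5/4) ^ b * (5/4) ^ b := by rw [← mul_pow, ← mul_pow]; norm_num
    linear_combination (-1/16) * x b ^ 2 * this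
  have hg := geom_sum_le_inv B (7/8) (by norm_num) (by norm_num)
  set w := ∑ b ∈ Finset.range B, (25/14) ^ b * x b ^ 2 with hw
  have e : ∑ b ∈ Finset.range B, 1/16 * (25/14) ^ b * x b ^ 2 = 1/16 * w := by
    rw [hw, Finset.mul_sum]; exact Finset.sum_congr rfl fun b _ => by ring
  have hw0 : 0 ≤ w := Finset.sum_nonneg fun b _ => by positivity
  rw [e] at hcs
  have h3 : s ^ 2 ≤ 8 * (1/16 * w) := hcs.trans (mul_le_mul_of_nonneg_right (by norm_num at hg ⊢; exact hg) (by positivity))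
  nlinarith [sq_nonneg (1 - s)]

lemma prod_avg {B : ℕ} {ω ζ : ℂ} (hω : ‖ω‖ = 1) (hζ : IsPrimitiveRoot ζ (2 ^ B)) :
    ∑ l ∈ Finset.range (2 ^ B), (∏ b ∈ Finset.range B, (1 + 1/4 * ‖cov (blk b) (cc (2 ^ B) ω) (cc (2 ^ B) (ζ ^ l))‖)) ^ 2
      ≤ 2 ^ B * 12 := by
  have hn : ‖ζ‖ = 1 := hζ.norm'_eq_one (by positivity)
  calc _ ≤ ∑ l ∈ Finset.range (2 ^ B), (2 + ∑ b ∈ Finset.range B, (25/14) ^ b * ‖cov (blk b) (cc (2 ^ B) ω) (cc (2 ^ B) (ζ ^ l))‖ ^ 2) := by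
        refine Finset.sum_le_sum fun l _ => prod_sq_le B _ fun b hb => ⟨norm_nonneg _, cov_le hb hω ?_⟩
        rw [norm_pow, hn, one_pow]
    _ = 2 ^ B * 2 + ∑ b ∈ Finset.range B, (25/14) ^ b * ∑ l ∈ Finset.range (2 ^ B), ‖cov (blk b) (cc (2 ^ B) ω) (cc (2 ^ B) (ζ ^ l))‖ ^ 2 := by
        rw [Finset.sum_add_distrib, Finset.sum_comm]
        simp [Finset.mul_sum]
    _ ≤ 2 ^ B * 2 + ∑ b ∈ Finset.range B, (25/14) ^ b * (2 ^ B * (1/2) ^ b) := by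
        gcongr with b hb
        exact cov_avg (Finset.mem_range.1 hb) hω hζ
    _ = 2 ^ B * (2 + ∑ b ∈ Finset.range B, (25/28:ℝ) ^ b) := by
        rw [mul_add, Finset.mul_sum]
        congr 1
        refine Finset.sum_congr rfl fun b _ => ?_
        have : (25/14:ℝ) ^ b * (1/2) ^ b = (25/28) ^ b := by rw [← mul_pow]; norm_num
        rw [← this]; ring
    _ ≤ _ := by
        refine mul_le_mul_of_nonneg_left ?_ (by positivity)
        have := geom_sum_le_inv B (25/28) (by norm_num) (by norm_num)
        norm_num at this
        linarith
end

open MeasureTheory Real Filter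

section
variable {N : ℕ}

noncomputable def YY (B : ℕ) (ω : ℂ) : MvPolynomial ℕ ℂ := ∑ b ∈ Finset.range B, lf (blk b) (cc (2 ^ B) ω)

noncomputable def hB (B : ℕ) (ω : ℂ) : MvPolynomial ℕ ℂ := hh (cc (2 ^ B) ω) (-(Complex.I / 2)) (Finset.range B)

noncomputable def HB (B : ℕ) : ℝ := ∏ b ∈ Finset.range B, (1 + 1/4 * vv (2 ^ B) b)

lemma HB_pos (B : ℕ) : 0 < HB B := Finset.prod_pos fun b _ => by
  have := vv_nonneg (2 ^ B) b
  linarith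

lemma sum_blk {M : Type*} [AddCommMonoid M] (f : ℕ → M) (B : ℕ) :
    ∑ b ∈ Finset.range B, ∑ k ∈ blk b, f k = ∑ k ∈ Finset.Ico 1 (2 ^ B), f k := by
  induction B with
  | zero => simp
  | succ B ih =>
    rw [Finset.sum_range_succ, ih, blk, Finset.sum_Ico_consecutive _ Nat.one_le_two_pow (Nat.pow_le_pow_right (by norm_num) (by omega))]

lemma ev_YY (B : ℕ) (ω : ℂ) (U : Matrix.unitaryGroup (Fin N) ℂ) : ev N (YY B ω) U =
    ∑ k ∈ Finset.Ico (1:ℕ) (2 ^ B), (((1 - (k : ℝ) / ((2 ^ B : ℕ) : ℝ)) / k : ℝ) : ℂ) * ω ^ k * pw N k U := by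
  rw [← sum_blk]
  unfold YY lf
  simp only [map_sum, map_smul, ev_X, ContinuousMap.coe_sum, Finset.sum_apply, ContinuousMap.coe_smul, Pi.smul_apply, smul_eq_mul]
  rfl

lemma im_YY_le (hN : 1 ≤ N) (B : ℕ) {ω : ℂ} (hω : ‖ω‖ = 1) (U : Matrix.unitaryGroup (Fin N) ℂ) :
    (ev N (YY B ω) U).im ≤ 2 * π * N * dK N U := by
  rw [ev_YY]; exact im_stat_le N hN U _ ω hω

variable (P : Measure (Matrix.unitaryGroup (Fin N) ℂ)) [IsProbabilityMeasure P] [P.IsMulLeftInvariant]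

lemma beta_sq : (-(Complex.I / 2)) * star (-(Complex.I / 2)) = (((1/4 : ℝ)) : ℂ) := by
  rw [← starRingEnd_apply, Complex.mul_conj, Complex.normSq_eq_norm_sq]
  norm_num

lemma hBwt {B : ℕ} (hBN : 2 ^ (B + 2) ≤ N) : 2 * wt (Finset.range B) ≤ N := (wt_le subset_rfl).trans hBN

lemma nn_hB {B : ℕ} (hBN : 2 ^ (B + 2) ≤ N) {ω : ℂ} (hω : ‖ω‖ = 1) : nn P (hB B ω) = HB B :=
  nn_hh P beta_sq (cov_cc _ hω) _ (hBwt hBN)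

lemma erase_eq {B b : ℕ} (hb : b ∈ Finset.range B) :
    (1 + 1/4 * vv (2 ^ B) b) * ∏ a ∈ (Finset.range B).erase b, (1 + 1/4 * vv (2 ^ B) a) = HB B :=
  Finset.mul_prod_erase _ (fun b => 1 + 1/4 * vv (2 ^ B) b) hb

lemma mean_B {B : ℕ} (h2 : 2 ≤ B) (hBN : 2 ^ (B + 2) ≤ N) {ω : ℂ} (hω : ‖ω‖ = 1) :
    (B:ℝ) / 40 * HB B ≤ ∫ U, ‖ev N (hB B ω) U‖ ^ 2 * (ev N (YY B ω) U).im ∂P := by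
  have e1 : ∫ U, ‖ev N (hB B ω) U‖ ^ 2 * (ev N (YY B ω) U).im ∂P = (ip P (YY B ω * hB B ω) (hB B ω)).im := by
    unfold ip EE
    simp only [LinearMap.coe_mk, AddHom.coe_mk]
    have hi : Integrable (fun U => (ev N (YY B ω * hB B ω) * star (ev N (hB B ω))) U) P :=
      integrable_of_cont P (ContinuousMap.continuous _)
    have := integral_im hi
    simp only [RCLike.im_eq_complex_im] at this
    rw [← this]
    congr 1
    funext U
    simp only [ContinuousMap.mul_apply, ContinuousMap.star_apply, map_mul]
    rw [mul_assoc, ← starRingEnd_apply, Complex.mul_conj, Complex.normSq_eq_norm_sq, Complex.im_mul_ofReal, mul_comm]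
  rw [e1]
  unfold YY
  rw [Finset.sum_mul, ip_sum_left, Complex.im_sum]
  have e2 : ∀ b ∈ Finset.range B, (ip P (lf (blk b) (cc (2 ^ B) ω) * hB B ω) (hB B ω)).im =
      1/2 * vv (2 ^ B) b * ∏ a ∈ (Finset.range B).erase b, (1 + 1/4 * vv (2 ^ B) a) := by
    intro b hb
    unfold hB
    rw [mean_hh P beta_sq (cov_cc _ hω) (hBwt hBN) hb]
    have : star (-(Complex.I / 2)) = Complex.I * ((1/2:ℝ):ℂ) := by
      have h : -(Complex.I / 2) = -Complex.I * ((1/2:ℝ):ℂ) := by push_cast; ring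
      rw [h, star_mul', Complex.star_def, Complex.conj_ofReal, map_neg, Complex.conj_I, neg_neg]
    rw [this, mul_assoc, mul_assoc, ← Complex.ofReal_mul, ← Complex.ofReal_mul, Complex.im_mul_ofReal, Complex.I_im]
    ring
  rw [Finset.sum_congr rfl e2]
  have hE : ∀ b ∈ Finset.range B, 0 ≤ ∏ a ∈ (Finset.range B).erase b, (1 + 1/4 * vv (2 ^ B) a) := fun b _ =>
    Finset.prod_nonneg fun a _ => by
      have := vv_nonneg (2 ^ B) a
      linarith
  have hH := HB_pos B
  have hsub : Finset.range (B - 1) ⊆ Finset.range B := Finset.range_subset_range.2 (by omega)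
  calc (B:ℝ) / 40 * HB B ≤ (B - 1) * (1/20 * HB B) := by
        have : (2:ℝ) ≤ B := by exact_mod_cast h2
        nlinarith
    _ = ∑ b ∈ Finset.range (B - 1), 1/20 * HB B := by
        rw [Finset.sum_const, Finset.card_range, nsmul_eq_mul, Nat.cast_sub (by omega)]; simp
    _ ≤ ∑ b ∈ Finset.range (B - 1), 1/2 * vv (2 ^ B) b * ∏ a ∈ (Finset.range B).erase b, (1 + 1/4 * vv (2 ^ B) a) := by
        refine Finset.sum_le_sum fun b hb => ?_
        have h3 := erase_eq (hsub hb)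
        have h4 := hE b (hsub hb)
        rw [Finset.mem_range] at hb
        have h5 := vv_ge (B := B) (b := b) (by omega)
        have h6 := vv_le (B := B) (b := b) (by omega)
        rw [← h3, ← mul_assoc]
        refine mul_le_mul_of_nonneg_right ?_ h4
        linarith
    _ ≤ _ := Finset.sum_le_sum_of_subset_of_nonneg hsub fun b hb _ => by
        have := vv_nonneg (2 ^ B) b
        have := hE b hb
        positivity

lemma second_B {B : ℕ} (hBN : 2 ^ (B + 2) ≤ N) {ω : ℂ} (hω : ‖ω‖ = 1) :
    ∫ U, ‖ev N (hB B ω) U‖ ^ 2 * (ev N (YY B ω) U).im ^ 2 ∂P ≤ 2 * (B:ℝ) ^ 2 * HB B := by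
  have hH := HB_pos B
  calc _ ≤ ∫ U, B * ∑ b ∈ Finset.range B, ‖ev N (lf (blk b) (cc (2 ^ B) ω) * hB B ω) U‖ ^ 2 ∂P := by
        refine integral_mono (integrable_of_cont_real P (by fun_prop)) (integrable_of_cont_real P (by fun_prop)) fun U => ?_
        simp only [map_mul, ContinuousMap.mul_apply, norm_mul, mul_pow]
        rw [← Finset.sum_mul, ← mul_assoc, mul_comm]
        refine mul_le_mul_of_nonneg_right ?_ (by positivity)
        have h1 : (ev N (YY B ω) U).im ^ 2 ≤ ‖ev N (YY B ω) U‖ ^ 2 := by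
          rw [← sq_abs]
          exact pow_le_pow_left₀ (abs_nonneg _) (Complex.abs_im_le_norm _) 2
        have h2 : ‖ev N (YY B ω) U‖ ≤ ∑ b ∈ Finset.range B, ‖ev N (lf (blk b) (cc (2 ^ B) ω)) U‖ := by
          unfold YY
          rw [map_sum, ContinuousMap.coe_sum, Finset.sum_apply]
          exact norm_sum_le _ _
        have h3 := sq_sum_le_card_mul_sum_sq (s := Finset.range B) (f := fun b => ‖ev N (lf (blk b) (cc (2 ^ B) ω)) U‖)
        rw [Finset.card_range] at h3
        exact h1.trans ((pow_le_pow_left₀ (norm_nonneg _) h2 2).trans h3)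
    _ = B * ∑ b ∈ Finset.range B, nn P (lf (blk b) (cc (2 ^ B) ω) * hB B ω) := by
        rw [integral_const_mul, integral_finsetSum]
        · rfl
        · exact fun b _ => integrable_of_cont_real P (by fun_prop)
    _ ≤ B * ∑ b ∈ Finset.range B, 2 * HB B := by
        refine mul_le_mul_of_nonneg_left (Finset.sum_le_sum fun b hb => ?_) (by positivity)
        unfold hB
        rw [second_hh P beta_sq (cov_cc _ hω) (hBwt hBN) hb, ← erase_eq hb, ← mul_assoc]
        have h5 := vv_nonneg (2 ^ B) b
        have h6 := vv_le (Finset.mem_range.1 hb)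
        refine mul_le_mul_of_nonneg_right (by nlinarith) (Finset.prod_nonneg fun a _ => ?_)
        have := vv_nonneg (2 ^ B) a
        linarith
    _ = _ := by
        rw [Finset.sum_const, Finset.card_range, nsmul_eq_mul]; ring

lemma pair_B {B : ℕ} (hBN : 2 ^ (B + 2) ≤ N) {ω ω' : ℂ} (hω : ‖ω‖ = 1) (hω' : ‖ω'‖ = 1) :
    ∫ U, ‖ev N (hB B ω) U‖ ^ 2 * ‖ev N (hB B ω') U‖ ^ 2 ∂P ≤
      HB B ^ 2 * (∏ b ∈ Finset.range B, (1 + 1/4 * ‖cov (blk b) (cc (2 ^ B) ω) (cc (2 ^ B) ω')‖)) ^ 2 := by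
  have h := nn_hh_mul P beta_sq (by norm_num) (vv_nonneg (2 ^ B)) (cov_cc _ hω) (cov_cc _ hω') (Finset.range B) (hBwt hBN)
  rw [Finset.prod_mul_distrib, Finset.prod_pow, Finset.prod_pow] at h
  refine le_trans (le_of_eq ?_) h
  unfold nn
  congr 1
  funext U
  rw [map_mul, ContinuousMap.mul_apply, norm_mul, mul_pow]; rfl

lemma Z2_B {B : ℕ} (hBN : 2 ^ (B + 2) ≤ N) {ζ : ℂ} (hζ : IsPrimitiveRoot ζ (2 ^ B)) :
    ∫ U, (∑ j ∈ Finset.range (2 ^ B), ‖ev N (hB B (ζ ^ j)) U‖ ^ 2) ^ 2 ∂P ≤ 12 * (2 ^ B * HB B) ^ 2 := by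
  have hn : ‖ζ‖ = 1 := hζ.norm'_eq_one (by positivity)
  have hn' : ∀ j : ℕ, ‖ζ ^ j‖ = 1 := fun j => by rw [norm_pow, hn, one_pow]
  simp_rw [sq (∑ j ∈ Finset.range (2 ^ B), _), Finset.sum_mul_sum]
  rw [integral_finsetSum _ fun b _ => integrable_of_cont_real P (by fun_prop)]
  calc _ ≤ ∑ j ∈ Finset.range (2 ^ B), HB B ^ 2 * (2 ^ B * 12) := by
        refine Finset.sum_le_sum fun j _ => ?_
        rw [integral_finsetSum _ fun b _ => integrable_of_cont_real P (by fun_prop)]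
        refine (Finset.sum_le_sum fun l _ => pair_B P hBN (hn' j) (hn' l)).trans ?_
        rw [← Finset.mul_sum]
        exact mul_le_mul_of_nonneg_left (prod_avg (hn' j) hζ) (by positivity)
    _ = _ := by
        rw [Finset.sum_const, Finset.card_range, nsmul_eq_mul]; push_cast; ring

end

open MeasureTheory Real Filter

section

lemma pointwise_aux {ι : Type*} (s : Finset ι) (A T : ι → ℝ) (M lam ε η : ℝ) (hA : ∀ j ∈ s, 0 ≤ A j)
    (hT : ∀ j ∈ s, T j ≤ M) (hM : 0 ≤ M) (hl : 0 < lam) (hε : 0 < ε) (hη : 0 < η) :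
    ∑ j ∈ s, A j * T j ≤ lam * ∑ j ∈ s, A j + ε * ∑ j ∈ s, A j * T j ^ 2 +
      1 / (4 * ε) * (η * (∑ j ∈ s, A j) ^ 2 + 1 / (4 * η * lam) * M) := by
  have hZ : 0 ≤ ∑ j ∈ s, A j := Finset.sum_nonneg hA
  have hF : 0 ≤ ∑ j ∈ s, A j * T j ^ 2 := Finset.sum_nonneg fun j hj => mul_nonneg (hA j hj) (sq_nonneg _)
  rcases le_or_gt M lam with h | h
  · have h1 : ∑ j ∈ s, A j * T j ≤ lam * ∑ j ∈ s, A j := by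
      rw [Finset.mul_sum]
      refine Finset.sum_le_sum fun j hj => ?_
      rw [mul_comm]
      exact mul_le_mul_of_nonneg_right ((hT j hj).trans h) (hA j hj)
    have h2 : 0 ≤ ε * ∑ j ∈ s, A j * T j ^ 2 := by positivity
    have h3 : 0 ≤ 1 / (4 * ε) * (η * (∑ j ∈ s, A j) ^ 2 + 1 / (4 * η * lam) * M) := by positivity
    linarith
  · have h1 : ∑ j ∈ s, A j * T j ≤ ε * ∑ j ∈ s, A j * T j ^ 2 + 1 / (4 * ε) * ∑ j ∈ s, A j := by
      rw [Finset.mul_sum, Finset.mul_sum, ← Finset.sum_add_distrib]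
      refine Finset.sum_le_sum fun j hj => ?_
      have : T j ≤ ε * T j ^ 2 + 1 / (4 * ε) := by
        have e : ε * T j ^ 2 + 1 / (4 * ε) - T j = ε * (T j - 1 / (2 * ε)) ^ 2 := by field_simp; ring
        have : 0 ≤ ε * (T j - 1 / (2 * ε)) ^ 2 := by positivity
        linarith
      have := mul_le_mul_of_nonneg_left this (hA j hj)
      linarith
    have h2 : ∑ j ∈ s, A j ≤ η * (∑ j ∈ s, A j) ^ 2 + 1 / (4 * η * lam) * M := by
      have h3 : ∑ j ∈ s, A j ≤ η * (∑ j ∈ s, A j) ^ 2 + 1 / (4 * η) := by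
        generalize ∑ j ∈ s, A j = z
        have e : η * z ^ 2 + 1 / (4 * η) - z = η * (z - 1 / (2 * η)) ^ 2 := by field_simp; ring
        have : 0 ≤ η * (z - 1 / (2 * η)) ^ 2 := by positivity
        linarith
      have h4 : 1 / (4 * η) ≤ 1 / (4 * η * lam) * M := by
        have e : 1 / (4 * η) = 1 / (4 * η * lam) * lam := by field_simp
        rw [e]
        exact mul_le_mul_of_nonneg_left h.le (by positivity)
      linarith
    have h5 := mul_le_mul_of_nonneg_left h2 (show 0 ≤ 1 / (4 * ε) by positivity)
    have h6 : 0 ≤ lam * ∑ j ∈ s, A j := by positivity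
    linarith

lemma main_B {N B : ℕ} (P : Measure (Matrix.unitaryGroup (Fin N) ℂ)) [IsProbabilityMeasure P] [P.IsMulLeftInvariant]
    (h2 : 2 ≤ B) (hBN : 2 ^ (B + 2) ≤ N) :
    (B:ℝ) / 78643200000 ≤ 2 * π * N * ∫ U, dK N U ∂P := by
  have hN : 1 ≤ N := Nat.one_le_two_pow.trans hBN
  have hζ := Complex.isPrimitiveRoot_exp (2 ^ B) (by positivity)
  set ζ := Complex.exp (2 * π * Complex.I / (2 ^ B : ℕ)) with hζd
  have hn : ‖ζ‖ = 1 := hζ.norm'_eq_one (by positivity)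
  have hn' : ∀ j : ℕ, ‖ζ ^ j‖ = 1 := fun j => by rw [norm_pow, hn, one_pow]
  set G : ℝ := 2 ^ B * HB B with hG
  have hGp : 0 < G := by have := HB_pos B; positivity
  have hBp : (0:ℝ) < B := by exact_mod_cast (by omega : 0 < B)
  set A : ℕ → Matrix.unitaryGroup (Fin N) ℂ → ℝ := fun j U => ‖ev N (hB B (ζ ^ j)) U‖ ^ 2 with hA
  set T : ℕ → Matrix.unitaryGroup (Fin N) ℂ → ℝ := fun j U => (ev N (YY B (ζ ^ j)) U).im with hT
  have cA : ∀ j, Continuous (A j) := fun j => by simp only [hA]; fun_prop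
  have cT : ∀ j, Continuous (T j) := fun j => by simp only [hT]; fun_prop
  set R := Finset.range (2 ^ B) with hR
  have hcard : (R.card : ℝ) = 2 ^ B := by rw [hR, Finset.card_range]; push_cast; rfl
  have E0 : ∫ U, ∑ j ∈ R, A j U ∂P = G := by
    rw [integral_finsetSum _ fun j _ => integrable_of_cont_real P (cA j)]
    have : ∀ j ∈ R, ∫ U, A j U ∂P = HB B := fun j _ => nn_hB P hBN (hn' j)
    rw [Finset.sum_congr rfl this, Finset.sum_const, nsmul_eq_mul, hcard]
  have E1 : (B:ℝ) / 40 * G ≤ ∫ U, ∑ j ∈ R, A j U * T j U ∂P := by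
    rw [integral_finsetSum _ fun j _ => integrable_of_cont_real P (f := fun U => A j U * T j U) ((cA j).mul (cT j))]
    have := Finset.card_nsmul_le_sum R (fun j => ∫ U, A j U * T j U ∂P) _ fun j _ => mean_B P h2 hBN (hn' j)
    rw [nsmul_eq_mul, hcard] at this
    refine le_trans (le_of_eq ?_) this
    rw [hG]; ring
  have E2 : ∫ U, ∑ j ∈ R, A j U * T j U ^ 2 ∂P ≤ 2 * (B:ℝ) ^ 2 * G := by
    rw [integral_finsetSum _ fun j _ => integrable_of_cont_real P (f := fun U => A j U * T j U ^ 2) ((cA j).mul ((cT j).pow 2))]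
    have := Finset.sum_le_card_nsmul R (fun j => ∫ U, A j U * T j U ^ 2 ∂P) _ fun j _ => second_B P hBN (hn' j)
    rw [nsmul_eq_mul, hcard] at this
    refine this.trans (le_of_eq ?_)
    rw [hG]; ring
  have E3 : ∫ U, (∑ j ∈ R, A j U) ^ 2 ∂P ≤ 12 * G ^ 2 := Z2_B P hBN hζ
  have hlam : (0:ℝ) < B / 160 := by positivity
  have hε : (0:ℝ) < 1 / (320 * B) := by positivity
  have hη : 0 < 1 / (153600 * G) := by positivity
  have hpt : ∀ U, ∑ j ∈ R, A j U * T j U ≤ B / 160 * ∑ j ∈ R, A j U + 1 / (320 * B) * ∑ j ∈ R, A j U * T j U ^ 2 +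
      1 / (4 * (1 / (320 * B))) * (1 / (153600 * G) * (∑ j ∈ R, A j U) ^ 2 +
        1 / (4 * (1 / (153600 * G)) * (B / 160)) * (2 * π * N * dK N U)) := fun U =>
    pointwise_aux R (fun j => A j U) (fun j => T j U) _ _ _ _ (fun j _ => by positivity)
      (fun j _ => im_YY_le hN B (hn' j) U) (by have := dK_nonneg N U; positivity) hlam hε hη
  have i0 : Integrable (fun U => ∑ j ∈ R, A j U) P := integrable_of_cont_real P (by fun_prop)
  have i1 : Integrable (fun U => ∑ j ∈ R, A j U * T j U) P := integrable_of_cont_real P (by fun_prop)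
  have i2 : Integrable (fun U => ∑ j ∈ R, A j U * T j U ^ 2) P := integrable_of_cont_real P (by fun_prop)
  have i3 : Integrable (fun U => (∑ j ∈ R, A j U) ^ 2) P := integrable_of_cont_real P (by fun_prop)
  have i4 : Integrable (fun U => dK N U) P := integrable_dK N P
  have j1 := i0.const_mul (B / 160 : ℝ)
  have j2 := i2.const_mul (1 / (320 * B) : ℝ)
  have j3 := i3.const_mul (1 / (153600 * G))
  have j4 := (i4.const_mul (2 * π * N)).const_mul (1 / (4 * (1 / (153600 * G)) * (B / 160)))
  have j5 := (j3.fun_add j4).const_mul (1 / (4 * (1 / (320 * (B:ℝ)))))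
  have hInt := integral_mono i1 ((j1.fun_add j2).fun_add j5) hpt
  have hsum : ∫ U, B / 160 * ∑ j ∈ R, A j U + 1 / (320 * B) * ∑ j ∈ R, A j U * T j U ^ 2 +
      1 / (4 * (1 / (320 * B))) * (1 / (153600 * G) * (∑ j ∈ R, A j U) ^ 2 +
        1 / (4 * (1 / (153600 * G)) * (B / 160)) * (2 * π * N * dK N U)) ∂P =
      B / 160 * ∫ U, ∑ j ∈ R, A j U ∂P + 1 / (320 * B) * ∫ U, ∑ j ∈ R, A j U * T j U ^ 2 ∂P +
      1 / (4 * (1 / (320 * B))) * (1 / (153600 * G) * ∫ U, (∑ j ∈ R, A j U) ^ 2 ∂P +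
        1 / (4 * (1 / (153600 * G)) * (B / 160)) * (2 * π * N * ∫ U, dK N U ∂P)) := by
    rw [integral_add (j1.fun_add j2) j5, integral_add j1 j2, integral_const_mul, integral_const_mul, integral_const_mul,
      integral_add j3 j4, integral_const_mul, integral_const_mul, integral_const_mul]
  have hInt' := hInt.trans_eq hsum
  rw [E0] at hInt'
  set D := 2 * π * N * ∫ U, dK N U ∂P with hD
  have k2 := mul_le_mul_of_nonneg_left E2 hε.le
  have k3 := mul_le_mul_of_nonneg_left E3 hη.le
  have k4 : 1 / (320 * B) * (2 * (B:ℝ) ^ 2 * G) = B * G / 160 := by field_simp; norm_num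
  have k5 : 1 / (153600 * G) * (12 * G ^ 2) = G / 12800 := by field_simp; norm_num
  have k6 : 1 / (4 * (1 / (320 * (B:ℝ)))) = 80 * B := by field_simp; norm_num
  have k7 : 1 / (4 * (1 / (153600 * G)) * (B / 160)) = 6144000 * G / B := by field_simp; norm_num
  rw [k4] at k2
  rw [k5] at k3
  rw [k6, k7] at hInt'
  have k8 : 80 * B * (1 / (153600 * G) * ∫ U, (∑ j ∈ R, A j U) ^ 2 ∂P + 6144000 * G / B * D) ≤
      80 * B * (G / 12800 + 6144000 * G / B * D) :=
    mul_le_mul_of_nonneg_left (add_le_add_left k3 _) (by positivity)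
  have k9 : 80 * B * (G / 12800 + 6144000 * G / B * D) = B * G / 160 + 491520000 * G * D := by
    field_simp; ring
  have k10 : G * (B / 160) ≤ G * (491520000 * D) := by linarith
  have := le_of_mul_le_mul_left k10 hGp
  linarith
end

open MeasureTheory Real Filter

/-- There is a universal constant `c₁ > 0` such that for every `N ≥ 2` and every Haar-distributed
random `N × N` unitary matrix, `𝔼 d_K(μ_N, ν) ≥ c₁ log N / N`. -/
theorem expected_kolmogorov_lower_bound :
    ∃ c₁ : ℝ, 0 < c₁ ∧ ∀ N : ℕ, 2 ≤ N →
      ∀ ℙ : Measure (Matrix.unitaryGroup (Fin N) ℂ),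
        IsProbabilityMeasure ℙ → ℙ.IsHaarMeasure →
          c₁ * Real.log N / N ≤ ∫ U, dK N U ∂ℙ := by
  refine ⟨1 / (24 * 78643200000), by norm_num, fun N hN P hP hH => ?_⟩
  have hN0 : (0:ℝ) < N := by exact_mod_cast (by omega : 0 < N)
  have hlog : Real.log N ≤ (Nat.log 2 N : ℝ) + 1 := by
    have h1 : (N:ℝ) ≤ 2 ^ (Nat.log 2 N + 1) := by
      exact_mod_cast (Nat.lt_pow_succ_log_self (by norm_num) N).le
    have h2 := Real.log_le_log hN0 h1
    rw [Real.log_pow] at h2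
    have h3 : Real.log 2 ≤ 1 := by linarith [Real.log_two_lt_d9]
    have h4 : (((Nat.log 2 N + 1 : ℕ)) : ℝ) * Real.log 2 ≤ ((Nat.log 2 N + 1 : ℕ) : ℝ) * 1 :=
      mul_le_mul_of_nonneg_left h3 (by positivity)
    push_cast at h2 h4
    linarith
  rw [div_le_iff₀ hN0]
  by_cases hL : 4 ≤ Nat.log 2 N
  · obtain ⟨B, hB⟩ : ∃ B, Nat.log 2 N = B + 2 := ⟨Nat.log 2 N - 2, by omega⟩
    have hBN : 2 ^ (B + 2) ≤ N := by
      rw [← hB]; exact Nat.pow_log_le_self 2 (by omega)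
    have hm := main_B P (by omega : 2 ≤ B) hBN
    have hB2 : (2:ℝ) ≤ B := by exact_mod_cast (by omega : 2 ≤ B)
    rw [hB] at hlog
    push_cast at hlog
    have hI : 0 ≤ ∫ U, dK N U ∂P := integral_nonneg fun U => dK_nonneg N U
    have hp : 0 ≤ (∫ U, dK N U ∂P) * N := by positivity
    have h5 : 2 * π * N * ∫ U, dK N U ∂P ≤ 8 * ((∫ U, dK N U ∂P) * N) := by
      nlinarith [mul_le_mul_of_nonneg_right (show 2 * π ≤ 8 by linarith [Real.pi_le_four]) hp]
    linarith
  · have hL' : (Nat.log 2 N : ℝ) ≤ 3 := by exact_mod_cast (by omega : Nat.log 2 N ≤ 3)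
    have h1 : 1 / (2 * (N:ℝ)) ≤ ∫ U, dK N U ∂P := by
      have h2 := integral_mono (μ := P) (integrable_const (1 / (2 * (N:ℝ)))) (integrable_dK N P)
        (fun U => dK_ge N (by omega) U)
      simpa using h2
    have h3 := mul_le_mul_of_nonneg_right h1 hN0.le
    have h4 : 1 / (2 * (N:ℝ)) * N = 1 / 2 := by field_simp
    rw [h4] at h3
    linarith
end
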